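/- arXiv:1308.3037 — 5 statements merged into one kernel-verified Lean document; each statement's English description precedes it below -/
import Mathlib

section
/- Let G be a graph of order n that contains no matching of t independent edges, where t ≤ ⌊n/2⌋. Then |E(G)| ≤ max{ (t-1)(2t-1), (t-1)(2n-t)/2 }. -/
/-- A matching of a graph: a pairwise disjoint set of its edges. -/
def IsMatchingOn {V : Type*} (G : SimpleGraph V) (M : Set (Sym2 V)) : Prop :=
  M ⊆ G.edgeSet ∧ M.Pairwise fun e f => ∀ v, v ∈ e → v ∉ f

/-!
The proof is by shifting. View the edges as a family of `2`-subsets of `{0, …, n - 1}` and, for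
`i < j`, replace `j` by `i` in every edge for which this produces a new edge. Such a compression
keeps the number of edges, creates no larger matching and lowers the sum of all vertex labels, so
we may assume that the family is stable under all of them.

Put `t = s + 1`. The nested pairs `{k, 2s + 1 - k}` with `k ≤ s` form a matching of size `t`, so one
of them, say the `k`-th, is not an edge. By stability every edge either lies below `2s + 1 - k` or
has its smaller end below `k`, which leaves at most `C(2s + 1 - k, 2) + k (n - (2s + 1 - k))` edges.
This is a convex function of `k`, hence maximal at `k = 0` or at `k = s`, and the values there are
the two terms of the maximum.
-/

section Matching

open Finset

variable {α : Type*} {F : Finset (Finset α)}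

/-- The set family `F` has a matching of size `t`: a subfamily of `t` pairwise disjoint members. -/
def HasMatching (F : Finset (Finset α)) (t : ℕ) : Prop :=
  ∃ M ⊆ F, (M : Set (Finset α)).PairwiseDisjoint id ∧ #M = t

lemma HasMatching.of_pairwiseDisjoint {ι : Type*} {I : Finset ι} {f : ι → Finset α}
    (hmem : ∀ x ∈ I, f x ∈ F) (hne : ∀ x ∈ I, (f x).Nonempty)
    (hdisj : (I : Set ι).PairwiseDisjoint f) : HasMatching F #I := by
  classical
  have hinj : Set.InjOn f I := fun x hx y hy hxy ↦ hdisj.elim hx hy fun hxy' ↦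
    (hne x hx).ne_empty (disjoint_self.1 (by rwa [← hxy] at hxy'))
  refine ⟨I.image f, image_subset_iff.2 hmem, ?_, card_image_of_injOn hinj⟩
  rw [coe_image, hinj.pairwiseDisjoint_image]
  exact hdisj

end Matching

section Compression

open Finset UV
open scoped FinsetFamily

section GeneralizedBooleanAlgebra

variable {α : Type*} [GeneralizedBooleanAlgebra α] [DecidableRel (@Disjoint α _ _)]
  [DecidableLE α] [DecidableEq α] {u v : α} {F : Finset α}

lemma isCompressed_of_forall_compress_mem (h : ∀ a ∈ F, compress u v a ∈ F) :
    IsCompressed u v F := by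
  rw [IsCompressed, compression, filter_true_of_mem h, filter_false_of_mem, union_empty]
  simpa using h

lemma sum_compression_lt {β : Type*} [AddCommMonoid β] [PartialOrder β]
    [IsOrderedCancelAddMonoid β] {w : α → β}
    (hw : ∀ a ∈ F, compress u v a ≠ a → w (compress u v a) < w a) (hF : ¬ IsCompressed u v F) :
    ∑ a ∈ 𝓒 u v F, w a < ∑ a ∈ F, w a := by
  obtain ⟨a, haF, hca⟩ : ∃ a ∈ F, compress u v a ∉ F := by
    contrapose! hF
    exact isCompressed_of_forall_compress_mem hF
  have moved_lt : ∀ b ∈ F, compress u v b ∉ F → w (compress u v b) < w b := fun b hb hcb ↦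
    hw b hb (ne_of_mem_of_not_mem hb hcb).symm
  rw [compression, sum_union compress_disjoint, filter_image, sum_image compress_injOn,
    ← sum_filter_add_sum_filter_not F (fun a ↦ compress u v a ∈ F)]
  gcongr 1
  refine sum_lt_sum_of_nonempty ⟨a, mem_filter.2 ⟨haF, hca⟩⟩ fun b hb ↦ ?_
  exact moved_lt b (mem_filter.1 hb).1 (mem_filter.1 hb).2

end GeneralizedBooleanAlgebra

variable {α : Type*} [DecidableEq α] {i j : α} {a : Finset α} {F : Finset (Finset α)} {t : ℕ}

lemma compress_singleton_of_mem_of_notMem (hj : j ∈ a) (hi : i ∉ a) :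
    compress {i} {j} a = insert i (a.erase j) := by
  rw [compress_of_disjoint_of_le (by simpa using hi) (by simpa using hj)]
  grind

lemma mem_and_notMem_of_compress_singleton_ne (h : compress {i} {j} a ≠ a) :
    j ∈ a ∧ i ∉ a := by
  contrapose! h
  refine if_neg fun hij ↦ disjoint_singleton_left.1 hij.1 (h ?_)
  simpa using hij.2

lemma map_swap_of_mem_of_notMem (hi : i ∈ a) (hj : j ∉ a) :
    a.map (Equiv.swap i j).toEmbedding = (a ∪ {j}) \ {i} := by
  ext x
  rw [mem_map_equiv, Equiv.symm_swap, Equiv.swap_apply_def]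
  grind

lemma map_swap_of_notMem_of_notMem (hi : i ∉ a) (hj : j ∉ a) :
    a.map (Equiv.swap i j).toEmbedding = a := by
  ext x
  rw [mem_map_equiv, Equiv.symm_swap, Equiv.swap_apply_def]
  grind

lemma map_swap_mem_of_mem_compression_of_notMem (ha : a ∈ 𝓒 {i} {j} F) (haF : a ∉ F) :
    a.map (Equiv.swap i j).toEmbedding ∈ F := by
  have hi : i ∈ a := by simpa using le_of_mem_compression_of_notMem ha haF
  have hj : j ∉ a := by simpa using disjoint_of_mem_compression_of_notMem ha haF
  rw [map_swap_of_mem_of_notMem hi hj]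
  exact sup_sdiff_mem_of_mem_compression_of_notMem ha haF

lemma map_swap_mem_of_mem_compression (ha : a ∈ 𝓒 {i} {j} F) (hi : i ∉ a) :
    a.map (Equiv.swap i j).toEmbedding ∈ F := by
  by_cases hj : j ∈ a
  · rw [Equiv.swap_comm, map_swap_of_mem_of_notMem hj hi]
    exact sup_sdiff_mem_of_mem_compression ha (by simpa using hj) (by simpa using hi)
  · rw [map_swap_of_notMem_of_notMem hi hj]
    contrapose! hi
    simpa using le_of_mem_compression_of_notMem ha hi

-- At most one member of a matching contains `i`, so at most one is new. If there is one, exchanging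
-- `i` and `j` throughout the matching brings every member back into `F`.
lemma HasMatching.of_compression (h : HasMatching (𝓒 {i} {j} F) t) : HasMatching F t := by
  obtain ⟨M, hMC, hdisj, hcard⟩ := h
  by_cases hMF : M ⊆ F
  · exact ⟨M, hMF, hdisj, hcard⟩
  obtain ⟨e, heM, heF⟩ := not_subset.1 hMF
  have hie : i ∈ e := by simpa using le_of_mem_compression_of_notMem (hMC heM) heF
  have swapped_mem : ∀ a ∈ M, a.map (Equiv.swap i j).toEmbedding ∈ F := by
    intro a ha
    obtain rfl | hae := eq_or_ne a e
    · exact map_swap_mem_of_mem_compression_of_notMem (hMC ha) heF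
    · exact map_swap_mem_of_mem_compression (hMC ha)
        fun hia ↦ disjoint_left.1 (hdisj ha heM hae) hia hie
  let swapEmbedding := (mapEmbedding (Equiv.swap i j).toEmbedding).toEmbedding
  refine ⟨M.map swapEmbedding, ?_, ?_, by rw [card_map, hcard]⟩
  · exact map_subset_iff_subset_preimage.2 fun a ha ↦ mem_preimage.2 (swapped_mem a ha)
  · rw [coe_map, swapEmbedding.injective.injOn.pairwiseDisjoint_image]
    exact fun a ha b hb hab ↦ (disjoint_map _).2 (hdisj ha hb hab)

end Compression

section Shifted

open Finset UV
open scoped FinsetFamily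

variable {F : Finset (Finset ℕ)} {a : Finset ℕ} {i j k l n r s t : ℕ}

/-- A family of sets of natural numbers is shifted if replacing an element of a member by a smaller
number outside that member never leads out of the family. It is encoded as invariance under the
compressions that substitute `i` for a larger `j`. -/
def IsShifted (F : Finset (Finset ℕ)) : Prop :=
  ∀ ⦃i j⦄, i < j → IsCompressed {i} {j} F

lemma sum_compress_singleton_lt (hij : i < j) (h : compress {i} {j} a ≠ a) :
    ∑ x ∈ compress {i} {j} a, x < ∑ x ∈ a, x := by
  obtain ⟨hj, hi⟩ := mem_and_notMem_of_compress_singleton_ne h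
  rw [compress_singleton_of_mem_of_notMem hj hi, sum_insert (by simp [hi]),
    ← add_sum_erase a (fun x ↦ x) hj]
  gcongr

lemma compress_singleton_subset_range (hij : i < j) (ha : a ⊆ range n) :
    compress {i} {j} a ⊆ range n := by
  by_cases h : compress {i} {j} a = a
  · rwa [h]
  obtain ⟨hj, hi⟩ := mem_and_notMem_of_compress_singleton_ne h
  rw [compress_singleton_of_mem_of_notMem hj hi]
  exact insert_subset (mem_range.2 (hij.trans (mem_range.1 (ha hj))))
    ((erase_subset j a).trans ha)

lemma compression_singleton_subset_powersetCard (hij : i < j)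
    (hF : F ⊆ powersetCard r (range n)) : 𝓒 {i} {j} F ⊆ powersetCard r (range n) := by
  intro a ha
  obtain ⟨haF, -⟩ | ⟨-, b, hb, rfl⟩ := mem_compression.1 ha
  · exact hF haF
  · obtain ⟨hbn, hbr⟩ := mem_powersetCard.1 (hF hb)
    exact mem_powersetCard.2
      ⟨compress_singleton_subset_range hij hbn, (card_compress (by simp) b).trans hbr⟩

theorem exists_isShifted_of_not_hasMatching
    (hF : F ⊆ powersetCard r (range n)) (hM : ¬ HasMatching F t) :
    ∃ F' ⊆ powersetCard r (range n), IsShifted F' ∧ ¬ HasMatching F' t ∧ #F' = #F := by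
  induction hw : ∑ a ∈ F, ∑ x ∈ a, x using Nat.strong_induction_on generalizing F with | _ w ih
  by_cases hs : IsShifted F
  · exact ⟨F, hF, hs, hM, rfl⟩
  obtain ⟨i, j, hij, hnc⟩ : ∃ i j, i < j ∧ ¬ IsCompressed {i} {j} F := by
    simpa [IsShifted] using hs
  have weight_lt : ∑ a ∈ 𝓒 {i} {j} F, ∑ x ∈ a, x < w :=
    hw ▸ sum_compression_lt (fun _ _ ↦ sum_compress_singleton_lt hij) hnc
  obtain ⟨F', hF', hs', hM', hcard⟩ := ih _ weight_lt
    (compression_singleton_subset_powersetCard hij hF) (mt HasMatching.of_compression hM) rfl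
  exact ⟨F', hF', hs', hM', hcard.trans (card_compression _ _ F)⟩

lemma IsShifted.insert_mem (hs : IsShifted F) (h : insert j a ∈ F) (hij : i ≤ j) (hj : j ∉ a)
    (hi : i ∉ a) : insert i a ∈ F := by
  obtain rfl | hij := hij.eq_or_lt
  · exact h
  have hmem : insert j a ∈ 𝓒 {i} {j} F := by rwa [(hs hij).eq]
  convert sup_sdiff_mem_of_mem_compression hmem (by simp) (by simp [hij.ne, hi]) using 1
  grind

lemma IsShifted.pair_mem (hs : IsShifted F) (h : {i, j} ∈ F) (hij : i < j) (hkl : k < l)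
    (hki : k ≤ i) (hlj : l ≤ j) : {k, l} ∈ F := by
  have hkj : {k, j} ∈ F := hs.insert_mem h hki (by simpa using hij.ne)
    (by simpa using (hki.trans_lt hij).ne)
  rw [pair_comm] at hkj ⊢
  exact hs.insert_mem hkj hlj (by simpa using (hki.trans_lt hij).ne') (by simpa using hkl.ne')

lemma IsShifted.subset_of_pair_notMem (hs : IsShifted F) (hF : F ⊆ powersetCard 2 (range n))
    (hkl : k < l) (h : {k, l} ∉ F) :
    F ⊆ powersetCard 2 (range l) ∪ (range k ×ˢ Ico l n).image fun p ↦ {p.1, p.2} := by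
  intro e he
  obtain ⟨hen, hcard⟩ := mem_powersetCard.1 (hF he)
  obtain ⟨i, j, hij, rfl⟩ : ∃ i j, i < j ∧ e = {i, j} := by
    obtain ⟨x, y, hxy, rfl⟩ := card_eq_two.1 hcard
    obtain hlt | hgt := hxy.lt_or_gt
    · exact ⟨x, y, hlt, rfl⟩
    · exact ⟨y, x, hgt, pair_comm x y⟩
  have hjn : j < n := mem_range.1 (hen (by simp))
  obtain hjl | hlj := lt_or_ge j l
  · refine mem_union_left _ (mem_powersetCard.2 ⟨?_, hcard⟩)
    simp [insert_subset_iff, hjl, hij.trans hjl]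
  · have hik : i < k := by
      by_contra! hki
      exact h (hs.pair_mem he hij hkl hki hlj)
    exact mem_union_right _ (mem_image.2 ⟨(i, j), by simp [hik, hlj, hjn], rfl⟩)

lemma IsShifted.card_le_of_pair_notMem (hs : IsShifted F) (hF : F ⊆ powersetCard 2 (range n))
    (hkl : k < l) (h : {k, l} ∉ F) : #F ≤ l.choose 2 + k * (n - l) := by
  calc
    #F ≤ #(powersetCard 2 (range l)) + #((range k ×ˢ Ico l n).image fun p ↦ {p.1, p.2}) :=
      (card_le_card (hs.subset_of_pair_notMem hF hkl h)).trans (card_union_le _ _)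
    _ ≤ #(powersetCard 2 (range l)) + #(range k ×ˢ Ico l n) := by gcongr; exact card_image_le
    _ = l.choose 2 + k * (n - l) := by simp

lemma HasMatching.of_nested_pairs (h : ∀ k ≤ s, {k, 2 * s + 1 - k} ∈ F) :
    HasMatching F (s + 1) := by
  rw [← card_range (s + 1)]
  refine HasMatching.of_pairwiseDisjoint (f := fun k ↦ {k, 2 * s + 1 - k})
    (fun k hk ↦ h k (mem_range_succ_iff.1 hk)) (fun k _ ↦ insert_nonempty _ _) ?_
  intro k hk l hl hkl
  rw [coe_range, Set.mem_Iio] at hk hl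
  simp only [Function.onFun, disjoint_insert_left, disjoint_singleton_left, mem_insert,
    mem_singleton]
  omega

end Shifted

-- The left side is convex in `k`. With `d = s - k` and `r = n - (2 * s + 1 - k)` it falls short of
-- the first term of the maximum by `k * (3 * k + 4 * d + 1 - 2 * r)` and, if `r ≠ 0`, of the second
-- by `d * (2 * r - d - 1)`.
lemma two_mul_choose_add_mul_le_max {k s : ℕ} (hks : k ≤ s) (n : ℕ) :
    2 * ((2 * s + 1 - k).choose 2 + k * (n - (2 * s + 1 - k))) ≤
      max (2 * (s * (2 * s + 1))) (s * (2 * n - (s + 1))) := by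
  obtain ⟨d, rfl⟩ := Nat.exists_eq_add_of_le hks
  rw [show 2 * (k + d) + 1 - k = k + 2 * d + 1 by omega]
  generalize hr : n - (k + 2 * d + 1) = r
  have two_mul_choose : 2 * (k + 2 * d + 1).choose 2 = (k + 2 * d + 1) * (k + 2 * d) := by
    rw [Nat.choose_two_right, Nat.mul_div_cancel' (Nat.even_mul_pred_self _).two_dvd,
      Nat.add_sub_cancel]
  rw [mul_add, two_mul_choose, le_max_iff]
  obtain hle | hlt := le_or_gt (2 * r) (3 * k + 4 * d + 1)
  · left
    nlinarith [Nat.mul_le_mul_left k hle]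
  · right
    rw [show 2 * n - (k + d + 1) = k + 3 * d + 1 + 2 * r by omega]
    nlinarith [Nat.mul_le_mul_left d (show d + 1 ≤ 2 * r by omega)]

theorem two_mul_card_le_of_not_hasMatching {F : Finset (Finset ℕ)} {n s : ℕ}
    (hF : F ⊆ (Finset.range n).powersetCard 2) (hM : ¬ HasMatching F (s + 1)) :
    2 * F.card ≤ max (2 * (s * (2 * s + 1))) (s * (2 * n - (s + 1))) := by
  obtain ⟨F', hF', hs, hM', hcard⟩ := exists_isShifted_of_not_hasMatching hF hM
  obtain ⟨k, hks, hk⟩ : ∃ k ≤ s, {k, 2 * s + 1 - k} ∉ F' := by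
    contrapose! hM'
    exact HasMatching.of_nested_pairs hM'
  have hcount : F'.card ≤ (2 * s + 1 - k).choose 2 + k * (n - (2 * s + 1 - k)) :=
    hs.card_le_of_pair_notMem hF' (by omega) hk
  rw [← hcard]
  exact (Nat.mul_le_mul_left 2 hcount).trans (two_mul_choose_add_mul_le_max hks n)

section Graph

open Finset

variable {V α : Type*} [DecidableEq V] {φ : V ↪ α} {e f : Sym2 V}

/-- The set of endpoints of an unordered pair of vertices labelled by `φ`. It turns the edges of a
graph into members of a set family. -/
def endpointSet (φ : V ↪ α) : Sym2 V ↪ Finset α where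
  toFun e := e.toFinset.map φ
  inj' e f h := by
    ext v
    rw [← Sym2.mem_toFinset, map_injective φ h, Sym2.mem_toFinset]

lemma disjoint_endpointSet :
    Disjoint (endpointSet φ e) (endpointSet φ f) ↔ ∀ v, v ∈ e → v ∉ f := by
  refine (disjoint_map φ).trans ?_
  simp only [disjoint_left, Sym2.mem_toFinset]

lemma map_endpointSet_subset_powersetCard {G : SimpleGraph V} [Fintype G.edgeSet] {S : Finset α}
    (hφ : ∀ v, φ v ∈ S) : G.edgeFinset.map (endpointSet φ) ⊆ powersetCard 2 S := by
  intro a ha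
  obtain ⟨e, he, rfl⟩ := mem_map.1 ha
  refine mem_powersetCard.2 ⟨fun x hx ↦ ?_, ?_⟩
  · obtain ⟨v, -, rfl⟩ := mem_map.1 hx
    exact hφ v
  · exact (card_map φ).trans
      (Sym2.card_toFinset_of_not_isDiag e (G.not_isDiag_of_mem_edgeFinset he))

lemma HasMatching.exists_isMatchingOn {G : SimpleGraph V} [Fintype G.edgeSet]
    {t : ℕ} (h : HasMatching (G.edgeFinset.map (endpointSet φ)) t) :
    ∃ M : Set (Sym2 V), IsMatchingOn G M ∧ M.ncard = t := by
  obtain ⟨M, hMG, hdisj, hcard⟩ := h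
  obtain ⟨N, hNG, rfl⟩ := subset_map_iff.1 hMG
  rw [coe_map, (endpointSet φ).injective.injOn.pairwiseDisjoint_image] at hdisj
  refine ⟨N, ⟨fun e he ↦ SimpleGraph.mem_edgeFinset.1 (hNG he), fun e he f hf hef ↦ ?_⟩, ?_⟩
  · exact disjoint_endpointSet.1 (hdisj he hf hef)
  · rw [Set.ncard_coe_finset, ← hcard, card_map]

end Graph

theorem stmt_6_general {V : Type*} [Fintype V] (n t : ℕ) (ht : 1 ≤ t)
    (G : SimpleGraph V) (hn : Fintype.card V = n)
    (hno : ¬ ∃ M : Set (Sym2 V), IsMatchingOn G M ∧ M.ncard = t) :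
    2 * G.edgeSet.ncard ≤ max (2 * ((t - 1) * (2 * t - 1))) ((t - 1) * (2 * n - t)) := by
  classical
  obtain ⟨s, rfl⟩ : ∃ s, t = s + 1 := Nat.exists_eq_add_of_le' ht
  let φ : V ↪ ℕ := (Fintype.equivFinOfCardEq hn).toEmbedding.trans Fin.valEmbedding
  have hφ : ∀ v, φ v ∈ Finset.range n := fun v ↦
    Finset.mem_range.2 (Fintype.equivFinOfCardEq hn v).isLt
  have hbound := two_mul_card_le_of_not_hasMatching
    (map_endpointSet_subset_powersetCard (G := G) hφ) (mt HasMatching.exists_isMatchingOn hno)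
  rw [Finset.card_map, ← Set.ncard_coe_finset, SimpleGraph.coe_edgeFinset] at hbound
  exact hbound

/-- If a graph of order n has no matching of t independent edges
(t ≤ ⌊n/2⌋), then |E(G)| ≤ max{(t-1)(2t-1), (t-1)(2n-t)/2}. -/
theorem stmt_6 {V : Type*} [Fintype V] (n t : ℕ) (ht : 1 ≤ t) (htn : t ≤ n / 2)
    (G : SimpleGraph V) (hn : Fintype.card V = n)
    (hno : ¬ ∃ M : Set (Sym2 V), IsMatchingOn G M ∧ M.ncard = t) :
    2 * G.edgeSet.ncard ≤ max (2 * ((t - 1) * (2 * t - 1))) ((t - 1) * (2 * n - t)) :=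
  stmt_6_general n t ht G hn hno
end

section
/- Let r and k be positive integers with r+k odd and k ≤ r, let H be the complete graph on vertex set {1,...,r+k}, and let (E_0, E_1, E_2) be an ordered partition of E(H). If |E_1| + 2|E_2| < min{ 3(r+k−1), (r+k+3)(r+k+5)/8 }, then H has an almost perfect matching M (covering all but one vertex) with M ∩ E_2 = ∅ and |M ∩ E_1| ≤ 1. -/
/-- The vertices covered by a set of edges. -/
def coveredSet {V : Type*} (M : Set (Sym2 V)) : Set V := {v | ∃ e ∈ M, v ∈ e}

/-!
Give every edge the weight `0`, `1` or `2` according to its class, so that a good matching is one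
of weight at most `1`. Choosing edges greedily shows that a complete graph of even order has a
perfect matching of at most average weight.

The theorem then follows by induction, removing two vertices joined by an edge of weight `0`. If
the induction cannot be applied, every such pair has a small degree sum. Let `F` be the set of
vertices all of whose edges have positive weight. If `F` has at most two elements, look at a vertex
of largest degree outside `F`: the vertices joined to it by weight `0` have small degree and the
remaining ones are few, so the total weight is too small. If `F` contains three vertices, two of
them are joined by an edge of weight `1`; take this edge and discard the third vertex. What is left
has so little weight that it has a perfect matching of weight `0`.
-/

section DegreeSum

variable {V : Type*} [DecidableEq V] (W : Sym2 V → ℕ)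

/-- The total weight of the edges joining `x` to the vertices of `S` other than `x`; the weights of
loops are ignored, and `x` need not belong to `S`. -/
def weightedDegree (S : Finset V) (x : V) : ℕ := ∑ y ∈ S.erase x, W s(x, y)

/-- The sum of the weighted degrees inside `S`, which is twice the total weight of the complete
graph on `S`. -/
def degreeSum (S : Finset V) : ℕ := ∑ x ∈ S, weightedDegree W S x

/-- The vertices of `S` all of whose edges to other vertices of `S` have positive weight. -/
def fullVertices (S : Finset V) : Finset V := {x ∈ S | ∀ y ∈ S.erase x, W s(x, y) ≠ 0}

variable {W} {S F : Finset V} {u v x : V}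

lemma weightedDegree_sdiff_add (hF : F ⊆ S) (x : V) :
    weightedDegree W (S \ F) x + weightedDegree W F x = weightedDegree W S x := by
  have herase : (S \ F).erase x = S.erase x \ F.erase x := by grind
  rw [weightedDegree, herase]
  exact Finset.sum_sdiff (Finset.erase_subset_erase x hF)

lemma sum_weightedDegree_comm {A B : Finset V} (hAB : Disjoint A B) :
    ∑ x ∈ A, weightedDegree W B x = ∑ y ∈ B, weightedDegree W A y := by
  have sum_no_erase {A B : Finset V} (h : Disjoint A B) :
      ∑ x ∈ A, weightedDegree W B x = ∑ x ∈ A, ∑ y ∈ B, W s(x, y) :=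
    Finset.sum_congr rfl fun x hx => by
      rw [weightedDegree, Finset.erase_eq_of_notMem (Finset.disjoint_left.1 h hx)]
  rw [sum_no_erase hAB, sum_no_erase hAB.symm, Finset.sum_comm]
  simp only [Sym2.eq_swap]

lemma degreeSum_eq_sdiff_add (hF : F ⊆ S) :
    degreeSum W S =
      degreeSum W (S \ F) + degreeSum W F + 2 * ∑ x ∈ F, weightedDegree W (S \ F) x := by
  have hcross := sum_weightedDegree_comm (W := W) (Finset.sdiff_disjoint (s := F) (t := S))
  rw [degreeSum, ← Finset.sum_sdiff hF]
  simp only [degreeSum, ← weightedDegree_sdiff_add (W := W) hF, Finset.sum_add_distrib, hcross]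
  ring

lemma degreeSum_sdiff_add (hF : F ⊆ S) :
    degreeSum W (S \ F) + 2 * ∑ x ∈ F, weightedDegree W S x = degreeSum W S + degreeSum W F := by
  have hsum : ∑ x ∈ F, weightedDegree W S x =
      ∑ x ∈ F, weightedDegree W (S \ F) x + degreeSum W F := by
    simp only [degreeSum, ← weightedDegree_sdiff_add (W := W) hF, Finset.sum_add_distrib]
  have := degreeSum_eq_sdiff_add (W := W) hF
  omega

lemma degreeSum_erase_add (hu : u ∈ S) :
    degreeSum W (S.erase u) + 2 * weightedDegree W S u = degreeSum W S := by
  simpa [degreeSum, weightedDegree, Finset.sdiff_singleton_eq_erase] using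
    degreeSum_sdiff_add (W := W) (Finset.singleton_subset_iff.2 hu)

lemma degreeSum_pair (huv : u ≠ v) : degreeSum W {u, v} = 2 * W s(u, v) := by
  have hu : ({u, v} : Finset V).erase u = {v} := by grind
  have hv : ({u, v} : Finset V).erase v = {u} := by grind
  rw [degreeSum, Finset.sum_pair huv, weightedDegree, weightedDegree, hu, hv,
    Finset.sum_singleton, Finset.sum_singleton, Sym2.eq_swap (a := v), two_mul]

lemma degreeSum_sdiff_pair_add (hu : u ∈ S) (hv : v ∈ S) (huv : u ≠ v) :
    degreeSum W (S \ {u, v}) + 2 * (weightedDegree W S u + weightedDegree W S v) =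
      degreeSum W S + 2 * W s(u, v) := by
  rw [← Finset.sum_pair (f := weightedDegree W S) huv, ← degreeSum_pair huv]
  exact degreeSum_sdiff_add (Finset.insert_subset hu (Finset.singleton_subset_iff.2 hv))

lemma fullVertices_subset : fullVertices W S ⊆ S :=
  Finset.filter_subset _ _

lemma weight_ne_zero_of_full (hu : u ∈ fullVertices W S) (hv : v ∈ S) (huv : u ≠ v) :
    W s(u, v) ≠ 0 :=
  (Finset.mem_filter.1 hu).2 v (Finset.mem_erase.2 ⟨huv.symm, hv⟩)

lemma card_erase_le_weightedDegree {A : Finset V} (h : ∀ y ∈ A.erase x, W s(x, y) ≠ 0) :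
    (A.erase x).card ≤ weightedDegree W A x := by
  simpa [weightedDegree] using Finset.card_nsmul_le_sum (A.erase x) (fun y => W s(x, y)) 1
    fun y hy => Nat.one_le_iff_ne_zero.2 (h y hy)

lemma card_erase_le_weightedDegree_of_full {A : Finset V} (hA : A ⊆ S)
    (hx : x ∈ fullVertices W S) : (A.erase x).card ≤ weightedDegree W A x :=
  card_erase_le_weightedDegree fun _ hy =>
    weight_ne_zero_of_full hx (hA (Finset.mem_of_mem_erase hy)) (Finset.ne_of_mem_erase hy).symm

lemma weight_add_weight_add_card_le (hu : u ∈ fullVertices W S) (hv : v ∈ S) (hx : x ∈ S)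
    (huv : u ≠ v) (hux : u ≠ x) (hvx : v ≠ x) :
    W s(u, v) + W s(u, x) + S.card ≤ weightedDegree W S u + 3 := by
  have hsub : {u, v, x} ⊆ S := by
    simp [Finset.insert_subset_iff, fullVertices_subset hu, hv, hx]
  have hinside : weightedDegree W {u, v, x} u = W s(u, v) + W s(u, x) := by
    rw [weightedDegree, Finset.erase_insert (by simp [huv, hux]), Finset.sum_pair hvx]
  have houtside := card_erase_le_weightedDegree_of_full (A := S \ {u, v, x}) Finset.sdiff_subset hu
  rw [Finset.erase_eq_of_notMem (by simp)] at houtside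
  have := weightedDegree_sdiff_add (W := W) hsub u
  have hcard := Finset.card_sdiff_add_card_eq_card hsub
  have : ({u, v, x} : Finset V).card ≤ 3 := Finset.card_le_three
  omega

lemma card_mul_pred_le_degreeSum_of_full (hF : F ⊆ fullVertices W S) :
    F.card * (F.card - 1) ≤ degreeSum W F := by
  refine Finset.card_nsmul_le_sum F _ _ fun x hx => ?_
  rw [← Finset.card_erase_of_mem hx]
  exact card_erase_le_weightedDegree_of_full (hF.trans fullVertices_subset) (hF hx)

lemma degreeSum_sdiff_full_add_le (hF : F ⊆ fullVertices W S) :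
    degreeSum W (S \ F) + F.card * (F.card - 1) + 2 * (F.card * (S.card - F.card)) ≤
      degreeSum W S := by
  have hFS : F ⊆ S := hF.trans fullVertices_subset
  have hcross : F.card * (S.card - F.card) ≤ ∑ x ∈ F, weightedDegree W (S \ F) x := by
    refine Finset.card_nsmul_le_sum F _ _ fun x hx => ?_
    rw [← Finset.card_sdiff_of_subset hFS,
      ← Finset.erase_eq_of_notMem (Finset.notMem_sdiff_of_mem_right (s := S) hx)]
    simpa [weightedDegree] using card_erase_le_weightedDegree_of_full Finset.sdiff_subset (hF hx)
  have := card_mul_pred_le_degreeSum_of_full hF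
  have := degreeSum_eq_sdiff_add (W := W) hFS
  omega

lemma exists_zero_of_mem_sdiff_fullVertices (hx : x ∈ S \ fullVertices W S) :
    ∃ y ∈ (S \ fullVertices W S).erase x, W s(x, y) = 0 := by
  obtain ⟨hxS, hxF⟩ := Finset.mem_sdiff.1 hx
  simp only [fullVertices, Finset.mem_filter, hxS, true_and, not_forall, not_not] at hxF
  obtain ⟨y, hy, hxy⟩ := hxF
  obtain ⟨hyx, hyS⟩ := Finset.mem_erase.1 hy
  have hyF : y ∉ fullVertices W S := fun hyF =>
    weight_ne_zero_of_full hyF hxS hyx (Sym2.eq_swap ▸ hxy)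
  exact ⟨y, Finset.mem_erase.2 ⟨hyx, Finset.mem_sdiff.2 ⟨hyS, hyF⟩⟩, hxy⟩

lemma weightedDegree_sdiff_fullVertices_add_le (hx : x ∈ S \ fullVertices W S) :
    weightedDegree W (S \ fullVertices W S) x + (fullVertices W S).card ≤
      weightedDegree W S x := by
  obtain ⟨hxS, hxF⟩ := Finset.mem_sdiff.1 hx
  rw [← weightedDegree_sdiff_add (F := fullVertices W S) fullVertices_subset x]
  nth_rw 2 [← Finset.erase_eq_of_notMem hxF]
  refine Nat.add_le_add_left (card_erase_le_weightedDegree fun y hy => ?_) _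
  have hyF := Finset.mem_of_mem_erase hy
  rw [Sym2.eq_swap]
  exact weight_ne_zero_of_full hyF hxS (Finset.ne_of_mem_erase hy)

end DegreeSum

section LargestDegree

variable {V : Type*} [DecidableEq V] {W : Sym2 V → ℕ} {R : Finset V} {x : V} {D : ℕ}

lemma degreeSum_add_le_of_degree_add_le
    (hmax : ∀ y ∈ R, weightedDegree W R y ≤ weightedDegree W R x)
    (hzero : ∀ y ∈ R.erase x, W s(x, y) = 0 → weightedDegree W R x + weightedDegree W R y ≤ D) :
    degreeSum W R + R.card * weightedDegree W R x ≤
      R.card * D + (weightedDegree W R x + 1) * (2 * weightedDegree W R x - D) := by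
  set Δ := weightedDegree W R x
  set N := {y ∈ R.erase x | W s(x, y) ≠ 0}
  have hN : N.card ≤ Δ := by
    calc N.card ≤ ∑ y ∈ N, W s(x, y) := by
          simpa using Finset.card_nsmul_le_sum N (fun y => W s(x, y)) 1
            fun y hy => Nat.one_le_iff_ne_zero.2 (Finset.mem_filter.1 hy).2
      _ ≤ Δ := Finset.sum_le_sum_of_subset (Finset.filter_subset _ _)
  have hdegree : ∀ y ∈ R, weightedDegree W R y + Δ ≤
      D + if y ∈ insert x N then 2 * Δ - D else 0 := by
    intro y hy
    have hyΔ := hmax y hy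
    split_ifs with hyN
    · omega
    · simp only [N, Finset.mem_insert, Finset.mem_filter, Finset.mem_erase, not_or, not_and,
        not_not] at hyN
      have := hzero y (Finset.mem_erase.2 ⟨hyN.1, hy⟩) (hyN.2 ⟨hyN.1, hy⟩)
      omega
  have hfew : (R.filter (· ∈ insert x N)).card ≤ Δ + 1 :=
    (Finset.card_le_card fun y hy => (Finset.mem_filter.1 hy).2).trans
      ((Finset.card_insert_le x N).trans (by omega))
  calc degreeSum W R + R.card * Δ
      = ∑ y ∈ R, (weightedDegree W R y + Δ) := by simp [degreeSum, Finset.sum_add_distrib]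
    _ ≤ ∑ y ∈ R, (D + if y ∈ insert x N then 2 * Δ - D else 0) := Finset.sum_le_sum hdegree
    _ = R.card * D + (R.filter (· ∈ insert x N)).card * (2 * Δ - D) := by
        rw [Finset.sum_add_distrib, ← Finset.sum_filter]
        simp
    _ ≤ R.card * D + (Δ + 1) * (2 * Δ - D) := by gcongr

lemma le_mul_succ_or_two_mul_le {T n Δ : ℕ} (hΔD : Δ ≤ D) (hmax : T ≤ n * Δ)
    (hT : T + n * Δ ≤ n * D + (Δ + 1) * (2 * Δ - D)) :
    T ≤ D * (D + 1) ∨ 2 * T ≤ n * D := by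
  obtain hsmall | hlarge := le_total (2 * Δ) D
  · right
    nlinarith
  obtain ⟨t, rfl⟩ := Nat.exists_eq_add_of_le hΔD
  obtain ⟨q, rfl⟩ := Nat.exists_eq_add_of_le (show t ≤ Δ by omega)
  rw [show 2 * (t + q) - (t + q + t) = q by omega] at hT
  obtain hn | hn := Nat.lt_or_ge n (2 * (t + q) + 2)
  · left
    nlinarith [Nat.mul_le_mul_right t (Nat.le_of_lt_succ hn)]
  · right
    nlinarith [Nat.mul_le_mul_right q hn]

lemma exists_zero_pair_degreeSum_le (hR : R.Nonempty)
    (hzero : ∀ x ∈ R, ∃ y ∈ R.erase x, W s(x, y) = 0) :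
    ∃ x ∈ R, ∃ y ∈ R.erase x, W s(x, y) = 0 ∧
      ∃ D, D = weightedDegree W R x + weightedDegree W R y ∧
        (degreeSum W R ≤ D * (D + 1) ∨ 2 * degreeSum W R ≤ R.card * D) := by
  obtain ⟨x, hx, hmax⟩ := R.exists_max_image (weightedDegree W R) hR
  obtain ⟨z, hz, hxz⟩ := hzero x hx
  obtain ⟨y, hy, hymax⟩ := {y ∈ R.erase x | W s(x, y) = 0}.exists_max_image (weightedDegree W R)
    ⟨z, Finset.mem_filter.2 ⟨hz, hxz⟩⟩
  obtain ⟨hyR, hxy⟩ := Finset.mem_filter.1 hy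
  refine ⟨x, hx, y, hyR, hxy, _, rfl, le_mul_succ_or_two_mul_le (Nat.le_add_right _ _)
    (Finset.sum_le_card_nsmul _ _ _ hmax) (degreeSum_add_le_of_degree_add_le hmax ?_)⟩
  intro y' hy' hxy'
  exact Nat.add_le_add_left (hymax y' (Finset.mem_filter.2 ⟨hy', hxy'⟩)) _

lemma exists_zero_pair_degreeSum_sdiff_fullVertices_le {S : Finset V}
    (hS : (fullVertices W S).card < S.card) :
    ∃ x ∈ S, ∃ y ∈ S.erase x, W s(x, y) = 0 ∧
      ∃ D, D + 2 * (fullVertices W S).card ≤ weightedDegree W S x + weightedDegree W S y ∧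
        (degreeSum W (S \ fullVertices W S) ≤ D * (D + 1) ∨
          2 * degreeSum W (S \ fullVertices W S) ≤ (S.card - (fullVertices W S).card) * D) := by
  have hcard := Finset.card_sdiff_of_subset (fullVertices_subset (W := W) (S := S))
  obtain ⟨x, hx, y, hy, hxy, D, hD, hbounds⟩ :=
    exists_zero_pair_degreeSum_le (W := W) (R := S \ fullVertices W S)
      (Finset.card_pos.1 (by omega)) fun _ => exists_zero_of_mem_sdiff_fullVertices
  refine ⟨x, Finset.sdiff_subset hx, y, Finset.erase_subset_erase x Finset.sdiff_subset hy, hxy,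
    D, ?_, hcard ▸ hbounds⟩
  have := weightedDegree_sdiff_fullVertices_add_le hx
  have := weightedDegree_sdiff_fullVertices_add_le (Finset.mem_of_mem_erase hy)
  omega

end LargestDegree

section Matching

variable {V : Type*} (W : Sym2 V → ℕ)

/-- The complete graph on `S` has a perfect matching of weight at most `c`. -/
def HasPerfectMatching (S : Finset V) (c : ℕ) : Prop :=
  ∃ M : Finset (Sym2 V), IsMatchingOn ⊤ (M : Set (Sym2 V)) ∧
    coveredSet (M : Set (Sym2 V)) = S ∧ ∑ e ∈ M, W e ≤ c

/-- The complete graph on `S` has a matching of weight at most `c` that misses exactly one vertex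
of `S`. -/
def HasAlmostPerfectMatching [DecidableEq V] (S : Finset V) (c : ℕ) : Prop :=
  ∃ x ∈ S, HasPerfectMatching W (S.erase x) c

variable {W} {S : Finset V} {u v x : V} {c d m : ℕ}

lemma HasPerfectMatching.mono (h : HasPerfectMatching W S c) (hcd : c ≤ d) :
    HasPerfectMatching W S d :=
  let ⟨M, hM, hcover, hweight⟩ := h
  ⟨M, hM, hcover, hweight.trans hcd⟩

lemma hasPerfectMatching_empty : HasPerfectMatching W ∅ 0 :=
  ⟨∅, by simp [IsMatchingOn], by simp [coveredSet], by simp⟩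

variable [DecidableEq V]

lemma HasPerfectMatching.of_sdiff_pair (hu : u ∈ S) (hv : v ∈ S) (huv : u ≠ v)
    (h : HasPerfectMatching W (S \ {u, v}) c) : HasPerfectMatching W S (c + W s(u, v)) := by
  obtain ⟨M, ⟨hedges, hpairwise⟩, hcover, hweight⟩ := h
  have mem_cover (x : V) : (∃ e ∈ M, x ∈ e) ↔ x ∈ S ∧ x ≠ u ∧ x ≠ v := by
    simpa [coveredSet] using Set.ext_iff.1 hcover x
  have hdisjoint : ∀ e ∈ M, ∀ x ∈ e, x ∉ s(u, v) := by
    intro e he x hxe hx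
    obtain ⟨-, hxu, hxv⟩ := (mem_cover x).1 ⟨e, he, hxe⟩
    exact (Sym2.mem_iff.1 hx).elim hxu hxv
  have hnew : s(u, v) ∉ M := fun he =>
    hdisjoint _ he u (Sym2.mem_mk_left u v) (Sym2.mem_mk_left u v)
  refine ⟨insert s(u, v) M, ⟨?_, ?_⟩, ?_, ?_⟩
  · rw [Finset.coe_insert]
    exact Set.insert_subset (by simpa using huv) hedges
  · rw [Finset.coe_insert]
    exact hpairwise.insert fun e he _ =>
      ⟨fun x hx hxe => hdisjoint e he x hxe hx, hdisjoint e he⟩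
  · ext x
    simp only [coveredSet, Finset.coe_insert, Set.mem_insert_iff, exists_eq_or_imp,
      Set.mem_ofPred_eq, Finset.mem_coe, mem_cover, Sym2.mem_iff]
    grind
  · rw [Finset.sum_insert hnew, add_comm]
    gcongr

lemma HasAlmostPerfectMatching.of_sdiff_pair (hu : u ∈ S) (hv : v ∈ S) (huv : u ≠ v)
    (h : HasAlmostPerfectMatching W (S \ {u, v}) c) :
    HasAlmostPerfectMatching W S (c + W s(u, v)) := by
  obtain ⟨x, hx, h⟩ := h
  simp only [Finset.mem_sdiff, Finset.mem_insert, Finset.mem_singleton, not_or] at hx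
  obtain ⟨hxS, hxu, hxv⟩ := hx
  refine ⟨x, hxS, .of_sdiff_pair (Finset.mem_erase.2 ⟨Ne.symm hxu, hu⟩)
    (Finset.mem_erase.2 ⟨Ne.symm hxv, hv⟩) huv ?_⟩
  rwa [Finset.erase_sdiff_comm]

lemma HasPerfectMatching.hasAlmostPerfectMatching_of_sdiff_triple (hu : u ∈ S) (hv : v ∈ S)
    (hx : x ∈ S) (huv : u ≠ v) (hux : u ≠ x) (hvx : v ≠ x)
    (h : HasPerfectMatching W (S \ {u, v, x}) c) :
    HasAlmostPerfectMatching W S (c + W s(u, v)) := by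
  refine ⟨x, hx, .of_sdiff_pair (Finset.mem_erase.2 ⟨hux, hu⟩)
    (Finset.mem_erase.2 ⟨hvx, hv⟩) huv ?_⟩
  convert h using 1
  grind

lemma card_sdiff_pair_add (hu : u ∈ S) (hv : v ∈ S) (huv : u ≠ v) :
    (S \ {u, v}).card + 2 = S.card := by
  rw [← Finset.card_pair huv]
  exact Finset.card_sdiff_add_card_eq_card
    (Finset.insert_subset hu (Finset.singleton_subset_iff.2 hv))

/-- For fixed `u` the two sides have the same sum over all `v ≠ u`. -/
lemma exists_degreeSum_add_le_degree_add {n : ℕ} (hS : S.card = n + 2) (hu : u ∈ S) :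
    ∃ v ∈ S.erase u, degreeSum W S + n * (n + 1) * W s(u, v) ≤
      (n + 1) * (weightedDegree W S u + weightedDegree W S v) := by
  have hcard : (S.erase u).card = n + 1 := by rw [Finset.card_erase_of_mem hu, hS]; rfl
  have hsum : ∑ v ∈ S.erase u, weightedDegree W S v + weightedDegree W S u = degreeSum W S :=
    Finset.sum_erase_add _ _ hu
  refine Finset.exists_le_of_sum_le (Finset.card_pos.1 (by omega)) (le_of_eq ?_)
  rw [Finset.sum_add_distrib, ← Finset.mul_sum, ← Finset.mul_sum, Finset.sum_add_distrib,
    Finset.sum_const, Finset.sum_const, hcard, ← hsum, ← weightedDegree]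
  simp only [smul_eq_mul]
  ring

lemma exists_hasPerfectMatching_le_average (hS : S.card = 2 * m + 2) :
    ∃ c, HasPerfectMatching W S c ∧ 2 * c * (2 * m + 1) ≤ degreeSum W S := by
  induction m generalizing S with
  | zero =>
    obtain ⟨u, v, huv, rfl⟩ := Finset.card_eq_two.1 hS
    have hempty : HasPerfectMatching W ({u, v} \ {u, v}) 0 := by
      rw [Finset.sdiff_self]
      exact hasPerfectMatching_empty
    exact ⟨_, hempty.of_sdiff_pair (by simp) (by simp) huv, by simp [degreeSum_pair huv]⟩
  | succ m ih =>
    obtain ⟨u, hu⟩ : S.Nonempty := Finset.card_pos.1 (by omega)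
    obtain ⟨v, hv, huv_le⟩ := exists_degreeSum_add_le_degree_add (W := W)
      (show S.card = (2 * m + 2) + 2 by omega) hu
    obtain ⟨hvu, hvS⟩ := Finset.mem_erase.1 hv
    have hcard := card_sdiff_pair_add hu hvS hvu.symm
    obtain ⟨c, hc, hc_le⟩ := ih (S := S \ {u, v}) (by omega)
    refine ⟨_, hc.of_sdiff_pair hu hvS hvu.symm, ?_⟩
    have hdegree := degreeSum_sdiff_pair_add (W := W) hu hvS hvu.symm
    refine Nat.le_of_mul_le_mul_left ?_ (show 0 < 2 * m + 1 by omega)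
    nlinarith [Nat.mul_le_mul_left (2 * m + 3) hc_le]

lemma hasPerfectMatching_of_degreeSum_lt (hS : S.card = 2 * m + 2)
    (h : degreeSum W S < 2 * (c + 1) * (2 * m + 1)) : HasPerfectMatching W S c := by
  obtain ⟨d, hd, hd_le⟩ := exists_hasPerfectMatching_le_average (W := W) hS
  refine hd.mono (Nat.le_of_lt_succ ?_)
  have := Nat.lt_of_mul_lt_mul_right (hd_le.trans_lt h)
  omega

lemma two_mul_weightedDegree_add_le (h : ¬ HasAlmostPerfectMatching W S c)
    (hS : S.card = 2 * m + 3) (hx : x ∈ S) :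
    2 * weightedDegree W S x + 2 * (c + 1) * (2 * m + 1) ≤ degreeSum W S := by
  have hcard : (S.erase x).card = 2 * m + 2 := by rw [Finset.card_erase_of_mem hx, hS]; rfl
  have hle : 2 * (c + 1) * (2 * m + 1) ≤ degreeSum W (S.erase x) :=
    not_lt.1 fun hlt => h ⟨x, hx, hasPerfectMatching_of_degreeSum_lt hcard hlt⟩
  have := degreeSum_erase_add (W := W) hx
  omega

lemma hasAlmostPerfectMatching_of_degreeSum_lt (hS : S.card = 2 * m + 3)
    (h : degreeSum W S < 2 * (c + 1) * (2 * m + 3)) : HasAlmostPerfectMatching W S c := by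
  by_contra hnot
  have hsum := Finset.sum_le_card_nsmul S _ _ fun x hx => two_mul_weightedDegree_add_le hnot hS hx
  rw [Finset.sum_add_distrib, ← Finset.mul_sum, Finset.sum_const, hS, ← degreeSum] at hsum
  simp only [smul_eq_mul] at hsum
  nlinarith

end Matching

section Induction

/-- Twice the bound on the weight of the complete graph on `2 * m + 1` vertices. -/
def weightBound (m : ℕ) : ℕ := min (12 * m) ((m + 2) * (m + 3))

lemma weightBound_of_le_five {m : ℕ} (hm : 1 ≤ m) (hm5 : m ≤ 5) :
    weightBound m = (m + 2) * (m + 3) := by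
  interval_cases m <;> rfl

lemma weightBound_of_five_lt {m : ℕ} (hm : 5 < m) : weightBound m = 12 * m :=
  min_eq_left (by nlinarith)

lemma lt_of_lt_weightBound_succ {m T : ℕ} (hT : T < weightBound (m + 1)) : T < 12 * m + 12 :=
  hT.trans_le (min_le_left _ _)

lemma five_le_of_lt_weightBound {m T : ℕ} (hm : 1 ≤ m) (hT : T < weightBound (m + 1))
    (hlow : 12 * m + 8 ≤ T) : 5 ≤ m := by
  by_contra! hm5
  have := weightBound_of_le_five (Nat.le_add_left 1 m) hm5
  interval_cases m <;> omega

lemma not_degree_bounds_of_no_full {m T D : ℕ} (hm : 1 ≤ m) (hT : T < weightBound (m + 1))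
    (hD : 2 * D + weightBound m ≤ T) :
    ¬ (T ≤ D * (D + 1) ∨ 2 * T ≤ (2 * m + 3) * D) := by
  have hT12 := lt_of_lt_weightBound_succ hT
  obtain hm5 | hm5 := Nat.lt_or_ge 5 m
  · rw [weightBound_of_five_lt hm5] at hD
    have : D ≤ 5 := by omega
    rintro (h | h) <;> nlinarith
  · have hT' : T < (m + 3) * (m + 4) := hT.trans_le (min_le_right _ _)
    rw [weightBound_of_le_five hm hm5] at hD
    have hDm : D ≤ m + 2 := by nlinarith
    rintro (h | h) <;> nlinarith

lemma not_degree_bounds_of_few_full {m T T' D f : ℕ} (hm : 5 ≤ m) (hT : T < weightBound (m + 1))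
    (hlow : 12 * m + 8 ≤ T) (hf : f = 1 ∨ f = 2)
    (hD : 2 * (D + 2 * f) + weightBound m ≤ T)
    (hT' : T + f * (f - 1) ≤ T' + 2 * (f * (2 * m + 3))) :
    ¬ (T' ≤ D * (D + 1) ∨ 2 * T' ≤ (2 * m + 3 - f) * D) := by
  have hT12 := lt_of_lt_weightBound_succ hT
  obtain rfl | hm5 := hm.eq_or_lt
  · rw [weightBound_of_le_five (by omega) le_rfl] at hD
    obtain rfl | rfl := hf
    all_goals
      have hD5 : D ≤ 5 := by omega
      interval_cases D <;> omega
  · rw [weightBound_of_five_lt hm5] at hD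
    obtain rfl | rfl := hf
    all_goals
      have hD3 : D ≤ 3 := by omega
      interval_cases D <;> omega

variable {V : Type*} [DecidableEq V] {W : Sym2 V → ℕ} {S : Finset V} {m : ℕ}

lemma twelve_mul_add_eight_le_degreeSum (hS : S.card = 2 * m + 3)
    (hnot : ¬ HasAlmostPerfectMatching W S 1) (hfull : (fullVertices W S).Nonempty) :
    12 * m + 8 ≤ degreeSum W S := by
  obtain ⟨u, hu⟩ := hfull
  have huS : u ∈ S := fullVertices_subset hu
  have := two_mul_weightedDegree_add_le hnot hS huS
  have hdegree := card_erase_le_weightedDegree_of_full subset_rfl hu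
  rw [Finset.card_erase_of_mem huS] at hdegree
  omega

lemma degreeSum_add_le_degreeSum_sdiff_full_add {F : Finset V} (hS : S.card = 2 * m + 3)
    (hT : degreeSum W S < 12 * m + 12) (hnot : ¬ HasAlmostPerfectMatching W S 1)
    (hF : F ⊆ fullVertices W S) :
    degreeSum W S + F.card * (F.card - 1) ≤
      degreeSum W (S \ F) + 2 * (F.card * (2 * m + 3)) := by
  have hFS : F ⊆ S := hF.trans fullVertices_subset
  have hdegree : ∑ x ∈ F, weightedDegree W S x ≤ F.card * (2 * m + 3) := by
    refine Finset.sum_le_card_nsmul _ _ _ fun x hx => ?_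
    have := two_mul_weightedDegree_add_le hnot hS (hFS hx)
    omega
  have := card_mul_pred_le_degreeSum_of_full hF
  have := degreeSum_sdiff_add (W := W) hFS
  omega

lemma hasPerfectMatching_zero_of_three_full {F : Finset V} (hm : 2 ≤ m) (hS : S.card = 2 * m + 3)
    (hT : degreeSum W S < 12 * m + 12) (hF : F ⊆ fullVertices W S) (hF3 : F.card = 3) :
    HasPerfectMatching W (S \ F) 0 := by
  have hcard : (S \ F).card = 2 * (m - 1) + 2 := by
    rw [Finset.card_sdiff_of_subset (hF.trans fullVertices_subset)]
    omega
  have hsum := degreeSum_sdiff_full_add_le hF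
  rw [hF3, hS] at hsum
  exact hasPerfectMatching_of_degreeSum_lt hcard (by omega)

lemma hasAlmostPerfectMatching_of_three_full (hm : 2 ≤ m) (hS : S.card = 2 * m + 3)
    (hT : degreeSum W S < 12 * m + 12) (hfull : 2 < (fullVertices W S).card) :
    HasAlmostPerfectMatching W S 1 := by
  by_contra hnot
  obtain ⟨u, hu, v, hv, x, hx, huv, hux, hvx⟩ := Finset.two_lt_card.1 hfull
  have mem_S {z : V} (hz : z ∈ fullVertices W S) : z ∈ S := fullVertices_subset hz
  have hrest : HasPerfectMatching W (S \ {u, v, x}) 0 :=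
    hasPerfectMatching_zero_of_three_full hm hS hT
      (by simp [Finset.insert_subset_iff, hu, hv, hx]) (by simp [huv, hux, hvx])
  have hweights := weight_add_weight_add_card_le hu (mem_S hv) (mem_S hx) huv hux hvx
  have hdegree := two_mul_weightedDegree_add_le hnot hS (mem_S hu)
  have huv_ne : W s(u, v) ≠ 0 := weight_ne_zero_of_full hu (mem_S hv) huv
  have hux_ne : W s(u, x) ≠ 0 := weight_ne_zero_of_full hu (mem_S hx) hux
  obtain huv_one | hux_one : W s(u, v) = 1 ∨ W s(u, x) = 1 := by omega
  · have := hrest.hasAlmostPerfectMatching_of_sdiff_triple (mem_S hu) (mem_S hv) (mem_S hx)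
      huv hux hvx
    exact hnot (by rwa [huv_one] at this)
  · rw [Finset.pair_comm v x] at hrest
    have := hrest.hasAlmostPerfectMatching_of_sdiff_triple (mem_S hu) (mem_S hx) (mem_S hv)
      hux huv hvx.symm
    exact hnot (by rwa [hux_one] at this)

lemma hasAlmostPerfectMatching_of_zero_pairs (hm : 1 ≤ m) (hS : S.card = 2 * m + 3)
    (hT : degreeSum W S < weightBound (m + 1))
    (hzero : ∀ u ∈ S, ∀ v ∈ S.erase u, W s(u, v) = 0 →
      2 * (weightedDegree W S u + weightedDegree W S v) + weightBound m ≤ degreeSum W S) :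
    HasAlmostPerfectMatching W S 1 := by
  by_contra hnot
  set F := fullVertices W S
  have hT12 := lt_of_lt_weightBound_succ hT
  have hlarge (hF : F.card ≠ 0) : 5 ≤ m ∧ 12 * m + 8 ≤ degreeSum W S := by
    have hlow := twelve_mul_add_eight_le_degreeSum hS hnot (Finset.card_ne_zero.1 hF)
    exact ⟨five_le_of_lt_weightBound hm hT hlow, hlow⟩
  have hF2 : F.card ≤ 2 := by
    by_contra! hF3
    obtain ⟨hm5, -⟩ := hlarge (by omega)
    exact hnot (hasAlmostPerfectMatching_of_three_full (by omega) hS hT12 hF3)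
  obtain ⟨x, hx, y, hy, hxy, D, hD, hbounds⟩ :=
    exists_zero_pair_degreeSum_sdiff_fullVertices_le (show F.card < S.card by omega)
  change degreeSum W (S \ F) ≤ _ ∨ 2 * degreeSum W (S \ F) ≤ (S.card - F.card) * D at hbounds
  have hDT : 2 * (D + 2 * F.card) + weightBound m ≤ degreeSum W S :=
    (by gcongr : _ ≤ _).trans (hzero x hx y hy hxy)
  rw [hS] at hbounds
  obtain hF0 | hF0 := eq_or_ne F.card 0
  · rw [hF0] at hDT hbounds
    rw [Finset.card_eq_zero.1 hF0, Finset.sdiff_empty] at hbounds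
    exact not_degree_bounds_of_no_full hm hT hDT hbounds
  · obtain ⟨hm5, hlow⟩ := hlarge hF0
    exact not_degree_bounds_of_few_full hm5 hT hlow (by omega) hDT
      (degreeSum_add_le_degreeSum_sdiff_full_add hS hT12 hnot subset_rfl) hbounds

theorem hasAlmostPerfectMatching_of_degreeSum_lt_weightBound (hS : S.card = 2 * m + 1)
    (hT : degreeSum W S < weightBound m) : HasAlmostPerfectMatching W S 1 := by
  induction m generalizing S with
  | zero => simp [weightBound] at hT
  | succ m ih =>
    obtain rfl | hm := Nat.eq_zero_or_pos m
    · exact hasAlmostPerfectMatching_of_degreeSum_lt (m := 0) hS hT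
    by_contra hnot
    refine hnot (hasAlmostPerfectMatching_of_zero_pairs hm hS hT fun u hu v hv huv => ?_)
    obtain ⟨hvu, hvS⟩ := Finset.mem_erase.1 hv
    have hcard := card_sdiff_pair_add hu hvS hvu.symm
    have hle : weightBound m ≤ degreeSum W (S \ {u, v}) := by
      by_contra! hlt
      have := (ih (by omega) hlt).of_sdiff_pair hu hvS hvu.symm
      exact hnot (by rwa [huv] at this)
    have := degreeSum_sdiff_pair_add (W := W) hu hvS hvu.symm
    omega

end Induction

section EdgeClasses

variable {V : Type*}

lemma degreeSum_univ_le [Fintype V] [DecidableEq V] (W : Sym2 V → ℕ) :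
    degreeSum W Finset.univ ≤ 2 * ∑ e, W e := by
  have hfiber (e : Sym2 V) : (Finset.univ.filter fun p : V × V => s(p.1, p.2) = e).card ≤ 2 := by
    induction e with | _ a b
    refine (Finset.card_le_card fun p hp => ?_).trans
      (Finset.card_le_two (a := (a, b)) (b := (b, a)))
    simpa [Prod.ext_iff] using hp
  calc degreeSum W Finset.univ
      ≤ ∑ x, ∑ y, W s(x, y) :=
        Finset.sum_le_sum fun x _ => Finset.sum_le_sum_of_subset (Finset.erase_subset _ _)
    _ = ∑ p : V × V, W s(p.1, p.2) := (Fintype.sum_prod_type' fun x y => W s(x, y)).symm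
    _ = ∑ e, (Finset.univ.filter fun p : V × V => s(p.1, p.2) = e).card * W e := by
        rw [← Finset.sum_fiberwise' Finset.univ (fun p : V × V => s(p.1, p.2)) W]
        simp only [Finset.sum_const, smul_eq_mul]
    _ ≤ 2 * ∑ e, W e := by
        rw [Finset.mul_sum]
        gcongr with e
        exact hfiber e

open Classical in
/-- The weight of an edge, `1` on `E1` and `2` on `E2`, added up on a common edge. -/
noncomputable def classWeight (E1 E2 : Set (Sym2 V)) (e : Sym2 V) : ℕ :=
  (if e ∈ E1 then 1 else 0) + 2 * (if e ∈ E2 then 1 else 0)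

lemma sum_classWeight (E1 E2 : Set (Sym2 V)) (M : Finset (Sym2 V)) :
    ∑ e ∈ M, classWeight E1 E2 e = (↑M ∩ E1).ncard + 2 * (↑M ∩ E2).ncard := by
  classical
  simp only [classWeight, Finset.sum_add_distrib, ← Finset.mul_sum, Finset.sum_boole, Nat.cast_id,
    ← Set.ncard_coe_finset, Finset.coe_filter, ← Finset.mem_coe]
  rfl

theorem stmt_11_general [Fintype V] (hodd : Odd (Fintype.card V)) (E1 E2 : Set (Sym2 V))
    (hE : 8 * (E1.ncard + 2 * E2.ncard) <
      min (24 * (Fintype.card V - 1)) ((Fintype.card V + 3) * (Fintype.card V + 5))) :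
    ∃ M : Set (Sym2 V), IsMatchingOn (⊤ : SimpleGraph V) M ∧
      (coveredSet M).ncard = Fintype.card V - 1 ∧ M ∩ E2 = ∅ ∧ (M ∩ E1).ncard ≤ 1 := by
  classical
  obtain ⟨m, hm⟩ := hodd
  have htotal : 2 * ∑ e, classWeight E1 E2 e < weightBound m := by
    rw [sum_classWeight, Finset.coe_univ, Set.univ_inter, Set.univ_inter, weightBound, lt_min_iff]
    rw [hm, lt_min_iff] at hE
    exact ⟨by omega, by nlinarith⟩
  obtain ⟨x, hx, M, hM, hcover, hweight⟩ := hasAlmostPerfectMatching_of_degreeSum_lt_weightBound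
    (S := Finset.univ) (by simp [hm]) ((degreeSum_univ_le _).trans_lt htotal)
  rw [sum_classWeight] at hweight
  refine ⟨M, hM, ?_, (Set.ncard_eq_zero).1 (by omega), by omega⟩
  rw [hcover, Set.ncard_coe_finset, Finset.card_erase_of_mem hx, Finset.card_univ]

end EdgeClasses

/-- if r+k is odd, k ≤ r and |E1|+2|E2| < min{3(r+k-1), (r+k+3)(r+k+5)/8},
the complete graph on r+k vertices has an almost perfect good matching.
(The inequality is stated multiplied through by 8 to avoid division.) -/
theorem stmt_11 (r k : ℕ) (hr : 1 ≤ r) (hk : 1 ≤ k) (hkr : k ≤ r)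
    (hodd : Odd (r + k))
    (E0 E1 E2 : Set (Sym2 (Fin (r + k))))
    (hpart : (⊤ : SimpleGraph (Fin (r + k))).edgeSet = E0 ∪ E1 ∪ E2)
    (h01 : Disjoint E0 E1) (h02 : Disjoint E0 E2) (h12 : Disjoint E1 E2)
    (hE : 8 * (E1.ncard + 2 * E2.ncard) <
      min (24 * (r + k - 1)) ((r + k + 3) * (r + k + 5))) :
    ∃ M : Set (Sym2 (Fin (r + k))), IsMatchingOn (⊤ : SimpleGraph (Fin (r + k))) M ∧
      (coveredSet M).ncard = r + k - 1 ∧ M ∩ E2 = ∅ ∧ (M ∩ E1).ncard ≤ 1 := by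
  simpa only [Fintype.card_fin] using
    stmt_11_general (by rwa [Fintype.card_fin]) E1 E2 (by rwa [Fintype.card_fin])
end

section
/- Let r and k be positive integers with k > r, let H be the complete graph on r+k vertices, and let (E_0, E_1, E_2) be an ordered partition of E(H). Suppose r < k ≤ (3r−7)/2 and |E_1| + 2|E_2| < min{ (k+3r−4)(k−r+3)/2, (k−r+2)(k+r−1) }. Then H has a matching M of order r with M ∩ E_2 = ∅ and |M ∩ E_1| ≤ 1. -/
/-!
Let `G` be the graph of the edges outside `E1 ∪ E2` on `n` vertices.

If `G` has no matching of order `r - 1`, the Erdős–Gallai theorem already forces too many edges into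
`E1 ∪ E2`. To prove it, take a maximum matching and call a vertex with two free neighbours a hub.
Since there are no augmenting paths through up to three matching edges, the free vertices together
with the partners of hubs form an independent set, and a matching edge without a hub sends few edges
to that set.

Otherwise take a matching `M` of `G` of order `r - 1`, and give edges in `E1` and `E2` weight `1`
and `2`. If no good matching of order `r` exists, any two free vertices span an edge of weight at
least `2`, and this persists after exchanging an edge of `M`. Hence each edge of `M` sends weight at
least `2u` to the `u` free vertices, and the total weight is at least `u (n - 1)`.
-/

open Finset

section Matchings

variable {V : Type*} {G : SimpleGraph V} {M : Set (Sym2 V)} {e f : Sym2 V} {u v x y : V}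

namespace IsMatchingOn

lemma eq_of_mem (hM : IsMatchingOn G M) (he : e ∈ M) (hf : f ∈ M) (hve : v ∈ e) (hvf : v ∈ f) :
    e = f :=
  hM.2.eq he hf fun h ↦ h v hve hvf

lemma subset {M' : Set (Sym2 V)} (hM : IsMatchingOn G M) (h : M' ⊆ M) : IsMatchingOn G M' :=
  ⟨h.trans hM.1, hM.2.mono h⟩

lemma mono {G' : SimpleGraph V} (hM : IsMatchingOn G M) (h : G ≤ G') : IsMatchingOn G' M :=
  ⟨hM.1.trans (SimpleGraph.edgeSet_mono h), hM.2⟩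

end IsMatchingOn

/-- A matching with the largest possible number of edges. -/
structure IsMaximumMatching (G : SimpleGraph V) (M : Set (Sym2 V)) : Prop where
  isMatchingOn : IsMatchingOn G M
  ncard_le : ∀ M', IsMatchingOn G M' → M'.ncard ≤ M.ncard

lemma exists_isMaximumMatching [Finite V] (G : SimpleGraph V) : ∃ M, IsMaximumMatching G M := by
  obtain ⟨M, hM, hmax⟩ := Set.exists_max_image {M | IsMatchingOn G M} Set.ncard (Set.toFinite _)
    ⟨∅, Set.empty_subset _, Set.pairwise_empty _⟩
  exact ⟨M, hM, hmax⟩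

/-- The set of edges obtained from the matching `M` by trading its edge `xy` for the edge `ux`,
where `u` is free: it covers `u` instead of `y`. -/
def exchangeEdge (M : Set (Sym2 V)) (u x y : V) : Set (Sym2 V) := insert s(u, x) (M \ {s(x, y)})

lemma mem_exchangeEdge (he : e ∈ M) (hne : e ≠ s(x, y)) : e ∈ exchangeEdge M u x y :=
  Or.inr ⟨he, hne⟩

variable [Fintype V]

open Classical in
/-- The vertices that are covered by no edge of `M`. -/
noncomputable def freeVerts (M : Set (Sym2 V)) : Finset V := {v | ∀ e ∈ M, v ∉ e}

lemma mem_freeVerts : v ∈ freeVerts M ↔ ∀ e ∈ M, v ∉ e := by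
  simp [freeVerts]

lemma ne_of_mem_freeVerts (hu : u ∈ freeVerts M) (he : e ∈ M) (hv : v ∈ e) : v ≠ u := by
  rintro rfl
  exact mem_freeVerts.1 hu e he hv

lemma mk_notMem_of_mem_freeVerts (hu : u ∈ freeVerts M) : s(u, x) ∉ M :=
  fun h ↦ mem_freeVerts.1 hu _ h (Sym2.mem_mk_left u x)

namespace IsMatchingOn

protected lemma insert (hM : IsMatchingOn G M) (hu : u ∈ freeVerts M) (hv : v ∈ freeVerts M)
    (h : G.Adj u v) : IsMatchingOn G (insert s(u, v) M) := by
  have hdisj : ∀ e ∈ M, ∀ z ∈ s(u, v), z ∉ e := by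
    intro e he z hz hze
    rcases Sym2.mem_iff.1 hz with rfl | rfl
    · exact mem_freeVerts.1 hu e he hze
    · exact mem_freeVerts.1 hv e he hze
  refine ⟨Set.insert_subset h hM.1, hM.2.insert fun e he _ ↦ ⟨hdisj e he, ?_⟩⟩
  exact fun z hze hz ↦ hdisj e he z hz hze

lemma mem_freeVerts_sdiff (hM : IsMatchingOn G M) (he : e ∈ M) (hv : v ∈ e) :
    v ∈ freeVerts (M \ {e}) :=
  mem_freeVerts.2 fun _ hf hvf ↦ hf.2 (hM.eq_of_mem hf.1 he hvf hv)

lemma exchange (hM : IsMatchingOn G M) (hu : u ∈ freeVerts M) (hxy : s(x, y) ∈ M)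
    (h : G.Adj u x) : IsMatchingOn G (exchangeEdge M u x y) :=
  (hM.subset Set.sdiff_subset).insert
    (mem_freeVerts.2 fun e he ↦ mem_freeVerts.1 hu e he.1)
    (hM.mem_freeVerts_sdiff hxy (Sym2.mem_mk_left x y)) h

lemma mem_freeVerts_exchangeEdge_self (hM : IsMatchingOn G M) (hu : u ∈ freeVerts M)
    (hxy : s(x, y) ∈ M) : y ∈ freeVerts (exchangeEdge M u x y) := by
  refine mem_freeVerts.2 ?_
  rintro e (rfl | he)
  · have hyu : y ≠ u := ne_of_mem_freeVerts hu hxy (Sym2.mem_mk_right x y)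
    have hyx : y ≠ x := (hM.1 hxy : G.Adj x y).ne'
    simp [hyu, hyx]
  · exact mem_freeVerts.1 (hM.mem_freeVerts_sdiff hxy (Sym2.mem_mk_right x y)) e he

end IsMatchingOn

lemma mem_freeVerts_exchangeEdge (hxy : s(x, y) ∈ M) (hv : v ∈ freeVerts M) (huv : u ≠ v) :
    v ∈ freeVerts (exchangeEdge M u x y) := by
  refine mem_freeVerts.2 ?_
  rintro e (rfl | he)
  · have hxv : x ≠ v := ne_of_mem_freeVerts hv hxy (Sym2.mem_mk_left x y)
    simp [huv.symm, hxv.symm]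
  · exact mem_freeVerts.1 hv e he.1

lemma ncard_exchangeEdge (hu : u ∈ freeVerts M) (hxy : s(x, y) ∈ M) :
    (exchangeEdge M u x y).ncard = M.ncard :=
  Set.ncard_exchange (mk_notMem_of_mem_freeVerts hu) hxy

namespace IsMaximumMatching

variable {a b c d : V}

lemma exchange (hM : IsMaximumMatching G M) (hu : u ∈ freeVerts M) (hxy : s(x, y) ∈ M)
    (h : G.Adj u x) : IsMaximumMatching G (exchangeEdge M u x y) :=
  ⟨hM.isMatchingOn.exchange hu hxy h, by simpa only [ncard_exchangeEdge hu hxy] using hM.ncard_le⟩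

lemma not_adj_of_mem_freeVerts (hM : IsMaximumMatching G M) (hu : u ∈ freeVerts M)
    (hv : v ∈ freeVerts M) : ¬ G.Adj u v := by
  intro h
  have hle := hM.ncard_le _ (hM.isMatchingOn.insert hu hv h)
  rw [Set.ncard_insert_of_notMem (mk_notMem_of_mem_freeVerts hu)] at hle
  omega

lemma no_augmenting_path_one (hM : IsMaximumMatching G M) (hu : u ∈ freeVerts M)
    (hv : v ∈ freeVerts M) (huv : u ≠ v) (hux : G.Adj u x) (hxy : s(x, y) ∈ M) :
    ¬ G.Adj y v :=
  (hM.exchange hu hxy hux).not_adj_of_mem_freeVerts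
    (hM.isMatchingOn.mem_freeVerts_exchangeEdge_self hu hxy)
    (mem_freeVerts_exchangeEdge hxy hv huv)

lemma no_augmenting_path_two (hM : IsMaximumMatching G M) (hu : u ∈ freeVerts M)
    (hv : v ∈ freeVerts M) (huv : u ≠ v) (hux : G.Adj u x) (hxy : s(x, y) ∈ M)
    (hya : G.Adj y a) (hab : s(a, b) ∈ M) (hne : s(a, b) ≠ s(x, y)) : ¬ G.Adj b v := by
  have hyv : y ≠ v := ne_of_mem_freeVerts hv hxy (Sym2.mem_mk_right x y)
  exact (hM.exchange hu hxy hux).no_augmenting_path_one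
    (hM.isMatchingOn.mem_freeVerts_exchangeEdge_self hu hxy)
    (mem_freeVerts_exchangeEdge hxy hv huv) hyv hya (mem_exchangeEdge hab hne)

lemma no_augmenting_path_three (hM : IsMaximumMatching G M) (hu : u ∈ freeVerts M)
    (hv : v ∈ freeVerts M) (huv : u ≠ v) (hux : G.Adj u x) (hxy : s(x, y) ∈ M)
    (hya : G.Adj y a) (hab : s(a, b) ∈ M) (hne : s(a, b) ≠ s(x, y))
    (hbc : G.Adj b c) (hcd : s(c, d) ∈ M) (hne' : s(c, d) ≠ s(x, y)) (hne'' : s(c, d) ≠ s(a, b)) :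
    ¬ G.Adj d v := by
  have hyv : y ≠ v := ne_of_mem_freeVerts hv hxy (Sym2.mem_mk_right x y)
  exact (hM.exchange hu hxy hux).no_augmenting_path_two
    (hM.isMatchingOn.mem_freeVerts_exchangeEdge_self hu hxy)
    (mem_freeVerts_exchangeEdge hxy hv huv) hyv hya (mem_exchangeEdge hab hne)
    hbc (mem_exchangeEdge hcd hne') hne''

end IsMaximumMatching

end Matchings

section Counting

variable {V : Type*} {G : SimpleGraph V}

lemma sum_sum_indicator_le [Fintype V] (E : Set (Sym2 V)) :
    ∑ p, ∑ q, E.indicator (1 : Sym2 V → ℕ) s(p, q) ≤ 2 * E.ncard := by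
  classical
  have hfiber : ∀ e ∈ E.toFinset,
      #{pq ∈ {pq : V × V | s(pq.1, pq.2) ∈ E} | s(pq.1, pq.2) = e} ≤ 2 := by
    intro e _
    induction e with | _ a b
    refine (card_le_card fun pq hpq ↦ ?_).trans (card_le_two (a := (a, b)) (b := (b, a)))
    have := (mem_filter.1 hpq).2
    simpa [Prod.ext_iff] using this
  calc ∑ p, ∑ q, E.indicator (1 : Sym2 V → ℕ) s(p, q)
      = #{pq : V × V | s(pq.1, pq.2) ∈ E} := by
        rw [card_filter, ← Fintype.sum_prod_type']
        simp only [Set.indicator_apply, Pi.one_apply]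
    _ ≤ 2 * #E.toFinset := card_le_mul_card_image_of_maps_to (by simp) 2 hfiber
    _ = 2 * E.ncard := by rw [Set.ncard_eq_toFinset_card']

lemma mul_card_mul_card_sub_one_le_sum_sum {w : Sym2 V → ℕ} {I : Finset V} {c : ℕ}
    (hI : (I : Set V).Pairwise fun p q ↦ c ≤ w s(p, q)) :
    c * (#I * (#I - 1)) ≤ ∑ p ∈ I, ∑ q ∈ I, w s(p, q) := by
  classical
  calc c * (#I * (#I - 1)) = #I.offDiag • c := by
        rw [offDiag_card, smul_eq_mul, Nat.mul_sub_one, mul_comm]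
    _ ≤ ∑ pq ∈ I.offDiag, w s(pq.1, pq.2) := card_nsmul_le_sum _ _ _ fun pq hpq ↦ by
        rw [mem_offDiag] at hpq
        exact hI hpq.1 hpq.2.1 hpq.2.2
    _ ≤ ∑ pq ∈ I ×ˢ I, w s(pq.1, pq.2) := sum_le_sum_of_subset fun _ ↦ by grind
    _ = ∑ p ∈ I, ∑ q ∈ I, w s(p, q) := sum_product _ _ _

lemma sum_sum_add_two_mul_sum_sum_le [Fintype V] (w : Sym2 V → ℕ) {I Z : Finset V}
    (hIZ : Disjoint I Z) :
    ∑ p ∈ I, ∑ q ∈ I, w s(p, q) + 2 * ∑ z ∈ Z, ∑ p ∈ I, w s(z, p) ≤ ∑ p, ∑ q, w s(p, q) := by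
  classical
  have hswap : ∑ p ∈ I, ∑ z ∈ Z, w s(p, z) = ∑ z ∈ Z, ∑ p ∈ I, w s(z, p) := by
    rw [sum_comm]
    simp only [Sym2.eq_swap]
  calc ∑ p ∈ I, ∑ q ∈ I, w s(p, q) + 2 * ∑ z ∈ Z, ∑ p ∈ I, w s(z, p)
      = ∑ p ∈ I, ∑ q ∈ I ∪ Z, w s(p, q) + ∑ z ∈ Z, ∑ p ∈ I, w s(z, p) := by
        simp only [sum_union hIZ, sum_add_distrib, hswap]
        ring
    _ ≤ ∑ p ∈ I, ∑ q, w s(p, q) + ∑ z ∈ Z, ∑ q, w s(z, q) := by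
        gcongr <;> exact subset_univ _
    _ = ∑ p ∈ I ∪ Z, ∑ q, w s(p, q) := (sum_union hIZ).symm
    _ ≤ ∑ p, ∑ q, w s(p, q) := sum_le_sum_of_subset (subset_univ _)

namespace IsMatchingOn

lemma sum_biUnion_toFinset [DecidableEq V] {L : Finset (Sym2 V)} (hL : IsMatchingOn G ↑L)
    (f : V → ℕ) : ∑ z ∈ L.biUnion Sym2.toFinset, f z = ∑ e ∈ L, ∑ z ∈ e.toFinset, f z := by
  refine sum_biUnion fun e he e' he' hne ↦ disjoint_left.2 fun z hz hz' ↦ ?_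
  rw [Sym2.mem_toFinset] at hz hz'
  exact hL.2 he he' hne z hz hz'

lemma card_freeVerts_add [Fintype V] {M : Set (Sym2 V)} (hM : IsMatchingOn G M) :
    #(freeVerts M) + 2 * M.ncard = Fintype.card V := by
  classical
  have hcompl : (freeVerts M)ᶜ = M.toFinset.biUnion Sym2.toFinset := by
    ext v
    simp [mem_freeVerts]
  have hcovered : #(freeVerts M)ᶜ = 2 * M.ncard := by
    have hcard : ∀ e ∈ M.toFinset, #e.toFinset = 2 := fun e he ↦
      e.card_toFinset_of_not_isDiag <|
        G.not_isDiag_of_mem_edgeSet <| hM.1 <| Set.mem_toFinset.1 he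
    rw [hcompl, card_eq_sum_ones, sum_biUnion_toFinset (by simpa using hM)]
    simp only [← card_eq_sum_ones]
    rw [sum_const_nat hcard, Set.ncard_eq_toFinset_card', mul_comm]
  rw [← card_add_card_compl (freeVerts M), hcovered]

lemma add_two_mul_le_sum_sum [Fintype V] {w : Sym2 V → ℕ} {L : Finset (Sym2 V)} {I : Finset V}
    {c K : ℕ} (hL : IsMatchingOn G ↑L) (hdisj : ∀ e ∈ L, ∀ z ∈ e, z ∉ I)
    (hI : (I : Set V).Pairwise fun p q ↦ c ≤ w s(p, q))
    (hK : ∀ x y, s(x, y) ∈ L → K ≤ ∑ p ∈ I, w s(x, p) + ∑ p ∈ I, w s(y, p)) :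
    c * (#I * (#I - 1)) + 2 * (#L * K) ≤ ∑ p, ∑ q, w s(p, q) := by
  classical
  have hIZ : Disjoint I (L.biUnion Sym2.toFinset) := by
    simp only [disjoint_right, mem_biUnion, Sym2.mem_toFinset]
    rintro z ⟨e, he, hz⟩
    exact hdisj e he z hz
  have hedges : #L * K ≤ ∑ z ∈ L.biUnion Sym2.toFinset, ∑ p ∈ I, w s(z, p) := by
    rw [hL.sum_biUnion_toFinset, ← smul_eq_mul]
    refine card_nsmul_le_sum _ _ _ fun e he ↦ ?_
    induction e with | _ x y
    have hxy : x ≠ y := (hL.1 he : G.Adj x y).ne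
    rw [Sym2.toFinset_mk_eq, sum_pair hxy]
    exact hK x y he
  calc c * (#I * (#I - 1)) + 2 * (#L * K)
      ≤ ∑ p ∈ I, ∑ q ∈ I, w s(p, q)
        + 2 * ∑ z ∈ L.biUnion Sym2.toFinset, ∑ p ∈ I, w s(z, p) := by
        gcongr
        exact mul_card_mul_card_sub_one_le_sum_sum hI
    _ ≤ ∑ p, ∑ q, w s(p, q) := sum_sum_add_two_mul_sum_sum_le w hIZ

end IsMatchingOn

end Counting

section ErdosGallai

variable {V : Type*} {G : SimpleGraph V} {M : Set (Sym2 V)} {a b u v x y y' : V}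

open Classical in
/-- The neighbours of `x` that lie in `A`. -/
noncomputable def neighborsIn (G : SimpleGraph V) (A : Finset V) (x : V) : Finset V :=
  {v ∈ A | G.Adj x v}

lemma mem_neighborsIn {A : Finset V} : v ∈ neighborsIn G A x ↔ v ∈ A ∧ G.Adj x v := by
  simp [neighborsIn]

lemma card_sub_card_neighborsIn_le_sum_indicator {A : Finset V} (hx : x ∉ A) :
    #A - #(neighborsIn G A x) ≤ ∑ p ∈ A, Gᶜ.edgeSet.indicator (1 : Sym2 V → ℕ) s(x, p) := by
  classical
  have hnonadj : #{p ∈ A | ¬ G.Adj x p} =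
      ∑ p ∈ A, Gᶜ.edgeSet.indicator (1 : Sym2 V → ℕ) s(x, p) := by
    rw [card_filter]
    refine sum_congr rfl fun p hp ↦ ?_
    have hxp : x ≠ p := fun h ↦ hx (h ▸ hp)
    simp [Set.indicator_apply, hxp]
  have hsplit := card_filter_add_card_filter_not (s := A) (G.Adj x ·)
  rw [← hnonadj, neighborsIn]
  omega

lemma card_neighborsIn_union [DecidableEq V] {A B : Finset V} (hAB : Disjoint A B) (x : V) :
    #(neighborsIn G (A ∪ B) x) = #(neighborsIn G A x) + #(neighborsIn G B x) := by
  have hunion : neighborsIn G (A ∪ B) x = neighborsIn G A x ∪ neighborsIn G B x := by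
    ext v
    simp only [mem_neighborsIn, mem_union, or_and_right]
  rw [hunion, card_union_of_disjoint]
  exact disjoint_left.2 fun v hvA hvB ↦
    disjoint_left.1 hAB (mem_neighborsIn.1 hvA).1 (mem_neighborsIn.1 hvB).1

variable [Fintype V]

/-- A hub of a matching `M` is a vertex with at least two neighbours that `M` does not cover. -/
def IsHub (G : SimpleGraph V) (M : Set (Sym2 V)) (x : V) : Prop :=
  1 < #(neighborsIn G (freeVerts M) x)

open Classical in
/-- The partners of hubs under the matching `M`. Together with the free vertices they form an
independent set if `M` is maximum. -/
noncomputable def hubMates (G : SimpleGraph V) (M : Set (Sym2 V)) : Finset V :=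
  {y | ∃ x, IsHub G M x ∧ s(x, y) ∈ M}

lemma mem_hubMates : y ∈ hubMates G M ↔ ∃ x, IsHub G M x ∧ s(x, y) ∈ M := by
  simp [hubMates]

lemma IsHub.exists_adj_mem_freeVerts_ne (hx : IsHub G M x) (v : V) :
    ∃ u ∈ freeVerts M, u ≠ v ∧ G.Adj u x := by
  obtain ⟨u, hu, huv⟩ := exists_mem_ne hx v
  rw [mem_neighborsIn] at hu
  exact ⟨u, hu.1, huv, hu.2.symm⟩

lemma disjoint_freeVerts_hubMates : Disjoint (freeVerts M) (hubMates G M) := by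
  refine disjoint_left.2 fun v hv hvmate ↦ ?_
  obtain ⟨x, -, hxv⟩ := mem_hubMates.1 hvmate
  exact mem_freeVerts.1 hv _ hxv (Sym2.mem_mk_right x v)

namespace IsMaximumMatching

lemma not_adj_of_mem_hubMates_of_mem_freeVerts (hM : IsMaximumMatching G M)
    (hy : y ∈ hubMates G M) (hv : v ∈ freeVerts M) : ¬ G.Adj y v := by
  obtain ⟨x, hx, hxy⟩ := mem_hubMates.1 hy
  obtain ⟨u, hu, huv, hux⟩ := hx.exists_adj_mem_freeVerts_ne v
  exact hM.no_augmenting_path_one hu hv huv hux hxy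

lemma not_isHub_of_mem_hubMates (hM : IsMaximumMatching G M) (hy : y ∈ hubMates G M) :
    ¬ IsHub G M y := by
  intro hhub
  obtain ⟨v, hv, -, hvy⟩ := hhub.exists_adj_mem_freeVerts_ne y
  exact hM.not_adj_of_mem_hubMates_of_mem_freeVerts hy hv hvy.symm

lemma not_adj_of_mem_hubMates (hM : IsMaximumMatching G M) (hy : y ∈ hubMates G M)
    (hy' : y' ∈ hubMates G M) : ¬ G.Adj y y' := by
  intro hadj
  obtain ⟨x, hx, hxy⟩ := mem_hubMates.1 hy
  obtain ⟨x', hx', hxy'⟩ := mem_hubMates.1 hy'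
  obtain ⟨v, hv, -, hvx'⟩ := hx'.exists_adj_mem_freeVerts_ne y
  obtain ⟨u, hu, huv, hux⟩ := hx.exists_adj_mem_freeVerts_ne v
  have hne : s(y', x') ≠ s(x, y) := by
    intro h
    rcases Sym2.eq_iff.1 h with ⟨rfl, -⟩ | ⟨rfl, -⟩
    · exact hM.not_isHub_of_mem_hubMates hy' hx
    · exact hadj.ne rfl
  exact hM.no_augmenting_path_two hu hv huv hux hxy hadj (Sym2.eq_swap ▸ hxy') hne hvx'.symm

lemma isIndepSet_freeVerts_union_hubMates [DecidableEq V] (hM : IsMaximumMatching G M) :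
    G.IsIndepSet ↑(freeVerts M ∪ hubMates G M) := by
  intro p hp q hq _
  rw [mem_coe, mem_union] at hp hq
  rcases hp with hp | hp <;> rcases hq with hq | hq
  · exact hM.not_adj_of_mem_freeVerts hp hq
  · exact fun h ↦ hM.not_adj_of_mem_hubMates_of_mem_freeVerts hq hp h.symm
  · exact hM.not_adj_of_mem_hubMates_of_mem_freeVerts hp hq
  · exact hM.not_adj_of_mem_hubMates hp hq

lemma ncard_edges_with_hub (hM : IsMaximumMatching G M) :
    {e ∈ M | ∃ x ∈ e, IsHub G M x}.ncard = #(hubMates G M) := by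
  choose! hub hhub hmem using fun y (hy : y ∈ hubMates G M) ↦ mem_hubMates.1 hy
  rw [← Set.ncard_coe_finset, eq_comm]
  refine Set.ncard_congr (fun y _ ↦ s(hub y, y)) ?_ ?_ ?_
  · exact fun y hy ↦ ⟨hmem y hy, hub y, Sym2.mem_mk_left _ _, hhub y hy⟩
  · intro y y' hy hy' h
    rcases Sym2.eq_iff.1 h with ⟨-, h⟩ | ⟨h, -⟩
    · exact h
    · exact absurd (h ▸ hhub y hy) (hM.not_isHub_of_mem_hubMates hy')
  · rintro e ⟨he, x, hxe, hx⟩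
    obtain ⟨y, rfl⟩ := hxe
    have hy : y ∈ hubMates G M := mem_hubMates.2 ⟨x, hx, he⟩
    exact ⟨y, hy, hM.isMatchingOn.eq_of_mem (hmem y hy) he (Sym2.mem_mk_right _ _)
      (Sym2.mem_mk_right _ _)⟩

lemma not_adj_hubMate_of_adj_freeVert (hM : IsMaximumMatching G M) (hab : s(a, b) ∈ M)
    (ha : ¬ IsHub G M a) (hb : ¬ IsHub G M b) (hu : u ∈ freeVerts M) (hau : G.Adj a u)
    (hy : y ∈ hubMates G M) : ¬ G.Adj b y := by
  intro hby
  obtain ⟨x, hx, hxy⟩ := mem_hubMates.1 hy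
  obtain ⟨v, hv, hvu, hvx⟩ := hx.exists_adj_mem_freeVerts_ne u
  have hne : s(y, x) ≠ s(a, b) := by grind
  exact hM.no_augmenting_path_two hu hv hvu.symm hau.symm hab hby (Sym2.eq_swap ▸ hxy) hne
    hvx.symm

lemma eq_of_adj_hubMates (hM : IsMaximumMatching G M) (hab : s(a, b) ∈ M)
    (ha : ¬ IsHub G M a) (hb : ¬ IsHub G M b) (hy : y ∈ hubMates G M) (hy' : y' ∈ hubMates G M)
    (hay : G.Adj a y) (hby' : G.Adj b y') : y = y' := by
  by_contra hyy'
  obtain ⟨x, hx, hxy⟩ := mem_hubMates.1 hy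
  obtain ⟨x', hx', hxy'⟩ := mem_hubMates.1 hy'
  obtain ⟨v, hv, -, hvx'⟩ := hx'.exists_adj_mem_freeVerts_ne y
  obtain ⟨u, hu, huv, hux⟩ := hx.exists_adj_mem_freeVerts_ne v
  have hy'hub : ¬ IsHub G M y' := hM.not_isHub_of_mem_hubMates hy'
  have hne : s(a, b) ≠ s(x, y) := by grind
  have hne' : s(y', x') ≠ s(x, y) := by grind
  have hne'' : s(y', x') ≠ s(a, b) := by grind
  exact hM.no_augmenting_path_three hu hv huv hux hxy hay.symm hab hne hby'
    (Sym2.eq_swap ▸ hxy') hne' hne'' hvx'.symm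

lemma card_neighborsIn_add_card_neighborsIn_le [DecidableEq V] (hM : IsMaximumMatching G M)
    (hab : s(a, b) ∈ M) (ha : ¬ IsHub G M a) (hb : ¬ IsHub G M b) :
    #(neighborsIn G (freeVerts M ∪ hubMates G M) a)
      + #(neighborsIn G (freeVerts M ∪ hubMates G M) b) ≤ #(hubMates G M) + 2 := by
  have hmates (z : V) : #(neighborsIn G (hubMates G M) z) ≤ #(hubMates G M) :=
    card_le_card fun v hv ↦ (mem_neighborsIn.1 hv).1
  have hfree_mates : ∀ {a b : V}, s(a, b) ∈ M → ¬ IsHub G M a → ¬ IsHub G M b →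
      #(neighborsIn G (freeVerts M) a) = 0 ∨ #(neighborsIn G (hubMates G M) b) = 0 := by
    intro a b hab ha hb
    by_contra! hpos
    obtain ⟨u, hu⟩ := card_ne_zero.1 hpos.1
    obtain ⟨y, hy⟩ := card_ne_zero.1 hpos.2
    rw [mem_neighborsIn] at hu hy
    exact hM.not_adj_hubMate_of_adj_freeVert hab ha hb hu.1 hu.2 hy.1 hy.2
  have hmates_mates : #(neighborsIn G (hubMates G M) a) = 0 ∨
      #(neighborsIn G (hubMates G M) b) = 0 ∨
      #(neighborsIn G (hubMates G M) a) ≤ 1 ∧ #(neighborsIn G (hubMates G M) b) ≤ 1 := by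
    have heq : ∀ y ∈ neighborsIn G (hubMates G M) a, ∀ y' ∈ neighborsIn G (hubMates G M) b,
        y = y' := by
      intro y hy y' hy'
      rw [mem_neighborsIn] at hy hy'
      exact hM.eq_of_adj_hubMates hab ha hb hy.1 hy'.1 hy.2 hy'.2
    by_contra! hpos
    obtain ⟨y, hy⟩ := card_ne_zero.1 hpos.1
    obtain ⟨y', hy'⟩ := card_ne_zero.1 hpos.2.1
    have hcard_b : #(neighborsIn G (hubMates G M) b) ≤ 1 :=
      card_le_one.2 fun p hp q hq ↦ (heq y hy p hp).symm.trans (heq y hy q hq)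
    have hcard_a : #(neighborsIn G (hubMates G M) a) ≤ 1 :=
      card_le_one.2 fun p hp q hq ↦ (heq p hp y' hy').trans (heq q hq y' hy').symm
    exact (hpos.2.2 hcard_a).not_ge hcard_b
  have hfree_a : #(neighborsIn G (freeVerts M) a) ≤ 1 := not_lt.1 ha
  have hfree_b : #(neighborsIn G (freeVerts M) b) ≤ 1 := not_lt.1 hb
  have hfree_mates_ab := hfree_mates hab ha hb
  have hfree_mates_ba := hfree_mates (Sym2.eq_swap ▸ hab) hb ha
  rw [card_neighborsIn_union disjoint_freeVerts_hubMates,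
    card_neighborsIn_union disjoint_freeVerts_hubMates]
  have := hmates a
  have := hmates b
  omega

lemma card_filter_not_isHub_add_card_hubMates (hM : IsMaximumMatching G M)
    [DecidablePred (· ∈ M)] [DecidablePred fun e : Sym2 V ↦ ∀ x ∈ e, ¬ IsHub G M x] :
    #{e ∈ M.toFinset | ∀ x ∈ e, ¬ IsHub G M x} + #(hubMates G M) = M.ncard := by
  have hhub : {e ∈ M | ∃ x ∈ e, IsHub G M x} = M \ {e | ∀ x ∈ e, ¬ IsHub G M x} := by
    ext e
    simp
  have hnohub : ↑({e ∈ M.toFinset | ∀ x ∈ e, ¬ IsHub G M x} : Finset (Sym2 V)) =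
      M ∩ {e | ∀ x ∈ e, ¬ IsHub G M x} := by
    ext e
    simp
  rw [← hM.ncard_edges_with_hub, ← Set.ncard_coe_finset, hhub, hnohub,
    Set.ncard_inter_add_ncard_sdiff_eq_ncard]

lemma notMem_freeVerts_union_hubMates [DecidableEq V] (hM : IsMaximumMatching G M) {e : Sym2 V}
    (he : e ∈ M) (hhub : ∀ x ∈ e, ¬ IsHub G M x) (hv : v ∈ e) :
    v ∉ freeVerts M ∪ hubMates G M := by
  intro hmem
  rcases mem_union.1 hmem with hfree | hmate
  · exact mem_freeVerts.1 hfree e he hv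
  · obtain ⟨x, hx, hxv⟩ := mem_hubMates.1 hmate
    obtain rfl := hM.isMatchingOn.eq_of_mem hxv he (Sym2.mem_mk_right x v) hv
    exact hhub x (Sym2.mem_mk_left x v) hx

lemma exists_le_two_mul_ncard_compl_edgeSet (hM : IsMaximumMatching G M) :
    ∃ t ≤ M.ncard,
      (#(freeVerts M) + t) * (#(freeVerts M) + t - 1)
        + 2 * ((M.ncard - t) * (2 * #(freeVerts M) + t - 2)) ≤ 2 * Gᶜ.edgeSet.ncard := by
  classical
  set I := freeVerts M ∪ hubMates G M with hI
  set L := {e ∈ M.toFinset | ∀ x ∈ e, ¬ IsHub G M x} with hL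
  have hcard_I : #I = #(freeVerts M) + #(hubMates G M) :=
    card_union_of_disjoint disjoint_freeVerts_hubMates
  have hcard_L : #L + #(hubMates G M) = M.ncard := hM.card_filter_not_isHub_add_card_hubMates
  have hmem_L {e : Sym2 V} (he : e ∈ L) : e ∈ M ∧ ∀ x ∈ e, ¬ IsHub G M x := by simpa [hL] using he
  have hdisj : ∀ e ∈ L, ∀ z ∈ e, z ∉ I := fun e he z ↦
    hM.notMem_freeVerts_union_hubMates (hmem_L he).1 (hmem_L he).2
  have hindep : (I : Set V).Pairwise fun p q ↦ 1 ≤ Gᶜ.edgeSet.indicator 1 s(p, q) := by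
    intro p hp q hq hpq
    have hnadj := hM.isIndepSet_freeVerts_union_hubMates hp hq hpq
    simp [hpq, hnadj]
  have hedge (x y : V) (hxy : s(x, y) ∈ L) : 2 * #(freeVerts M) + #(hubMates G M) - 2 ≤
      ∑ p ∈ I, Gᶜ.edgeSet.indicator 1 s(x, p) + ∑ p ∈ I, Gᶜ.edgeSet.indicator 1 s(y, p) := by
    obtain ⟨hM_xy, hhub⟩ := hmem_L hxy
    have hle := hM.card_neighborsIn_add_card_neighborsIn_le hM_xy
      (hhub x (Sym2.mem_mk_left x y)) (hhub y (Sym2.mem_mk_right x y))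
    have hx := card_sub_card_neighborsIn_le_sum_indicator (G := G)
      (hdisj _ hxy x (Sym2.mem_mk_left x y))
    have hy := card_sub_card_neighborsIn_le_sum_indicator (G := G)
      (hdisj _ hxy y (Sym2.mem_mk_right x y))
    rw [← hI] at hle
    omega
  have hsum := (hM.isMatchingOn.subset fun e he ↦ (hmem_L he).1).add_two_mul_le_sum_sum
    hdisj hindep hedge
  have ht : #L = M.ncard - #(hubMates G M) := by omega
  rw [one_mul, hcard_I, ht] at hsum
  exact ⟨#(hubMates G M), by omega, hsum.trans (sum_sum_indicator_le _)⟩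

end IsMaximumMatching

lemma two_mul_add_one_choose_two (m : ℕ) : 2 * (m + 1).choose 2 = (m + 1) * m := by
  simpa [mul_comm] using (m.add_one_mul_choose_eq 1).symm

/-- For fixed `t + d` the right-hand side is concave in `t`, and the two terms of the minimum are
half its values at `t = 0` and at `d = 0`. -/
lemma two_mul_min_choose_two_le {n u t d : ℕ} (hu : 2 ≤ u) (hn : n = u + 2 * (t + d)) :
    2 * min (n.choose 2 - (2 * (t + d) + 1).choose 2) ((n - (t + d)).choose 2) ≤
      (u + t) * (u + t - 1) + 2 * (d * (2 * u + t - 2)) := by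
  obtain ⟨w, rfl⟩ := Nat.exists_eq_add_of_le' hu
  have hall := two_mul_add_one_choose_two (w + 2 * (t + d) + 1)
  have hodd := two_mul_add_one_choose_two (2 * (t + d))
  have hindep := two_mul_add_one_choose_two (w + t + d + 1)
  have hn_sub : n - (t + d) = w + t + d + 2 := by omega
  have hpred : w + 2 + t - 1 = w + t + 1 := by omega
  have hcross : 2 * (w + 2) + t - 2 = 2 * w + t + 2 := by omega
  rw [hn_sub, hpred, hcross, hn, show w + 2 + 2 * (t + d) = w + 2 * (t + d) + 1 + 1 by ring]
  rcases le_or_gt d (2 * w + 1) with hd | hd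
  · refine (Nat.mul_le_mul_left 2 (min_le_right _ _)).trans ?_
    nlinarith [Nat.mul_le_mul_left d hd]
  · refine (Nat.mul_le_mul_left 2 (min_le_left _ _)).trans ?_
    rw [Nat.mul_sub]
    refine Nat.sub_le_of_le_add ?_
    nlinarith [Nat.mul_le_mul_left t hd.le]

/-- The Erdős–Gallai matching theorem, phrased in terms of the missing edges: the two bounds are
attained by a clique on `2 * s + 1` vertices and by the join of a clique on `s` vertices with an
independent set. -/
theorem min_choose_two_le_ncard_compl_edgeSet {s : ℕ}
    (hG : ∀ M, IsMatchingOn G M → M.ncard ≤ s) :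
    min ((Fintype.card V).choose 2 - (2 * s + 1).choose 2) ((Fintype.card V - s).choose 2) ≤
      Gᶜ.edgeSet.ncard := by
  rcases le_or_gt (Fintype.card V) (2 * s + 1) with hsmall | hlarge
  · simp [Nat.sub_eq_zero_of_le (Nat.choose_le_choose 2 hsmall)]
  obtain ⟨M, hM⟩ := exists_isMaximumMatching G
  have hMs : M.ncard ≤ s := hG M hM.isMatchingOn
  have hn := hM.isMatchingOn.card_freeVerts_add
  obtain ⟨t, ht, hcount⟩ := hM.exists_le_two_mul_ncard_compl_edgeSet
  obtain ⟨d, hd⟩ := Nat.exists_eq_add_of_le ht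
  rw [hd] at hn hcount hMs
  rw [Nat.add_sub_cancel_left] at hcount
  calc min ((Fintype.card V).choose 2 - (2 * s + 1).choose 2) ((Fintype.card V - s).choose 2)
      ≤ min ((Fintype.card V).choose 2 - (2 * (t + d) + 1).choose 2)
        ((Fintype.card V - (t + d)).choose 2) := by gcongr
    _ ≤ Gᶜ.edgeSet.ncard := by
        have := two_mul_min_choose_two_le (u := #(freeVerts M)) (by omega) hn.symm
        omega

end ErdosGallai

section GoodMatching

variable {V : Type*}

lemma two_mul_card_le_sum_add_of_exists_eq_zero {U : Finset V} {f g : V → ℕ} (hU : 3 ≤ #U)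
    (hfg : (U : Set V).Pairwise fun p q ↦ f p = 0 → 2 ≤ g q) (hf : ∃ p ∈ U, f p = 0) :
    2 * #U ≤ ∑ p ∈ U, (f p + g p) := by
  classical
  obtain ⟨p, hp, hfp⟩ := hf
  by_cases hsecond : ∃ q ∈ U, q ≠ p ∧ f q = 0
  · obtain ⟨q, hq, hqp, hfq⟩ := hsecond
    rw [mul_comm, ← smul_eq_mul]
    refine card_nsmul_le_sum _ _ _ fun a ha ↦ ?_
    by_cases hap : a = p
    · exact (hfg hq ha (hap ▸ hqp) hfq).trans (Nat.le_add_left ..)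
    · exact (hfg hp ha (Ne.symm hap) hfp).trans (Nat.le_add_left ..)
  · push Not at hsecond
    have hthree : #(U.erase p) * 3 ≤ ∑ a ∈ U.erase p, (f a + g a) := by
      rw [← smul_eq_mul]
      refine card_nsmul_le_sum _ _ _ fun a ha ↦ ?_
      obtain ⟨hap, ha⟩ := mem_erase.1 ha
      have hfa := hsecond a ha hap
      have hga := hfg hp ha hap.symm hfp
      omega
    have hle := sum_le_sum_of_subset (f := fun a ↦ f a + g a) (erase_subset p U)
    rw [card_erase_of_mem hp] at hthree
    omega

lemma two_mul_card_le_sum_add {U : Finset V} {f g : V → ℕ} (hU : 3 ≤ #U)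
    (hfg : (U : Set V).Pairwise fun p q ↦ f p = 0 → 2 ≤ g q)
    (hgf : (U : Set V).Pairwise fun p q ↦ g p = 0 → 2 ≤ f q) :
    2 * #U ≤ ∑ p ∈ U, (f p + g p) := by
  by_cases hf : ∃ p ∈ U, f p = 0
  · exact two_mul_card_le_sum_add_of_exists_eq_zero hU hfg hf
  by_cases hg : ∃ p ∈ U, g p = 0
  · simpa only [add_comm] using two_mul_card_le_sum_add_of_exists_eq_zero hU hgf hg
  push Not at hf hg
  rw [mul_comm, ← smul_eq_mul]
  refine card_nsmul_le_sum _ _ _ fun a ha ↦ ?_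
  have hfa := hf a ha
  have hga := hg a ha
  omega

/-- The cost of an edge: `1` if it is in `E1`, `2` if it is in `E2`. -/
noncomputable def edgeWeight (E1 E2 : Set (Sym2 V)) (e : Sym2 V) : ℕ :=
  E1.indicator 1 e + 2 * E2.indicator 1 e

/-- The graph of the edges that lie neither in `E1` nor in `E2`, that is, of the edges in `E0`. -/
def weightZeroGraph (E1 E2 : Set (Sym2 V)) : SimpleGraph V := (SimpleGraph.fromEdgeSet (E1 ∪ E2))ᶜ

variable {E1 E2 : Set (Sym2 V)}

lemma weightZeroGraph_adj_of_edgeWeight_eq_zero {x y : V} (hxy : x ≠ y)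
    (h : edgeWeight E1 E2 s(x, y) = 0) : (weightZeroGraph E1 E2).Adj x y := by
  simp_all [edgeWeight, weightZeroGraph]

lemma disjoint_edgeSet_weightZeroGraph : Disjoint (weightZeroGraph E1 E2).edgeSet (E1 ∪ E2) := by
  refine Set.disjoint_left.2 fun e he heE ↦ ?_
  induction e with | _ x y
  have hne : x ≠ y := ((SimpleGraph.mem_edgeSet _).1 he).ne
  simp_all [weightZeroGraph]

lemma ncard_edgeSet_compl_weightZeroGraph_le [Finite V] :
    (weightZeroGraph E1 E2)ᶜ.edgeSet.ncard ≤ E1.ncard + E2.ncard := by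
  rw [weightZeroGraph, compl_compl, SimpleGraph.edgeSet_fromEdgeSet]
  exact (Set.ncard_le_ncard Set.sdiff_subset).trans (Set.ncard_union_le E1 E2)

variable [Fintype V] {G : SimpleGraph V} {M : Set (Sym2 V)} {r : ℕ}

/-- If the matching edge `xy` has an end `x` joined to a free vertex by an edge of weight `0`, an
exchange makes `y` free, so `y` sends weight at least `2` to every other free vertex. -/
lemma two_mul_card_freeVerts_mul_le_sum_sum {w : Sym2 V → ℕ} (hM : IsMatchingOn G M)
    (hw : ∀ x y, x ≠ y → w s(x, y) = 0 → G.Adj x y) (hfree : 3 ≤ #(freeVerts M))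
    (hheavy : ∀ M', IsMatchingOn G M' → M'.ncard = M.ncard →
      (freeVerts M' : Set V).Pairwise fun p q ↦ 2 ≤ w s(p, q)) :
    2 * (#(freeVerts M) * (Fintype.card V - 1)) ≤ ∑ p, ∑ q, w s(p, q) := by
  classical
  have hexch (x y : V) (hxy : s(x, y) ∈ M) :
      (freeVerts M : Set V).Pairwise fun p q ↦ w s(x, p) = 0 → 2 ≤ w s(y, q) := by
    intro p hp q hq hpq hxp
    have hne : x ≠ p := ne_of_mem_freeVerts hp hxy (Sym2.mem_mk_left x y)
    have hyq : y ≠ q := ne_of_mem_freeVerts hq hxy (Sym2.mem_mk_right x y)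
    exact hheavy _ (hM.exchange hp hxy (hw x p hne hxp).symm) (ncard_exchangeEdge hp hxy)
      (hM.mem_freeVerts_exchangeEdge_self hp hxy) (mem_freeVerts_exchangeEdge hxy hq hpq) hyq
  have hedge (x y : V) (hxy : s(x, y) ∈ M.toFinset) : 2 * #(freeVerts M) ≤
      ∑ p ∈ freeVerts M, w s(x, p) + ∑ p ∈ freeVerts M, w s(y, p) := by
    rw [Set.mem_toFinset] at hxy
    rw [← sum_add_distrib]
    exact two_mul_card_le_sum_add hfree (hexch x y hxy) (hexch y x (Sym2.eq_swap ▸ hxy))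
  have hsum := IsMatchingOn.add_two_mul_le_sum_sum (L := M.toFinset) (by simpa using hM)
    (fun e he z hz hzM ↦ mem_freeVerts.1 hzM e (Set.mem_toFinset.1 he) hz)
    (hheavy M hM rfl) hedge
  have hn : Fintype.card V - 1 = #(freeVerts M) - 1 + 2 * M.ncard := by
    have := hM.card_freeVerts_add
    omega
  calc 2 * (#(freeVerts M) * (Fintype.card V - 1))
      = 2 * (#(freeVerts M) * (#(freeVerts M) - 1)) + 2 * (M.ncard * (2 * #(freeVerts M))) := by
        rw [hn]
        ring
    _ ≤ ∑ p, ∑ q, w s(p, q) := by rwa [Set.ncard_eq_toFinset_card']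

lemma sum_sum_edgeWeight_le :
    ∑ p, ∑ q, edgeWeight E1 E2 s(p, q) ≤ 2 * (E1.ncard + 2 * E2.ncard) := by
  have hE1 := sum_sum_indicator_le E1
  have hE2 := sum_sum_indicator_le E2
  simp only [edgeWeight, sum_add_distrib, ← mul_sum]
  omega

lemma exists_isMatchingOn_weightZeroGraph
    (hE : E1.ncard + E2.ncard <
      min ((Fintype.card V).choose 2 - (2 * r - 1).choose 2) ((Fintype.card V + 1 - r).choose 2)) :
    ∃ M, IsMatchingOn (weightZeroGraph E1 E2) M ∧ M.ncard = r := by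
  obtain ⟨M, hM⟩ := exists_isMaximumMatching (weightZeroGraph E1 E2)
  suffices hr : r ≤ M.ncard by
    obtain ⟨M', hM', hcard⟩ := Set.exists_subset_card_eq hr
    exact ⟨M', hM.isMatchingOn.subset hM', hcard⟩
  by_contra! hr
  have hEG := min_choose_two_le_ncard_compl_edgeSet (s := r - 1) fun M' hM' ↦
    (hM.ncard_le M' hM').trans (Nat.le_sub_one_of_lt hr)
  rw [show 2 * (r - 1) + 1 = 2 * r - 1 by omega,
    show Fintype.card V - (r - 1) = Fintype.card V + 1 - r by omega] at hEG
  exact absurd (hEG.trans ncard_edgeSet_compl_weightZeroGraph_le) hE.not_ge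

lemma exists_good_matching_of_edgeWeight_le_one {x y : V}
    (hM : IsMatchingOn (weightZeroGraph E1 E2) M) (hx : x ∈ freeVerts M) (hy : y ∈ freeVerts M)
    (hxy : x ≠ y) (hw : edgeWeight E1 E2 s(x, y) ≤ 1) :
    ∃ N, IsMatchingOn (⊤ : SimpleGraph V) N ∧ N.ncard = M.ncard + 1 ∧ N ∩ E2 = ∅ ∧
      (N ∩ E1).ncard ≤ 1 := by
  obtain ⟨hM1, hM2⟩ := Set.disjoint_union_right.1 (disjoint_edgeSet_weightZeroGraph.mono_left hM.1)
  have hxyE2 : s(x, y) ∉ E2 := by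
    intro h
    simp [edgeWeight, h] at hw
  refine ⟨insert s(x, y) M, (hM.mono le_top).insert hx hy hxy,
    Set.ncard_insert_of_notMem (mk_notMem_of_mem_freeVerts hx), ?_, ?_⟩
  · rw [Set.insert_inter_of_notMem hxyE2, hM2.inter_eq]
  · calc (insert s(x, y) M ∩ E1).ncard ≤ ({s(x, y)} : Set (Sym2 V)).ncard :=
          Set.ncard_le_ncard <| by
            rw [Set.insert_eq, Set.union_inter_distrib_right, hM1.inter_eq, Set.union_empty]
            exact Set.inter_subset_left
      _ = 1 := Set.ncard_singleton _

theorem stmt_12_general (hr : 2 * r < Fintype.card V)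
    (hE0 : E1.ncard + E2.ncard <
      min ((Fintype.card V).choose 2 - (2 * r - 3).choose 2) ((Fintype.card V + 2 - r).choose 2))
    (hE : E1.ncard + 2 * E2.ncard < (Fintype.card V + 2 - 2 * r) * (Fintype.card V - 1)) :
    ∃ M, IsMatchingOn (⊤ : SimpleGraph V) M ∧ M.ncard = r ∧ M ∩ E2 = ∅ ∧
      (M ∩ E1).ncard ≤ 1 := by
  rcases r with _ | s
  · exact ⟨∅, ⟨Set.empty_subset _, Set.pairwise_empty _⟩, by simp⟩
  rw [show 2 * (s + 1) - 3 = 2 * s - 1 by omega,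
    show Fintype.card V + 2 - (s + 1) = Fintype.card V + 1 - s by omega] at hE0
  obtain ⟨M, hM, rfl⟩ := exists_isMatchingOn_weightZeroGraph hE0
  by_contra hbad
  have hfree : #(freeVerts M) = Fintype.card V + 2 - 2 * (M.ncard + 1) := by
    have := hM.card_freeVerts_add
    omega
  have hheavy (M' : Set (Sym2 V)) (hM' : IsMatchingOn (weightZeroGraph E1 E2) M')
      (hcard : M'.ncard = M.ncard) :
      (freeVerts M' : Set V).Pairwise fun p q ↦ 2 ≤ edgeWeight E1 E2 s(p, q) := by
    intro p hp q hq hpq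
    by_contra! hw
    exact hbad <| hcard ▸
      exists_good_matching_of_edgeWeight_le_one hM' hp hq hpq (Nat.le_of_lt_succ hw)
  have hsum := two_mul_card_freeVerts_mul_le_sum_sum hM
    (fun _ _ ↦ weightZeroGraph_adj_of_edgeWeight_eq_zero) (by omega) hheavy
  have hle := hsum.trans sum_sum_edgeWeight_le
  rw [hfree] at hle
  omega

end GoodMatching

lemma mul_le_two_mul_min_choose_two {r k : ℕ} (hk : r < k) (hk2 : 2 * k + 7 ≤ 3 * r) :
    (k + 3 * r - 4) * (k - r + 3) ≤
      2 * min ((r + k).choose 2 - (2 * r - 3).choose 2) ((r + k + 2 - r).choose 2) := by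
  obtain ⟨d, rfl⟩ := Nat.exists_eq_add_of_le hk.le
  obtain ⟨q, rfl⟩ : ∃ q, r = q + 2 := Nat.exists_eq_add_of_le' (by omega)
  have hq : 2 * d + 5 ≤ q := by omega
  have hall := two_mul_add_one_choose_two (2 * q + d + 3)
  have hodd := two_mul_add_one_choose_two (2 * q)
  have hindep := two_mul_add_one_choose_two (q + d + 3)
  rw [show q + 2 + d + 3 * (q + 2) - 4 = 4 * q + d + 4 by omega,
    show q + 2 + d - (q + 2) + 3 = d + 3 by omega,
    show q + 2 + (q + 2 + d) = 2 * q + d + 3 + 1 by omega,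
    show 2 * (q + 2) - 3 = 2 * q + 1 by omega,
    show 2 * q + d + 3 + 1 + 2 - (q + 2) = q + d + 3 + 1 by omega, ← Nat.mul_min_mul_left]
  refine le_min ?_ ?_
  · rw [Nat.mul_sub]
    refine Nat.le_sub_of_add_le ?_
    linarith
  · nlinarith [Nat.mul_le_mul_left q hq]

/-- for r < k ≤ (3r-7)/2 and
|E1|+2|E2| < min{(k+3r-4)(k-r+3)/2, (k-r+2)(k+r-1)}, the complete graph on r+k
vertices has a good matching of order r. (Inequalities are scaled by 2.) -/
theorem stmt_12 (r k : ℕ) (hr : 1 ≤ r) (hk : r < k) (hk2 : 2 * k + 7 ≤ 3 * r)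
    (E0 E1 E2 : Set (Sym2 (Fin (r + k))))
    (hpart : (⊤ : SimpleGraph (Fin (r + k))).edgeSet = E0 ∪ E1 ∪ E2)
    (h01 : Disjoint E0 E1) (h02 : Disjoint E0 E2) (h12 : Disjoint E1 E2)
    (hE : 2 * (E1.ncard + 2 * E2.ncard) <
      min ((k + 3 * r - 4) * (k - r + 3)) (2 * ((k - r + 2) * (k + r - 1)))) :
    ∃ M : Set (Sym2 (Fin (r + k))), IsMatchingOn (⊤ : SimpleGraph (Fin (r + k))) M ∧
      M.ncard = r ∧ M ∩ E2 = ∅ ∧ (M ∩ E1).ncard ≤ 1 := by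
  have hEG := mul_le_two_mul_min_choose_two hk hk2
  have hexch : (k - r + 2) * (k + r - 1) = (r + k + 2 - 2 * r) * (r + k - 1) := by
    congr 1 <;> omega
  apply stmt_12_general <;> rw [Fintype.card_fin] <;> omega
end

section
/- Let r and k be positive integers with k > r, let H be the complete graph on r+k vertices, and let (E_0, E_1, E_2) be an ordered partition of E(H). Suppose k > (3r−7)/2 and |E_1| + 2|E_2| < min{ (k+1)(k+2)/2, (k−r+2)(k+r−1) }. Then H has a matching M of order r with M ∩ E_2 = ∅ and |M ∩ E_1| ≤ 1. -/
/-!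
Let `G` be the graph of the edges outside `E₁ ∪ E₂` and `H` that of the edges outside `E₂`, so that
`|E₁| + 2|E₂|` is the number of non-edges of `G` plus that of `H`. A good matching of order `r`
arises by adding an edge of `H` to a matching of `G` of order `r - 1`.

Suppose that `G` has a matching of order `r - 1`, but none that leaves two `H`-adjacent vertices
uncovered. Give a pair weight 2 if it is a non-edge of `H`, weight 1 if it is a non-edge of `G`
only, and weight 0 otherwise. Then any two of the `k - r + 2` uncovered vertices form a pair of
weight 2. If a matching edge `ab` has a pair `as` of weight 0 with `s` uncovered, exchanging `ab`
for `as` shows that `bt` has weight 2 for every other uncovered `t`; so on average an uncovered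
vertex sends weight at least 2 to `ab`, and the total weight is at least `(k - r + 2)(k + r - 1)`.

Otherwise all matchings of `G` have order at most `r - 2`, and the Erdős–Gallai theorem yields at
least `(k + 2).choose 2` non-edges of `G`. That theorem follows by induction, deleting a vertex
covered by all maximum matchings. If there is none, any maximum matching leaves uncovered at most
one neighbour of each vertex `y`, since one leaving two of them uncovered could be switched along an
alternating path with a maximum matching missing `y`; summing degrees gives the clique bound.
-/

section Involutions

open Equiv Perm

lemma semiconjBy_mul_inv_of_mul_self {G : Type*} [Group G] {a b : G} (ha : a * a = 1)
    (hb : b * b = 1) : SemiconjBy a (a * b) (a * b)⁻¹ := by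
  rw [SemiconjBy, mul_inv_rev, inv_mul_cancel_right, ← mul_assoc, ha, one_mul,
    inv_eq_of_mul_eq_one_left hb]

variable {α : Type*} {σ τ : Perm α} {x y z : α}

lemma sameCycle_mul_apply_left_iff (hσ : Function.Involutive σ) (hτ : Function.Involutive τ)
    (hy : τ y = y) (t : α) : (σ * τ).SameCycle y (σ t) ↔ (σ * τ).SameCycle y t := by
  suffices himp : ∀ t, (σ * τ).SameCycle y t → (σ * τ).SameCycle y (σ t) from
    ⟨fun h => hσ t ▸ himp _ h, himp t⟩
  rintro _ ⟨n, rfl⟩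
  have hflip : σ (((σ * τ) ^ n) y) = ((σ * τ) ^ (-n)) ((σ * τ) y) := by
    have hcomm : σ * (σ * τ) ^ n = (σ * τ)⁻¹ ^ n * σ :=
      (semiconjBy_mul_inv_of_mul_self (Perm.ext hσ) (Perm.ext hτ)).zpow_right n
    rw [zpow_neg, ← inv_zpow, Perm.mul_apply σ τ, hy]
    exact Perm.congr_fun hcomm y
  rw [hflip, sameCycle_zpow_right, sameCycle_apply_right]

lemma sameCycle_mul_apply_right_iff (hσ : Function.Involutive σ) (hτ : Function.Involutive τ)
    (hy : τ y = y) (t : α) : (σ * τ).SameCycle y (τ t) ↔ (σ * τ).SameCycle y t := by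
  rw [← sameCycle_mul_apply_left_iff hσ hτ hy (τ t), ← Perm.mul_apply, sameCycle_apply_right]

/- With `g = σ * τ`, the fixed points give `g ^ (2 * n) x = x` and `g ^ (2 * i + 1) x = x`, where
`z = g ^ n x` and `y = g ^ i x`; as `n = (2 * i + 1) * n - 2 * n * i`, also `g ^ n x = x`. -/
lemma eq_of_sameCycle_mul (hσ : Function.Involutive σ) (hτ : Function.Involutive τ)
    (hy : τ y = y) (hx : σ x = x) (hz : σ z = z) (hxy : (σ * τ).SameCycle x y)
    (hxz : (σ * τ).SameCycle x z) : x = z := by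
  obtain ⟨i, rfl⟩ := hxy
  obtain ⟨n, rfl⟩ := hxz
  set g := σ * τ with hg
  have hflip (j : ℤ) : σ ((g ^ j) x) = (g ^ (-j)) x := by
    have hcomm : σ * g ^ j = g⁻¹ ^ j * σ :=
      (semiconjBy_mul_inv_of_mul_self (Perm.ext hσ) (Perm.ext hτ)).zpow_right j
    rw [← Perm.mul_apply, hcomm, Perm.mul_apply, hx, inv_zpow, zpow_neg]
  have heven : (g ^ (2 * n)) x = x := by
    rw [two_mul, zpow_add, Perm.mul_apply, ← hz, hflip, ← Perm.mul_apply, ← zpow_add,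
      add_neg_cancel, zpow_zero, Perm.one_apply]
  have hodd : (g ^ (2 * i + 1)) x = x := by
    have hnext : (g ^ (i + 1)) x = (g ^ (-i)) x := by
      rw [← hflip, ← hy, add_comm, zpow_one_add, Perm.mul_apply, hg, Perm.mul_apply]
    rw [two_mul, add_assoc, zpow_add, Perm.mul_apply, hnext, ← Perm.mul_apply, ← zpow_add,
      add_neg_cancel, zpow_zero, Perm.one_apply]
  have hcomb : n = (2 * i + 1) * n + 2 * n * -i := by ring
  rw [hcomb, zpow_add, Perm.mul_apply, zpow_mul, zpow_mul,
    zpow_apply_eq_self_of_apply_eq_self heven, zpow_apply_eq_self_of_apply_eq_self hodd]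

variable [DecidableEq α]

lemma disjoint_swap (hx : σ x = x) (hy : σ y = y) : Perm.Disjoint σ (swap x y) := fun t => by
  by_cases h : t = x ∨ t = y
  · rcases h with rfl | rfl
    exacts [Or.inl hx, Or.inl hy]
  · rw [not_or] at h
    exact Or.inr (swap_apply_of_ne_of_ne h.1 h.2)

lemma card_support_mul_swap [Fintype α] (hx : σ x = x) (hy : σ y = y) (hxy : x ≠ y) :
    (σ * swap x y).support.card = σ.support.card + 2 := by
  rw [(disjoint_swap hx hy).card_support_mul, card_support_swap hxy]

end Involutions

section MatchingPerm

open Equiv Finset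

/-- A matching of `G` encoded as the involution exchanging the ends of each of its edges and fixing
the uncovered vertices; a matching of order `m` thus has a support of `2 * m` vertices. -/
structure IsMatchingPerm {V : Type*} (G : SimpleGraph V) (σ : Perm V) : Prop where
  involutive : Function.Involutive σ
  adj : ∀ x, σ x ≠ x → G.Adj x (σ x)

namespace IsMatchingPerm

variable {V : Type*} {G : SimpleGraph V} {σ τ : Perm V}

protected lemma one (G : SimpleGraph V) : IsMatchingPerm G 1 :=
  ⟨fun _ => rfl, fun _ hx => absurd rfl hx⟩

lemma of_induce {s : Set V} [DecidablePred (· ∈ s)] {σ : Perm s}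
    (hσ : IsMatchingPerm (G.induce s) σ) : IsMatchingPerm G (Perm.ofSubtype σ) := by
  refine ⟨fun x => ?_, fun x hx => ?_⟩
  · have hsq : σ * σ = 1 := Perm.ext hσ.involutive
    rw [← Perm.mul_apply, ← map_mul, hsq, map_one, Perm.one_apply]
  · have hxs : x ∈ s := by_contra fun h => hx (Perm.ofSubtype_apply_of_not_mem σ h)
    rw [Perm.ofSubtype_apply_of_mem σ hxs] at hx ⊢
    exact hσ.adj ⟨x, hxs⟩ fun h => hx (congrArg Subtype.val h)

lemma exists_piecewise (hσ : IsMatchingPerm G σ) (hτ : IsMatchingPerm G τ) {p : V → Prop}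
    (hpσ : ∀ x, p (σ x) ↔ p x) (hpτ : ∀ x, p (τ x) ↔ p x) :
    ∃ ρ, IsMatchingPerm G ρ ∧ (∀ x, p x → ρ x = σ x) ∧ ∀ x, ¬ p x → ρ x = τ x := by
  classical
  let f : V → V := fun x => if p x then σ x else τ x
  have hf : Function.Involutive f := fun x => by
    by_cases hx : p x
    · simp [f, hx, hpσ, hσ.involutive x]
    · simp [f, hx, hpτ, hτ.involutive x]
  have hin (x : V) (hx : p x) : f x = σ x := if_pos hx
  have hout (x : V) (hx : ¬ p x) : f x = τ x := if_neg hx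
  refine ⟨hf.toPerm f, ⟨hf, fun x hne => ?_⟩, hin, hout⟩
  rw [Function.Involutive.coe_toPerm] at hne ⊢
  by_cases hx : p x
  · rw [hin x hx] at hne ⊢
    exact hσ.adj x hne
  · rw [hout x hx] at hne ⊢
    exact hτ.adj x hne

variable [DecidableEq V]

lemma mul_swap (hσ : IsMatchingPerm G σ) {x y : V} (hx : σ x = x) (hy : σ y = y) :
    IsMatchingPerm (G ⊔ SimpleGraph.edge x y) (σ * swap x y) := by
  refine ⟨fun t => ?_, fun t ht => ?_⟩
  · have hcomm : σ * swap x y = swap x y * σ := (disjoint_swap hx hy).commute.eq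
    rw [← Perm.mul_apply, hcomm, ← mul_assoc, mul_assoc _ σ, hcomm]
    simp [hσ.involutive t]
  · rw [SimpleGraph.sup_adj, SimpleGraph.edge_adj]
    rw [Perm.mul_apply] at ht ⊢
    obtain rfl | htx := eq_or_ne t x
    · rw [swap_apply_left, hy] at ht ⊢
      exact Or.inr ⟨by simp, ht.symm⟩
    obtain rfl | hty := eq_or_ne t y
    · rw [swap_apply_right, hx] at ht ⊢
      exact Or.inr ⟨by simp, ht.symm⟩
    rw [swap_apply_of_ne_of_ne htx hty] at ht ⊢
    exact Or.inl (hσ.adj t ht)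

lemma mul_swap_of_adj (hσ : IsMatchingPerm G σ) {x y : V} (hx : σ x = x) (hy : σ y = y)
    (hxy : G.Adj x y) : IsMatchingPerm G (σ * swap x y) :=
  G.sup_edge_of_adj hxy ▸ hσ.mul_swap hx hy

lemma mul_swap_apply (hσ : IsMatchingPerm G σ) (a : V) :
    IsMatchingPerm G (σ * swap a (σ a)) := by
  refine ⟨fun t => ?_, fun t ht => ?_⟩
  · have hcomm : σ * swap a (σ a) = swap a (σ a) * σ := by
      rw [Equiv.mul_swap_eq_swap_mul, hσ.involutive a, swap_comm]
    rw [← Perm.mul_apply, hcomm, ← mul_assoc, mul_assoc _ σ, hcomm]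
    simp [hσ.involutive t]
  · rw [Perm.mul_apply] at ht ⊢
    have hta : t ≠ a := by
      rintro rfl
      exact ht (by rw [swap_apply_left, hσ.involutive])
    have htσa : t ≠ σ a := by
      rintro rfl
      exact ht (by rw [swap_apply_right])
    rw [swap_apply_of_ne_of_ne hta htσa] at ht ⊢
    exact hσ.adj t ht

variable [Fintype V]

lemma even_card_support (hσ : IsMatchingPerm G σ) : Even #σ.support :=
  even_iff_two_dvd.2 <| Perm.two_dvd_card_support <| (sq σ).trans (Perm.ext hσ.involutive)

lemma card_support_mul_swap_apply (hσ : IsMatchingPerm G σ) {a : V} (ha : σ a ≠ a) :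
    #(σ * swap a (σ a)).support + 2 = #σ.support := by
  have hfix_left : (σ * swap a (σ a)) a = a := by simp [hσ.involutive a]
  have hfix_right : (σ * swap a (σ a)) (σ a) = σ a := by simp
  rw [← card_support_mul_swap hfix_left hfix_right ha.symm, mul_swap_mul_self]

lemma exists_card_support_eq (hσ : IsMatchingPerm G σ) {m : ℕ} (hm : 2 * m ≤ #σ.support) :
    ∃ τ, IsMatchingPerm G τ ∧ #τ.support = 2 * m := by
  induction h : #σ.support using Nat.strong_induction_on generalizing σ with
  | _ c ih =>
    obtain heq | hlt := hm.eq_or_lt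
    · exact ⟨σ, hσ, heq.symm⟩
    obtain ⟨a, ha⟩ : σ.support.Nonempty := card_pos.1 (by omega)
    have hcard := hσ.card_support_mul_swap_apply (Perm.mem_support.1 ha)
    have heven := hσ.even_card_support
    exact ih _ (by omega) (hσ.mul_swap_apply a) (by grind) rfl

/- Replaces the edge `a (σ a)` of the matching by `a s`. -/
lemma exists_exchange (hσ : IsMatchingPerm G σ) {a s : V} (ha : σ a ≠ a) (hs : σ s = s)
    (has : G.Adj a s) : ∃ τ, IsMatchingPerm G τ ∧ #τ.support = #σ.support ∧
      τ (σ a) = σ a ∧ ∀ t, σ t = t → t ≠ s → τ t = t := by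
  have hne {t : V} (ht : σ t = t) : t ≠ a ∧ t ≠ σ a := by
    constructor <;> rintro rfl
    · exact ha ht
    · exact ha (ht.symm.trans (hσ.involutive a))
  have hfix {t : V} (ht : σ t = t) : (σ * swap a (σ a)) t = t := by
    rw [Perm.mul_apply, swap_apply_of_ne_of_ne (hne ht).1 (hne ht).2, ht]
  have hfix_a : (σ * swap a (σ a)) a = a := by simp [hσ.involutive a]
  refine ⟨σ * swap a (σ a) * swap a s, ?_, ?_, ?_, fun t ht hts => ?_⟩
  · exact (hσ.mul_swap_apply a).mul_swap_of_adj hfix_a (hfix hs) has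
  · rw [card_support_mul_swap hfix_a (hfix hs) has.ne, hσ.card_support_mul_swap_apply ha]
  · rw [Perm.mul_apply, swap_apply_of_ne_of_ne ha (hne hs).2.symm]
    simp
  · rw [Perm.mul_apply, swap_apply_of_ne_of_ne (hne ht).1 hts, hfix ht]

end IsMatchingPerm

/-- A matching of maximum order, in the encoding of `IsMatchingPerm`. -/
structure IsMaximumMatchingPerm {V : Type*} [Fintype V] [DecidableEq V] (G : SimpleGraph V)
    (σ : Perm V) : Prop extends IsMatchingPerm G σ where
  card_support_le : ∀ τ, IsMatchingPerm G τ → #τ.support ≤ #σ.support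

namespace IsMaximumMatchingPerm

variable {V : Type*} [Fintype V] [DecidableEq V] {G : SimpleGraph V} {σ τ : Perm V}

lemma exists_of_graph (G : SimpleGraph V) : ∃ σ, IsMaximumMatchingPerm G σ := by
  classical
  obtain ⟨σ, hσ, hmax⟩ := exists_max_image {σ : Perm V | IsMatchingPerm G σ} (#·.support)
    ⟨1, by simpa using IsMatchingPerm.one G⟩
  simp only [mem_filter_univ] at hσ hmax
  exact ⟨σ, hσ, hmax⟩

lemma card_support_eq (hσ : IsMaximumMatchingPerm G σ) (hτ : IsMaximumMatchingPerm G τ) :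
    #σ.support = #τ.support :=
  le_antisymm (hτ.card_support_le σ hσ.toIsMatchingPerm) (hσ.card_support_le τ hτ.toIsMatchingPerm)

lemma not_adj (hσ : IsMaximumMatchingPerm G σ) {x y : V} (hx : σ x = x) (hy : σ y = y) :
    ¬ G.Adj x y := fun hxy => by
  have hle := hσ.card_support_le _ (hσ.mul_swap_of_adj hx hy hxy)
  rw [card_support_mul_swap hx hy hxy.ne] at hle
  omega

/- Switch `σ` to `τ` along the alternating path from `y`, the cycle of `σ * τ` through `y`: it ends
in at most one vertex uncovered by `σ`. -/
lemma exists_switch (hσ : IsMaximumMatchingPerm G σ) (hτ : IsMaximumMatchingPerm G τ)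
    {x y z : V} (hx : σ x = x) (hz : σ z = z) (hxz : x ≠ z) (hy : τ y = y) :
    ∃ ρ, IsMaximumMatchingPerm G ρ ∧ ρ y = y ∧ (ρ x = x ∨ ρ z = z) := by
  let p (t : V) : Prop := (σ * τ).SameCycle y t
  have hpσ : ∀ t, p (σ t) ↔ p t := sameCycle_mul_apply_left_iff hσ.involutive hτ.involutive hy
  have hpτ : ∀ t, p (τ t) ↔ p t := sameCycle_mul_apply_right_iff hσ.involutive hτ.involutive hy
  obtain ⟨ρ, hρ, hρ_in, hρ_out⟩ :=
    hτ.toIsMatchingPerm.exists_piecewise hσ.toIsMatchingPerm hpτ hpσ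
  obtain ⟨ρ', hρ', hρ'_in, hρ'_out⟩ :=
    hσ.toIsMatchingPerm.exists_piecewise hτ.toIsMatchingPerm hpσ hpτ
  have hcard : #ρ.support + #ρ'.support = #σ.support + #τ.support := by
    simp only [Perm.support, card_filter, ← sum_add_distrib]
    refine sum_congr rfl fun t _ => ?_
    by_cases ht : p t
    · rw [hρ_in t ht, hρ'_in t ht, add_comm]
    · rw [hρ_out t ht, hρ'_out t ht]
  refine ⟨ρ, ⟨hρ, fun υ hυ => ?_⟩, (hρ_in y .rfl).trans hy, ?_⟩
  · have hυ_le := hτ.card_support_le υ hυ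
    have hρ'_le := hσ.card_support_le ρ' hρ'
    omega
  · by_cases hpx : p x
    · have hpz : ¬ p z := fun hpz => hxz <|
        eq_of_sameCycle_mul hσ.involutive hτ.involutive hy hx hz hpx.symm (hpx.symm.trans hpz)
      exact Or.inr ((hρ_out z hpz).trans hz)
    · exact Or.inl ((hρ_out x hpx).trans hx)

variable [DecidableRel G.Adj]

lemma degree_le_card_support (hσ : IsMaximumMatchingPerm G σ) {x : V} (hx : σ x = x) :
    G.degree x ≤ #σ.support := by
  rw [← SimpleGraph.card_neighborFinset_eq_degree]
  exact card_le_card fun y hxy =>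
    Perm.mem_support.2 fun hy => hσ.not_adj hx hy ((G.mem_neighborFinset x y).1 hxy)

lemma card_uncovered_neighbors_le_one (hσ : IsMaximumMatchingPerm G σ)
    (hτ : IsMaximumMatchingPerm G τ) {y : V} (hy : τ y = y) :
    #{x ∈ σ.supportᶜ | G.Adj x y} ≤ 1 := by
  simp only [card_le_one, mem_filter, mem_compl, Perm.mem_support, not_not]
  rintro x ⟨hx, hxy⟩ z ⟨hz, hzy⟩
  by_contra hxz
  obtain ⟨ρ, hρ, hρy, hρx | hρz⟩ := hσ.exists_switch hτ hx hz hxz hy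
  · exact hρ.not_adj hρx hρy hxy
  · exact hρ.not_adj hρz hρy hzy

lemma sum_degree_uncovered_le_card_support (hσ : IsMaximumMatchingPerm G σ)
    (hmiss : ∀ v, ∃ τ, IsMaximumMatchingPerm G τ ∧ τ v = v) :
    ∑ x ∈ σ.supportᶜ, G.degree x ≤ #σ.support := by
  have hdegree (x : V) (hx : x ∈ σ.supportᶜ) :
      G.degree x = #(bipartiteAbove G.Adj σ.support x) := by
    rw [← SimpleGraph.card_neighborFinset_eq_degree]
    congr 1
    ext y
    simp only [mem_compl, Perm.mem_support, not_not] at hx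
    simp only [SimpleGraph.mem_neighborFinset, mem_bipartiteAbove, Perm.mem_support]
    exact ⟨fun hxy => ⟨fun hy => hσ.not_adj hx hy hxy, hxy⟩, And.right⟩
  calc ∑ x ∈ σ.supportᶜ, G.degree x
      = ∑ x ∈ σ.supportᶜ, #(bipartiteAbove G.Adj σ.support x) := sum_congr rfl hdegree
    _ = ∑ y ∈ σ.support, #(bipartiteBelow G.Adj σ.supportᶜ y) :=
        sum_card_bipartiteAbove_eq_sum_card_bipartiteBelow _
    _ ≤ ∑ _y ∈ σ.support, 1 := sum_le_sum fun y _ =>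
        have ⟨_, hτ, hy⟩ := hmiss y
        hσ.card_uncovered_neighbors_le_one hτ hy
    _ = #σ.support := card_eq_sum_ones _ |>.symm

lemma card_edgeFinset_le_choose_two (hσ : IsMaximumMatchingPerm G σ)
    (hmiss : ∀ v, ∃ τ, IsMaximumMatchingPerm G τ ∧ τ v = v) :
    #G.edgeFinset ≤ (#σ.support + 1).choose 2 := by
  have hcovered : ∑ x ∈ σ.support, G.degree x ≤ #σ.support * #σ.support := by
    refine sum_le_card_nsmul _ _ _ fun x _ => ?_
    obtain ⟨τ, hτ, hx⟩ := hmiss x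
    exact hσ.card_support_eq hτ ▸ hτ.degree_le_card_support hx
  have hsplit := sum_add_sum_compl σ.support fun x => G.degree x
  have huncovered := hσ.sum_degree_uncovered_le_card_support hmiss
  rw [G.sum_degrees_eq_twice_card_edges] at hsplit
  rw [Nat.choose_two_right, Nat.le_div_iff_mul_le two_pos, Nat.add_sub_cancel]
  linarith

end IsMaximumMatchingPerm

end MatchingPerm

section ErdosGallai

open Equiv Finset

/-- The Erdős–Gallai bound for the number of edges of a graph on `n` vertices whose matchings have
order at most `m`. Its two terms count the edges of the complete graph on `2 * m + 1` vertices and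
of the join of a complete graph on `m` vertices with `n - m` independent vertices. -/
def erdosGallaiBound (n m : ℕ) : ℕ :=
  max ((2 * m + 1).choose 2) (m.choose 2 + m * (n - m))

lemma two_mul_choose_two (n : ℕ) : 2 * n.choose 2 = n * (n - 1) := by
  rw [Nat.choose_two_right, Nat.mul_div_cancel' n.even_mul_pred_self.two_dvd]

lemma add_choose_two (m n : ℕ) : (m + n).choose 2 = m.choose 2 + m * n + n.choose 2 := by
  induction n with
  | zero => simp
  | succ n ih =>
    rw [← add_assoc, Nat.choose_succ_succ' (m + n) 1, Nat.choose_succ_succ' n 1, ih,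
      Nat.choose_one_right, Nat.choose_one_right]
    ring

lemma add_erdosGallaiBound_le (n m : ℕ) :
    n + erdosGallaiBound n m ≤ erdosGallaiBound (n + 1) (m + 1) := by
  have hclique : (2 * (m + 1) + 1).choose 2 = (2 * m + 1).choose 2 + (4 * m + 3) := by
    simp only [mul_add, mul_one, Nat.choose_succ_succ' _ 1, Nat.choose_one_right]
    ring
  have hjoin : (m + 1).choose 2 = m.choose 2 + m := by
    rw [Nat.choose_succ_succ' _ 1, Nat.choose_one_right, add_comm]
  have hclique_eq := two_mul_choose_two (2 * m + 1)
  rw [Nat.add_sub_cancel] at hclique_eq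
  rw [erdosGallaiBound, erdosGallaiBound, Nat.add_sub_add_right, hclique, hjoin]
  obtain hnm | hmn := le_total n m
  · have hle : m.choose 2 ≤ (2 * m + 1).choose 2 := Nat.choose_le_choose 2 (by omega)
    rw [Nat.sub_eq_zero_of_le hnm, mul_zero, add_zero, max_eq_left hle]
    exact le_max_of_le_left (by omega)
  obtain ⟨d, rfl⟩ := Nat.exists_eq_add_of_le hmn
  rw [Nat.add_sub_cancel_left, ← max_add_add_left]
  refine max_le ?_ (le_max_of_le_right (by linarith))
  by_cases hd : m + d ≤ 4 * m + 3
  · exact le_max_of_le_left (by omega)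
  · exact le_max_of_le_right (by nlinarith)

lemma erdosGallaiBound_of_le {n m : ℕ} (h : 5 * m + 3 ≤ 2 * n) :
    erdosGallaiBound n m = m.choose 2 + m * (n - m) := by
  obtain ⟨d, rfl⟩ := Nat.exists_eq_add_of_le (show m ≤ n by omega)
  have hclique := two_mul_choose_two (2 * m + 1)
  have hcore := two_mul_choose_two m
  rw [Nat.add_sub_cancel] at hclique
  refine max_eq_right ?_
  rw [Nat.add_sub_cancel_left]
  cases m with
  | zero => simp
  | succ m =>
    rw [Nat.add_sub_cancel] at hcore
    nlinarith

variable {V : Type*} [Fintype V] [DecidableEq V] {m : ℕ}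

lemma card_support_add_two_le_of_induce_compl_singleton {G : SimpleGraph V} {v : V}
    (hG : ∀ σ, IsMatchingPerm G σ → #σ.support ≤ 2 * m)
    (hv : ∀ σ, IsMaximumMatchingPerm G σ → σ v ≠ v) {σ : Perm ({v}ᶜ : Set V)}
    (hσ : IsMatchingPerm (G.induce {v}ᶜ) σ) : #σ.support + 2 ≤ 2 * m := by
  have hcard : #(Perm.ofSubtype σ).support = #σ.support := by
    rw [Perm.support_ofSubtype, card_map]
  have hmiss : Perm.ofSubtype σ v = v := Perm.ofSubtype_apply_of_not_mem σ (by simp)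
  have hne : #(Perm.ofSubtype σ).support ≠ 2 * m := fun heq =>
    hv _ ⟨hσ.of_induce, fun τ hτ => heq ▸ hG τ hτ⟩ hmiss
  have hle := hG _ hσ.of_induce
  obtain ⟨c, hc⟩ := hσ.even_card_support
  omega

theorem card_edgeFinset_le_erdosGallaiBound (G : SimpleGraph V) [DecidableRel G.Adj]
    (hG : ∀ σ, IsMatchingPerm G σ → #σ.support ≤ 2 * m) :
    #G.edgeFinset ≤ erdosGallaiBound (Fintype.card V) m := by
  induction m using Nat.strong_induction_on generalizing V with
  | _ m ih =>
    obtain ⟨σ, hσ⟩ := IsMaximumMatchingPerm.exists_of_graph G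
    by_cases hmiss : ∀ v, ∃ τ, IsMaximumMatchingPerm G τ ∧ τ v = v
    · refine (hσ.card_edgeFinset_le_choose_two hmiss).trans (le_max_of_le_left ?_)
      exact Nat.choose_le_choose 2 (Nat.add_le_add_right (hG σ hσ.toIsMatchingPerm) 1)
    · push Not at hmiss
      obtain ⟨v, hv⟩ := hmiss
      have hinduce {τ} (hτ : IsMatchingPerm (G.induce {v}ᶜ) τ) : #τ.support + 2 ≤ 2 * m :=
        card_support_add_two_le_of_induce_compl_singleton hG hv hτ
      obtain ⟨m, rfl⟩ : ∃ j, m = j + 1 := Nat.exists_eq_add_one.2 <| by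
        have hone := hinduce (IsMatchingPerm.one _)
        omega
      have hrec := ih m m.lt_succ_self (G.induce {v}ᶜ) fun τ hτ => by linarith [hinduce hτ]
      have hcard : Fintype.card ({v}ᶜ : Set V) + 1 = Fintype.card V := by
        rw [Fintype.card_compl_set, Set.card_singleton]
        exact Nat.sub_add_cancel (Fintype.card_pos_iff.2 ⟨v⟩)
      rw [G.card_edgeFinset_induce_compl_singleton, G.card_edgeFinset_deleteIncidenceSet] at hrec
      have hdegree := G.degree_lt_card_verts v
      have hstep := add_erdosGallaiBound_le (Fintype.card ({v}ᶜ : Set V)) m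
      rw [hcard] at hstep
      omega

lemma card_edgeFinset_add_card_edgeFinset_compl (G : SimpleGraph V) [DecidableRel G.Adj] :
    #G.edgeFinset + #Gᶜ.edgeFinset = (Fintype.card V).choose 2 := by
  rw [← SimpleGraph.card_edgeFinset_top_eq_card_choose_two, ← card_union_of_disjoint
    (SimpleGraph.disjoint_edgeFinset.2 disjoint_compl_right), ← SimpleGraph.edgeFinset_sup]
  congr! 2
  exact sup_compl_eq_top

lemma choose_two_le_card_edgeFinset_compl (G : SimpleGraph V) [DecidableRel G.Adj]
    (hG : ∀ σ, IsMatchingPerm G σ → #σ.support ≤ 2 * m) (hm : 5 * m + 3 ≤ 2 * Fintype.card V) :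
    (Fintype.card V - m).choose 2 ≤ #Gᶜ.edgeFinset := by
  have hle := card_edgeFinset_le_erdosGallaiBound G hG
  rw [erdosGallaiBound_of_le hm] at hle
  have htotal := card_edgeFinset_add_card_edgeFinset_compl G
  obtain ⟨d, hd⟩ := Nat.exists_eq_add_of_le (show m ≤ Fintype.card V by omega)
  rw [hd, Nat.add_sub_cancel_left] at hle ⊢
  rw [hd, add_choose_two] at htotal
  omega

end ErdosGallai

section Exchange

open Equiv Finset

variable {V : Type*}

/- If some `u s + v s ≤ 1`, then `u t + v t ≥ 4 - (u s + v s)` for all other `t`, which makes up for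
the deficit at `s`. -/
lemma two_mul_card_le_sum_add_s13 {S : Finset V} {u v : V → ℕ} (hS : 2 ≤ #S)
    (huv : ∀ s ∈ S, ∀ t ∈ S, s ≠ t → u s = 0 → 2 ≤ v t)
    (hvu : ∀ s ∈ S, ∀ t ∈ S, s ≠ t → v s = 0 → 2 ≤ u t) :
    2 * #S ≤ ∑ s ∈ S, (u s + v s) := by
  classical
  by_cases hall : ∀ s ∈ S, 2 ≤ u s + v s
  · simpa only [smul_eq_mul, mul_comm] using card_nsmul_le_sum S _ 2 hall
  push Not at hall
  obtain ⟨s, hs, hlt⟩ := hall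
  have hother : ∀ t ∈ S.erase s, 4 - (u s + v s) ≤ u t + v t := fun t ht => by
    obtain ⟨hts, ht⟩ := mem_erase.1 ht
    have huv_st := huv s hs t ht hts.symm
    have huv_ts := huv t ht s hs hts
    have hvu_st := hvu s hs t ht hts.symm
    have hvu_ts := hvu t ht s hs hts
    omega
  have hsum := card_nsmul_le_sum _ _ _ hother
  rw [card_erase_of_mem hs, smul_eq_mul] at hsum
  rw [← add_sum_erase S _ hs]
  obtain ⟨c, hc⟩ := Nat.exists_eq_add_of_le hS
  rw [hc] at hsum ⊢
  generalize u s + v s = a at *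
  interval_cases a <;> omega

lemma two_mul_card_mul_le_sum_of_pairwise {S : Finset V} {w : V → V → ℕ}
    (hw : ∀ x ∈ S, ∀ y ∈ S, x ≠ y → 2 ≤ w x y) :
    2 * (#S * (#S - 1)) ≤ ∑ x ∈ S, ∑ y ∈ S, w x y := by
  classical
  rw [mul_left_comm, ← smul_eq_mul]
  refine card_nsmul_le_sum _ _ _ fun x hx => ?_
  calc 2 * (#S - 1) = #(S.erase x) • 2 := by rw [card_erase_of_mem hx, smul_eq_mul, mul_comm]
    _ ≤ ∑ y ∈ S.erase x, w x y := card_nsmul_le_sum _ _ _ fun y hy =>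
        hw x hx y (mem_of_mem_erase hy) (ne_of_mem_erase hy).symm
    _ ≤ ∑ y ∈ S, w x y := sum_le_sum_of_subset (erase_subset x S)

variable [Fintype V]

lemma two_mul_card_edgeFinset_eq_sum (G : SimpleGraph V) [DecidableRel G.Adj] :
    2 * #G.edgeFinset = ∑ x, ∑ y, if G.Adj x y then 1 else 0 := by
  rw [← G.sum_degrees_eq_twice_card_edges]
  exact sum_congr rfl fun x _ => by simpa using G.degree_eq_sum_if_adj (R := ℕ) x

variable [DecidableEq V] {σ : Perm V}

lemma card_support_mul_le_sum_of_pairs {S : Finset V} {w : V → V → ℕ}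
    (hw : ∀ a ∈ σ.support, 2 * #S ≤ ∑ s ∈ S, (w a s + w (σ a) s)) :
    #σ.support * #S ≤ ∑ a ∈ σ.support, ∑ s ∈ S, w a s := by
  have hreindex : ∑ a ∈ σ.support, ∑ s ∈ S, w (σ a) s = ∑ a ∈ σ.support, ∑ s ∈ S, w a s :=
    sum_equiv σ (fun a => by simp) fun _ _ => rfl
  have hsum := card_nsmul_le_sum _ _ _ hw
  simp only [sum_add_distrib, hreindex, smul_eq_mul] at hsum
  linarith

lemma two_mul_card_mul_card_sub_one_le_sum {w : V → V → ℕ} (hσ : Function.Involutive σ)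
    (hsymm : ∀ x y, w x y = w y x) (hS : 2 ≤ #σ.supportᶜ)
    (hfixed : ∀ x y, σ x = x → σ y = y → x ≠ y → 2 ≤ w x y)
    (hpair : ∀ a s t, σ a ≠ a → σ s = s → σ t = t → s ≠ t → w a s = 0 → 2 ≤ w (σ a) t) :
    2 * (#σ.supportᶜ * (Fintype.card V - 1)) ≤ ∑ x, ∑ y, w x y := by
  set S := σ.supportᶜ
  have mem_S {x : V} : x ∈ S ↔ σ x = x := by simp [S]
  have hinside : 2 * (#S * (#S - 1)) ≤ ∑ x ∈ S, ∑ y ∈ S, w x y :=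
    two_mul_card_mul_le_sum_of_pairwise fun x hx y hy => hfixed x y (mem_S.1 hx) (mem_S.1 hy)
  have hacross : #σ.support * #S ≤ ∑ a ∈ σ.support, ∑ s ∈ S, w a s := by
    refine card_support_mul_le_sum_of_pairs fun a ha => ?_
    rw [Perm.mem_support] at ha
    refine two_mul_card_le_sum_add_s13 hS ?_ ?_ <;> intro s hs t ht hst hzero
    · exact hpair a s t ha (mem_S.1 hs) (mem_S.1 ht) hst hzero
    · simpa only [hσ a] using hpair (σ a) s t (by rw [hσ a]; exact ha.symm) (mem_S.1 hs)
        (mem_S.1 ht) hst hzero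
  have hacross_symm : ∑ s ∈ S, ∑ a ∈ σ.support, w s a = ∑ a ∈ σ.support, ∑ s ∈ S, w a s := by
    rw [sum_comm]
    simp only [hsymm]
  have htotal : ∑ x ∈ S, ∑ y ∈ S, w x y + 2 * ∑ a ∈ σ.support, ∑ s ∈ S, w a s ≤
      ∑ x, ∑ y, w x y := by
    have hsplit (F : V → ℕ) : ∑ x, F x = ∑ x ∈ σ.support, F x + ∑ x ∈ S, F x :=
      (sum_add_sum_compl σ.support F).symm
    simp only [hsplit, sum_add_distrib]
    omega
  have hcard : #σ.support + #S = Fintype.card V := card_add_card_compl _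
  have hn : Fintype.card V - 1 = #σ.support + (#S - 1) := by omega
  rw [hn, mul_add]
  linarith

lemma card_uncovered_mul_le_card_edgeFinset_compl_add {G H : SimpleGraph V} [DecidableRel G.Adj]
    [DecidableRel H.Adj] (hGH : G ≤ H) (hσ : IsMatchingPerm G σ) (hS : 2 ≤ #σ.supportᶜ)
    (hstuck : ∀ τ, IsMatchingPerm G τ → #τ.support = #σ.support →
      ∀ x y, τ x = x → τ y = y → ¬ H.Adj x y) :
    #σ.supportᶜ * (Fintype.card V - 1) ≤ #Gᶜ.edgeFinset + #Hᶜ.edgeFinset := by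
  let w (x y : V) : ℕ := (if Gᶜ.Adj x y then 1 else 0) + if Hᶜ.Adj x y then 1 else 0
  have hw_two {x y : V} (hne : x ≠ y) (hxy : ¬ H.Adj x y) : 2 ≤ w x y := by
    have hGxy : ¬ G.Adj x y := fun h => hxy (hGH h)
    simp [w, SimpleGraph.compl_adj, hne, hxy, hGxy]
  have hw_zero {x y : V} (hne : x ≠ y) (hxy : w x y = 0) : G.Adj x y := by
    by_contra hGxy
    simp [w, SimpleGraph.compl_adj, hne, hGxy] at hxy
  have hsum : ∑ x, ∑ y, w x y = 2 * (#Gᶜ.edgeFinset + #Hᶜ.edgeFinset) := by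
    simp only [w, sum_add_distrib, mul_add, two_mul_card_edgeFinset_eq_sum]
  have hlower : 2 * (#σ.supportᶜ * (Fintype.card V - 1)) ≤ ∑ x, ∑ y, w x y := by
    refine two_mul_card_mul_card_sub_one_le_sum hσ.involutive
      (fun x y => by simp only [w, SimpleGraph.adj_comm]) hS
      (fun x y hx hy hne => hw_two hne (hstuck σ hσ rfl x y hx hy)) ?_
    intro a s t ha hs ht hst hzero
    have has : a ≠ s := fun h => ha (h ▸ hs)
    have hat : σ a ≠ t := fun h => ha (hσ.involutive.injective (by rw [h, ht]))
    obtain ⟨τ, hτ, hcard, hτa, hτ_fix⟩ := hσ.exists_exchange ha hs (hw_zero has hzero)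
    exact hw_two hat (hstuck τ hτ hcard _ _ hτa (hτ_fix t ht hst.symm))
  omega

theorem exists_isMatchingPerm_sup_edge {G H : SimpleGraph V} [DecidableRel G.Adj]
    [DecidableRel H.Adj] {r k : ℕ} (hV : Fintype.card V = r + k) (hr : 1 ≤ r) (hk : r ≤ k)
    (hk2 : 3 * r ≤ 2 * k + 7) (hGH : G ≤ H)
    (hcost : 2 * (#Gᶜ.edgeFinset + #Hᶜ.edgeFinset) <
      min ((k + 1) * (k + 2)) (2 * ((k - r + 2) * (k + r - 1)))) :
    ∃ x y σ, H.Adj x y ∧ IsMatchingPerm (G ⊔ SimpleGraph.edge x y) σ ∧ #σ.support = 2 * r := by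
  obtain ⟨hcost_clique, hcost_exchange⟩ := lt_min_iff.1 hcost
  by_cases hG : ∃ σ, IsMatchingPerm G σ ∧ #σ.support = 2 * (r - 1)
  · obtain ⟨σ, hσ, hσ_card⟩ := hG
    by_contra! hno
    have huncovered : #σ.supportᶜ = k - r + 2 := by
      rw [card_compl]
      omega
    have hlower := card_uncovered_mul_le_card_edgeFinset_compl_add hGH hσ (by omega)
      fun τ hτ hcard x y hx hy hxy => by
        have hne := hno x y _ hxy (hτ.mul_swap hx hy)
        rw [card_support_mul_swap hx hy hxy.ne] at hne
        omega
    rw [huncovered, hV, add_comm r k] at hlower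
    omega
  · have hsmall (σ : Perm V) (hσ : IsMatchingPerm G σ) : #σ.support < 2 * (r - 1) :=
      not_le.1 fun hle => hG (hσ.exists_card_support_eq hle)
    have hr2 : 2 ≤ r := by
      have hone := hsmall 1 (IsMatchingPerm.one G)
      omega
    have hlower := choose_two_le_card_edgeFinset_compl (m := r - 2) G
      (fun σ hσ => by
        have hlt := hsmall σ hσ
        obtain ⟨c, hc⟩ := hσ.even_card_support
        omega) (by omega)
    have hchoose := two_mul_choose_two (k + 2)
    rw [show Fintype.card V - (r - 2) = k + 2 by omega] at hlower
    rw [show k + 2 - 1 = k + 1 by omega, mul_comm (k + 2)] at hchoose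
    omega

end Exchange

section MatchingEdges

open Equiv Finset

variable {V : Type*} [Fintype V] [DecidableEq V] {σ : Perm V}

/-- The edge set of the matching encoded by the involution `σ`. -/
def matchingEdges (σ : Perm V) : Finset (Sym2 V) :=
  σ.support.image fun x => s(x, σ x)

lemma eq_mk_of_mem_matchingEdges (hσ : Function.Involutive σ) {e : Sym2 V} {v : V}
    (he : e ∈ matchingEdges σ) (hv : v ∈ e) : e = s(v, σ v) := by
  obtain ⟨x, -, rfl⟩ := mem_image.1 he
  obtain rfl | rfl := Sym2.mem_iff.1 hv
  · rfl
  · rw [hσ x, Sym2.eq_swap]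

lemma two_mul_card_matchingEdges (hσ : Function.Involutive σ) :
    2 * #(matchingEdges σ) = #σ.support := by
  rw [card_eq_sum_card_image (fun x => s(x, σ x)) σ.support, mul_comm]
  refine (sum_const_nat fun e he => ?_).symm
  obtain ⟨x, hx, rfl⟩ := mem_image.1 he
  have hfiber : {y ∈ σ.support | s(y, σ y) = s(x, σ x)} = {x, σ x} := by
    ext y
    simp only [mem_filter, mem_insert, mem_singleton]
    refine ⟨fun hy => Sym2.mem_iff.1 (hy.2 ▸ Sym2.mem_mk_left y (σ y)), ?_⟩
    rintro (rfl | rfl)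
    · exact ⟨hx, rfl⟩
    · exact ⟨Perm.apply_mem_support.2 hx, by rw [hσ x, Sym2.eq_swap]⟩
  rw [hfiber, card_pair (Perm.mem_support.1 hx).symm]

lemma IsMatchingPerm.isMatchingOn_matchingEdges {G : SimpleGraph V} (hσ : IsMatchingPerm G σ) :
    IsMatchingOn G (matchingEdges σ) := by
  refine ⟨fun e he => ?_, fun e he f hf hef v hve hvf => hef ?_⟩
  · obtain ⟨x, hx, rfl⟩ := mem_image.1 he
    exact hσ.adj x (Perm.mem_support.1 hx)
  · rw [eq_mk_of_mem_matchingEdges hσ.involutive he hve,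
      eq_mk_of_mem_matchingEdges hσ.involutive hf hvf]

end MatchingEdges

section EdgeSets

variable {V : Type*}

lemma card_edgeFinset_compl_compl_fromEdgeSet_le [Finite V] (E : Set (Sym2 V))
    [Fintype (SimpleGraph.fromEdgeSet E)ᶜᶜ.edgeSet] :
    (SimpleGraph.fromEdgeSet E)ᶜᶜ.edgeFinset.card ≤ E.ncard := by
  rw [← Set.ncard_coe_finset, SimpleGraph.coe_edgeFinset, compl_compl,
    SimpleGraph.edgeSet_fromEdgeSet]
  exact Set.ncard_le_ncard Set.sdiff_subset

lemma notMem_of_mem_edgeSet_compl_fromEdgeSet {E : Set (Sym2 V)} {e : Sym2 V}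
    (he : e ∈ (SimpleGraph.fromEdgeSet E)ᶜ.edgeSet) : e ∉ E := by
  induction e with | _ x y
  rw [SimpleGraph.mem_edgeSet, SimpleGraph.compl_adj, SimpleGraph.fromEdgeSet_adj] at he
  exact fun hxy => he.2 ⟨hxy, he.1⟩

end EdgeSets

theorem stmt_13_general {V : Type*} [Fintype V] {r k : ℕ} (hV : Fintype.card V = r + k)
    (hr : 1 ≤ r) (hk : r ≤ k) (hk2 : 3 * r ≤ 2 * k + 7) (E1 E2 : Set (Sym2 V))
    (hE : 2 * (E1.ncard + 2 * E2.ncard) <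
      min ((k + 1) * (k + 2)) (2 * ((k - r + 2) * (k + r - 1)))) :
    ∃ M : Set (Sym2 V), IsMatchingOn (⊤ : SimpleGraph V) M ∧
      M.ncard = r ∧ M ∩ E2 = ∅ ∧ (M ∩ E1).ncard ≤ 1 := by
  classical
  let G : SimpleGraph V := (SimpleGraph.fromEdgeSet (E1 ∪ E2))ᶜ
  let H : SimpleGraph V := (SimpleGraph.fromEdgeSet E2)ᶜ
  have hGH : G ≤ H := compl_le_compl (SimpleGraph.fromEdgeSet_mono Set.subset_union_right)
  have hcost : Gᶜ.edgeFinset.card + Hᶜ.edgeFinset.card ≤ E1.ncard + 2 * E2.ncard := by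
    have hG : Gᶜ.edgeFinset.card ≤ (E1 ∪ E2).ncard :=
      card_edgeFinset_compl_compl_fromEdgeSet_le _
    have hH : Hᶜ.edgeFinset.card ≤ E2.ncard := card_edgeFinset_compl_compl_fromEdgeSet_le _
    have hunion := Set.ncard_union_le E1 E2
    omega
  obtain ⟨x, y, σ, hxy, hσ, hcard⟩ :=
    exists_isMatchingPerm_sup_edge hV hr hk hk2 hGH (lt_of_le_of_lt (by omega) hE)
  have hle : G ⊔ SimpleGraph.edge x y ≤ H := sup_le hGH (H.edge_le_iff.2 (Or.inr hxy))
  obtain ⟨hM, hdisjoint⟩ := hσ.isMatchingOn_matchingEdges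
  refine ⟨matchingEdges σ, ⟨hM.trans (SimpleGraph.edgeSet_mono le_top), hdisjoint⟩, ?_, ?_, ?_⟩
  · have htwo := two_mul_card_matchingEdges hσ.involutive
    rw [Set.ncard_coe_finset]
    omega
  · exact Set.disjoint_iff_inter_eq_empty.1 <| Set.disjoint_left.2 fun e he =>
      notMem_of_mem_edgeSet_compl_fromEdgeSet (SimpleGraph.edgeSet_mono hle (hM he))
  · refine (Set.ncard_le_ncard ?_).trans (Set.ncard_singleton s(x, y)).le
    rintro e ⟨he, heE1⟩
    rcases SimpleGraph.edgeSet_sup G _ ▸ hM he with hG | hedge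
    · exact absurd (Or.inl heE1) (notMem_of_mem_edgeSet_compl_fromEdgeSet hG)
    · exact SimpleGraph.edgeSet_edge_subset hedge

/-- for k > r and k > (3r-7)/2 and
|E1|+2|E2| < min{(k+1)(k+2)/2, (k-r+2)(k+r-1)}, the complete graph on r+k vertices
has a good matching of order r. (Inequalities are scaled by 2.) -/
theorem stmt_13 (r k : ℕ) (hr : 1 ≤ r) (hk : r < k) (hk2 : 3 * r < 2 * k + 7)
    (E0 E1 E2 : Set (Sym2 (Fin (r + k))))
    (hpart : (⊤ : SimpleGraph (Fin (r + k))).edgeSet = E0 ∪ E1 ∪ E2)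
    (h01 : Disjoint E0 E1) (h02 : Disjoint E0 E2) (h12 : Disjoint E1 E2)
    (hE : 2 * (E1.ncard + 2 * E2.ncard) <
      min ((k + 1) * (k + 2)) (2 * ((k - r + 2) * (k + r - 1)))) :
    ∃ M : Set (Sym2 (Fin (r + k))), IsMatchingOn (⊤ : SimpleGraph (Fin (r + k))) M ∧
      M.ncard = r ∧ M ∩ E2 = ∅ ∧ (M ∩ E1).ncard ≤ 1 :=
  stmt_13_general (by simp) hr hk.le hk2.le E1 E2 hE
end

section
/- Let k and r be positive integers with r ≥ 2, k ≤ r, r+k odd, and r+k ≥ 13. Let G be a graph with chromatic number at most r, P ⊆ V(G), and d : P → {1,...,r+k} a proper coloring of G[P]. If |D_G(P,2)| < 3(r+k−1), then d can be extended to a proper coloring of G using at most (3r+k+1)/2 colors. -/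
/-- The set of unordered pairs of distinct vertices of `P` at distance at most `m` in `G`. -/
def pairsAtMost {V : Type*} (G : SimpleGraph V) (P : Set V) (m : ℕ) : Set (Sym2 V) :=
  {e | ∃ x y, e = s(x, y) ∧ x ∈ P ∧ y ∈ P ∧ x ≠ y ∧ ∃ p : G.Walk x y, p.length ≤ m}

/-!
Weigh each pair of colours by the number of pairs in `D_G(P, 2)` carrying those two colours, so
that the total weight on the `2m + 1 = r + k` colours is less than `6m`. Suppose that `m` disjoint
pairs of colours have total weight at most one, and split `G` into `r` colour classes. Offer each
of `m` classes its own pair of colours, and each of the other `r - m` classes one new colour. Both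
colours offered to a vertex outside `P` are blocked only if two of its neighbours in `P` carry them.
There is at most one such pair of vertices, and it does no harm once the classes are permuted so
that one of its vertices lies in the class being served, since that vertex is not adjacent to
anything in its class.

To find the `m` pairs, decompose the complete graph on `2m + 1` points into `2m + 1` matchings of
size `m`; one of them has weight at most two. Assume that every matching of size `m` has weight at
least two. If some matching of size `m - 1` has weight zero, exchanging its edges with the three
points it misses shows that the total weight is at least `6m`. Otherwise the matching of weight two
has two edges of positive weight; without them it is a largest matching of weight zero, and
exchanges with the five points it misses again give total weight at least `6m`.
-/

namespace PrecoloringExtension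

open Finset
open scoped Function

section Matchings

variable {C : Type*}

/-- The total weight of a multiset of edges of the complete graph on `C` (loops included). -/
def weight (w : Sym2 C → ℕ) (M : Multiset (Sym2 C)) : ℕ := (M.map w).sum

/-- The endpoints of the edges in `M`, with multiplicity. -/
def endpoints (M : Multiset (Sym2 C)) : Multiset C := M.bind Sym2.toMultiset

/-- A matching in the complete graph on `C`. Every vertex occurs at most once as an endpoint,
which excludes loops, repeated edges and edges sharing a vertex. -/
def IsMatching (M : Multiset (Sym2 C)) : Prop := (endpoints M).Nodup

/-- All edges joining a member of `A` to a member of `B`, with multiplicity. -/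
def edgesBetween (A B : Multiset C) : Multiset (Sym2 C) := A.bind fun a ↦ B.map fun b ↦ s(a, b)

variable {w : Sym2 C → ℕ} {M : Multiset (Sym2 C)} {U : Multiset C} {k m : ℕ}

@[simp] lemma weight_zero : weight w 0 = 0 := rfl

@[simp] lemma weight_cons (e : Sym2 C) (M : Multiset (Sym2 C)) :
    weight w (e ::ₘ M) = w e + weight w M := by
  simp [weight]

lemma weight_add (M N : Multiset (Sym2 C)) : weight w (M + N) = weight w M + weight w N := by
  simp [weight]

lemma weight_bind {ι : Type*} (F : Multiset ι) (f : ι → Multiset (Sym2 C)) :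
    weight w (F.bind f) = (F.map fun i ↦ weight w (f i)).sum := by
  simp [weight, Multiset.map_bind, Multiset.sum_bind]

lemma weight_le_sum [Fintype C] (hM : M.Nodup) : weight w M ≤ ∑ z, w z :=
  Finset.sum_le_sum_of_subset (f := w) (Finset.subset_univ ⟨M, hM⟩)

lemma card_mul_le_sum_map {ι : Type*} {F : Multiset ι} {f : ι → ℕ} (h : ∀ i ∈ F, k ≤ f i) :
    F.card * k ≤ (F.map f).sum := by
  refine le_of_eq_of_le ?_ (Multiset.card_nsmul_le_sum (s := F.map f) (a := k) fun x hx ↦ ?_)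
  · rw [Multiset.card_map, smul_eq_mul]
  · obtain ⟨i, hi, rfl⟩ := Multiset.mem_map.1 hx
    exact h i hi

lemma exists_cons_of_weight_pos (hM : 0 < weight w M) : ∃ e N, M = e ::ₘ N ∧ 0 < w e := by
  contrapose! hM
  refine (Multiset.sum_eq_zero fun x hx ↦ ?_).le
  obtain ⟨e, he, rfl⟩ := Multiset.mem_map.1 hx
  obtain ⟨N, hN⟩ := Multiset.exists_cons_of_mem he
  exact Nat.le_zero.1 (hM e N hN)

lemma toMultiset_mk (a b : C) : s(a, b).toMultiset = {a, b} := rfl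

@[simp] lemma endpoints_mk_cons (a b : C) (M : Multiset (Sym2 C)) :
    endpoints (s(a, b) ::ₘ M) = a ::ₘ b ::ₘ endpoints M := by
  simp [endpoints, toMultiset_mk]

lemma mem_endpoints {a : C} : a ∈ endpoints M ↔ ∃ e ∈ M, a ∈ e := by
  simp [endpoints]

lemma card_endpoints (M : Multiset (Sym2 C)) : (endpoints M).card = 2 * M.card := by
  have card_edge : Multiset.card ∘ Sym2.toMultiset = fun _ : Sym2 C ↦ 2 :=
    funext Sym2.card_toMultiset
  rw [endpoints, Multiset.card_bind, card_edge, Multiset.map_const', Multiset.sum_replicate,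
    smul_eq_mul, mul_comm]

lemma edgesBetween_cons_left (a : C) (A B : Multiset C) :
    edgesBetween (a ::ₘ A) B = (B.map fun b ↦ s(a, b)) + edgesBetween A B := by
  simp [edgesBetween]

lemma edgesBetween_bind_right {ι : Type*} (A : Multiset C) (F : Multiset ι)
    (f : ι → Multiset C) : edgesBetween A (F.bind f) = F.bind fun i ↦ edgesBetween A (f i) := by
  simp only [edgesBetween, Multiset.map_bind]
  exact Multiset.bind_bind _ _

lemma weight_edgesBetween_pair (A : Multiset C) (p q : C) :
    weight w (edgesBetween A {p, q}) =
      (A.map fun a ↦ w s(a, p)).sum + (A.map fun a ↦ w s(a, q)).sum := by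
  induction A using Multiset.induction with
  | empty => rfl
  | cons a A ih =>
    rw [edgesBetween_cons_left, weight_add, ih]
    simp only [weight, Multiset.insert_eq_cons, Multiset.map_cons, Multiset.map_singleton,
      Multiset.sum_cons, Multiset.sum_singleton]
    ring

lemma sym2_add (A B : Multiset C) :
    (A + B).sym2 = A.sym2 + edgesBetween A B + B.sym2 := by
  induction A using Multiset.induction with
  | empty => simp [edgesBetween]
  | cons a A ih =>
    rw [Multiset.cons_add, Multiset.sym2_cons, ih, Multiset.sym2_cons, edgesBetween_cons_left,
      ← Multiset.cons_add, Multiset.map_add]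
    abel

lemma weight_sym2_add_endpoints (U : Multiset C) (M : Multiset (Sym2 C)) :
    weight w (U + endpoints M).sym2 = weight w U.sym2 +
      (M.map fun e ↦ weight w (edgesBetween U e.toMultiset)).sum +
        weight w (endpoints M).sym2 := by
  rw [sym2_add, weight_add, weight_add, endpoints, edgesBetween_bind_right, weight_bind]

lemma choose_two_le_weight_sym2_bind {ι : Type*} (F : Multiset ι) (f : ι → Multiset C)
    (hF : ∀ i j, {i, j} ≤ F → 0 < weight w (edgesBetween (f i) (f j))) :
    F.card.choose 2 ≤ weight w (F.bind f).sym2 := by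
  induction F using Multiset.induction with
  | empty => simp
  | cons i F ih =>
    have inner : F.card.choose 2 ≤ weight w (F.bind f).sym2 :=
      ih fun j l hjl ↦ hF j l (hjl.trans (Multiset.le_cons_self F i))
    have cross : F.card ≤ weight w (edgesBetween (f i) (F.bind f)) := by
      rw [edgesBetween_bind_right, weight_bind, ← mul_one F.card]
      exact card_mul_le_sum_map fun j hj ↦
        hF i j (Multiset.cons_le_cons i (Multiset.singleton_le.2 hj))
    rw [Multiset.cons_bind, sym2_add, weight_add, weight_add, Multiset.card_cons,
      Nat.choose_succ_succ' _ 1, Nat.choose_one_right, one_add_one_eq_two]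
    omega

lemma isMatching_mk_cons {a b : C} : IsMatching (s(a, b) ::ₘ M) ↔
    a ≠ b ∧ a ∉ endpoints M ∧ b ∉ endpoints M ∧ IsMatching M := by
  simp only [IsMatching, endpoints_mk_cons, Multiset.nodup_cons, Multiset.mem_cons, not_or,
    and_assoc]

lemma IsMatching.of_cons {e : Sym2 C} (h : IsMatching (e ::ₘ M)) : IsMatching M := by
  induction e with
  | _ a b => exact (isMatching_mk_cons.1 h).2.2.2

lemma IsMatching.eq_of_mem (h : IsMatching M) {e e' : Sym2 C} {a : C} (he : e ∈ M) (he' : e' ∈ M)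
    (ha : a ∈ e) (ha' : a ∈ e') : e = e' := by
  obtain ⟨N, rfl⟩ := Multiset.exists_cons_of_mem he
  obtain ⟨b, rfl⟩ := ha
  refine ((Multiset.mem_cons.1 he').resolve_right fun heN ↦ ?_).symm
  exact (isMatching_mk_cons.1 h).2.1 (mem_endpoints.2 ⟨e', heN, ha'⟩)

lemma IsMatching.not_isDiag (h : IsMatching M) {e : Sym2 C} (he : e ∈ M) : ¬e.IsDiag := by
  obtain ⟨N, rfl⟩ := Multiset.exists_cons_of_mem he
  induction e with
  | _ a b => exact mt Sym2.mk_isDiag_iff.1 (isMatching_mk_cons.1 h).1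

lemma IsMatching.nodup (h : IsMatching M) : M.Nodup := by
  induction M using Multiset.induction with
  | empty => exact Multiset.nodup_zero
  | cons e M ih =>
    refine Multiset.nodup_cons.2 ⟨fun he ↦ ?_, ih h.of_cons⟩
    induction e with
    | _ a b =>
      exact (isMatching_mk_cons.1 h).2.1 (mem_endpoints.2 ⟨_, he, Sym2.mem_mk_left a b⟩)

lemma IsMatching.exists_complement [Fintype C] (h : IsMatching M)
    (hC : Fintype.card C = k + 2 * M.card) :
    ∃ U : Multiset C, U.card = k ∧ U.Nodup ∧ Disjoint U (endpoints M) := by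
  obtain ⟨U, hU⟩ := Multiset.le_iff_exists_add.1
    ((Multiset.le_iff_subset h).2 fun a _ ↦ Finset.mem_univ_val a)
  obtain ⟨-, nodup, disjoint⟩ := Multiset.nodup_add.1 (hU ▸ Finset.univ.nodup)
  refine ⟨U, ?_, nodup, disjoint.symm⟩
  have := congrArg Multiset.card hU
  rw [Finset.card_val, Finset.card_univ, hC, Multiset.card_add, card_endpoints] at this
  omega

lemma three_mul_le_choose_two_add_six (a : ℕ) : 3 * a ≤ a.choose 2 + 6 := by
  induction a with
  | zero => exact Nat.zero_le _
  | succ a ih =>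
    rw [Nat.choose_succ_succ' a 1, Nat.choose_one_right, one_add_one_eq_two]
    rcases lt_or_ge a 3 with ha | ha
    · interval_cases a <;> decide
    · omega

lemma three_mul_le_weight_sym2_triple {x y z : C} (hU : ({x, y, z} : Multiset C).Nodup)
    (hM : IsMatching M) (hUM : Disjoint {x, y, z} (endpoints M)) (hM₀ : weight w M = 0)
    (hk : ∀ N, IsMatching N → N.card = M.card + 1 → k ≤ weight w N) :
    3 * k ≤ weight w (Multiset.sym2 {x, y, z}) := by
  simp only [Multiset.insert_eq_cons, Multiset.nodup_cons, Multiset.mem_cons,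
    Multiset.mem_singleton, Multiset.disjoint_cons_left, Multiset.singleton_disjoint] at hU hUM
  have xy := hk (s(x, y) ::ₘ M) (by grind [isMatching_mk_cons]) (Multiset.card_cons ..)
  have xz := hk (s(x, z) ::ₘ M) (by grind [isMatching_mk_cons]) (Multiset.card_cons ..)
  have yz := hk (s(y, z) ::ₘ M) (by grind [isMatching_mk_cons]) (Multiset.card_cons ..)
  simp only [weight_cons, hM₀] at xy xz yz
  simp only [Multiset.insert_eq_cons, ← Multiset.cons_zero, Multiset.sym2_cons,
    Multiset.map_cons, Multiset.map_zero, Multiset.sym2_zero, add_zero, Multiset.cons_add,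
    zero_add, weight_cons, weight_zero]
  omega

lemma three_mul_le_weight_edgesBetween_triple {x y z : C} {e : Sym2 C}
    (hU : ({x, y, z} : Multiset C).Nodup) (hM : IsMatching M)
    (hUM : Disjoint {x, y, z} (endpoints M)) (hM₀ : weight w M = 0)
    (hk : ∀ N, IsMatching N → N.card = M.card + 1 → k ≤ weight w N) (he : e ∈ M) :
    3 * k ≤ weight w (edgesBetween {x, y, z} e.toMultiset) := by
  obtain ⟨N, rfl⟩ := Multiset.exists_cons_of_mem he
  induction e with | _ p q =>
  simp only [Multiset.insert_eq_cons, Multiset.nodup_cons, Multiset.mem_cons,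
    Multiset.mem_singleton, Multiset.disjoint_cons_left, Multiset.singleton_disjoint,
    endpoints_mk_cons, not_or, isMatching_mk_cons] at hU hUM hM
  -- The six edges between `{x, y, z}` and `{p, q}` split into three exchanges for `s(p, q)`.
  have xy := hk (s(x, p) ::ₘ s(y, q) ::ₘ N)
    (by grind [isMatching_mk_cons, endpoints_mk_cons]) (by simp)
  have yz := hk (s(y, p) ::ₘ s(z, q) ::ₘ N)
    (by grind [isMatching_mk_cons, endpoints_mk_cons]) (by simp)
  have zx := hk (s(z, p) ::ₘ s(x, q) ::ₘ N)
    (by grind [isMatching_mk_cons, endpoints_mk_cons]) (by simp)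
  simp only [weight_cons] at hM₀ xy yz zx
  rw [toMultiset_mk, weight_edgesBetween_pair]
  simp only [Multiset.insert_eq_cons, Multiset.map_cons, Multiset.map_singleton,
    Multiset.sum_cons, Multiset.sum_singleton]
  omega

lemma three_mul_le_sum_of_weight_eq_zero [Fintype C] (hU : U.Nodup) (hUcard : U.card = 3)
    (hM : IsMatching M) (hUM : Disjoint U (endpoints M)) (hM₀ : weight w M = 0)
    (hk : ∀ N, IsMatching N → N.card = M.card + 1 → k ≤ weight w N) :
    3 * k * (M.card + 1) ≤ ∑ z, w z := by
  obtain ⟨x, y, z, rfl⟩ := Multiset.card_eq_three.1 hUcard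
  have triangle := three_mul_le_weight_sym2_triple hU hM hUM hM₀ hk
  have cross := card_mul_le_sum_map fun e (he : e ∈ M) ↦
    three_mul_le_weight_edgesBetween_triple hU hM hUM hM₀ hk he
  have total := weight_le_sum (w := w) (Multiset.nodup_add.2 ⟨hU, hM, hUM⟩).sym2
  rw [weight_sym2_add_endpoints] at total
  linarith

/-- A matching of weight zero with the largest possible number of edges. Excluding matchings of
weight zero with one more edge is enough, as larger ones contain such a matching. -/
structure IsMaxZeroMatching (w : Sym2 C → ℕ) (M : Multiset (Sym2 C)) : Prop where
  isMatching : IsMatching M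
  weight_eq_zero : weight w M = 0
  weight_pos : ∀ N, IsMatching N → N.card = M.card + 1 → 0 < weight w N

/-- The members of `U` joined to `p` by an edge of weight zero. -/
def zeroNeighbors (w : Sym2 C → ℕ) (U : Multiset C) (p : C) : Multiset C :=
  U.filter fun a ↦ w s(a, p) = 0

/-- An edge is rich if one of its endpoints can be rematched at no cost to at least two members
of `U`. -/
def IsRich (w : Sym2 C → ℕ) (U : Multiset C) (e : Sym2 C) : Prop :=
  ∃ p ∈ e, 1 < (zeroNeighbors w U p).card

lemma mem_zeroNeighbors {a p : C} : a ∈ zeroNeighbors w U p ↔ a ∈ U ∧ w s(a, p) = 0 :=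
  Multiset.mem_filter

lemma exists_mem_zeroNeighbors_ne {p : C} (hU : U.Nodup) (hp : 1 < (zeroNeighbors w U p).card)
    (b : C) : ∃ a ∈ zeroNeighbors w U p, a ≠ b :=
  Finset.exists_mem_ne (s := ⟨zeroNeighbors w U p, hU.filter _⟩) hp b

lemma card_le_sum_add_card_zeroNeighbors (U : Multiset C) (p : C) :
    U.card ≤ (U.map fun a ↦ w s(a, p)).sum + (zeroNeighbors w U p).card := by
  induction U using Multiset.induction with
  | empty => exact Nat.zero_le _
  | cons a U ih =>
    rw [zeroNeighbors] at ih ⊢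
    rw [Multiset.filter_cons, Multiset.card_add, Multiset.map_cons, Multiset.sum_cons,
      Multiset.card_cons]
    split_ifs with ha
    · rw [Multiset.card_singleton]
      omega
    · omega

lemma two_mul_card_le_of_not_isRich {e : Sym2 C} (hrich : ¬IsRich w U e) :
    2 * U.card ≤ weight w (edgesBetween U e.toMultiset) + 2 := by
  induction e with
  | _ p q =>
    have hp := card_le_sum_add_card_zeroNeighbors (w := w) U p
    have hq := card_le_sum_add_card_zeroNeighbors (w := w) U q
    simp only [IsRich, Sym2.mem_iff, exists_eq_or_imp, exists_eq_left, not_or, not_lt] at hrich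
    rw [toMultiset_mk, weight_edgesBetween_pair]
    omega

namespace IsMaxZeroMatching

lemma weight_pos_of_pair_le (h : IsMaxZeroMatching w M) (hU : U.Nodup)
    (hUM : Disjoint U (endpoints M)) {a b : C} (hab : {a, b} ≤ U) : 0 < w s(a, b) := by
  have nodup := Multiset.nodup_of_le hab hU
  have disjoint := hUM.mono_left hab
  simp only [Multiset.insert_eq_cons, Multiset.nodup_cons, Multiset.mem_singleton,
    Multiset.disjoint_cons_left, Multiset.singleton_disjoint] at nodup disjoint
  have augmented := h.weight_pos (s(a, b) ::ₘ M)
    (isMatching_mk_cons.2 ⟨nodup.1, disjoint.1, disjoint.2, h.isMatching⟩)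
    (Multiset.card_cons ..)
  rwa [weight_cons, h.weight_eq_zero] at augmented

lemma eq_of_mem_zeroNeighbors {p q : C} (h : IsMaxZeroMatching w (s(p, q) ::ₘ M))
    (hUM : Disjoint U (endpoints (s(p, q) ::ₘ M))) {a b : C} (ha : a ∈ zeroNeighbors w U p)
    (hb : b ∈ zeroNeighbors w U q) : a = b := by
  by_contra hab
  rw [mem_zeroNeighbors] at ha hb
  have ha' := Multiset.disjoint_left.1 hUM ha.1
  have hb' := Multiset.disjoint_left.1 hUM hb.1
  have matching := h.isMatching
  have augmented := h.weight_pos (s(a, p) ::ₘ s(b, q) ::ₘ M)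
    (by grind [isMatching_mk_cons, endpoints_mk_cons]) (by simp)
  have zero := h.weight_eq_zero
  simp only [weight_cons] at augmented zero
  omega

lemma card_zeroNeighbors_eq_zero {p q : C} (h : IsMaxZeroMatching w (s(p, q) ::ₘ M))
    (hU : U.Nodup) (hUM : Disjoint U (endpoints (s(p, q) ::ₘ M)))
    (hp : 1 < (zeroNeighbors w U p).card) : (zeroNeighbors w U q).card = 0 := by
  refine Multiset.card_eq_zero.2 (Multiset.eq_zero_of_forall_notMem fun b hb ↦ ?_)
  obtain ⟨a, ha, hab⟩ := exists_mem_zeroNeighbors_ne hU hp b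
  exact hab (h.eq_of_mem_zeroNeighbors hUM ha hb)

lemma card_le_weight_edgesBetween_of_isRich {e : Sym2 C} (h : IsMaxZeroMatching w M)
    (hU : U.Nodup) (hUM : Disjoint U (endpoints M)) (he : e ∈ M) (hrich : IsRich w U e) :
    U.card ≤ weight w (edgesBetween U e.toMultiset) := by
  obtain ⟨N, rfl⟩ := Multiset.exists_cons_of_mem he
  obtain ⟨p, ⟨q, rfl⟩, hp⟩ := hrich
  have hq := h.card_zeroNeighbors_eq_zero hU hUM hp
  have := card_le_sum_add_card_zeroNeighbors (w := w) U q
  rw [toMultiset_mk, weight_edgesBetween_pair]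
  omega

lemma weight_edgesBetween_pos_of_isRich (h : IsMaxZeroMatching w M) (hU : U.Nodup)
    (hUM : Disjoint U (endpoints M)) {e e' : Sym2 C} (hee' : {e, e'} ≤ M)
    (hrich : IsRich w U e) (hrich' : IsRich w U e') :
    0 < weight w (edgesBetween e.toMultiset e'.toMultiset) := by
  obtain ⟨N, rfl⟩ := Multiset.le_iff_exists_add.1 hee'
  obtain ⟨p, ⟨q, rfl⟩, hp⟩ := hrich
  obtain ⟨p', ⟨q', rfl⟩, hp'⟩ := hrich'
  obtain ⟨b, hb⟩ := Multiset.card_pos_iff_exists_mem.1 (zero_lt_one.trans hp')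
  obtain ⟨a, ha, hab⟩ := exists_mem_zeroNeighbors_ne hU hp b
  rw [mem_zeroNeighbors] at ha hb
  have ha' := Multiset.disjoint_left.1 hUM ha.1
  have hb' := Multiset.disjoint_left.1 hUM hb.1
  have matching := h.isMatching
  have zero := h.weight_eq_zero
  simp only [Multiset.insert_eq_cons, Multiset.cons_add, Multiset.singleton_add, weight_cons]
    at ha' hb' matching zero
  -- Rematching one end of each edge to `U` frees the other two ends for each other.
  have augmented := h.weight_pos (s(a, p) ::ₘ s(b, p') ::ₘ s(q, q') ::ₘ N)
    (by grind [isMatching_mk_cons, endpoints_mk_cons]) (by simp)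
  simp only [weight_cons] at augmented
  rw [toMultiset_mk, toMultiset_mk, weight_edgesBetween_pair]
  simp only [Multiset.insert_eq_cons, Multiset.map_cons, Multiset.map_singleton,
    Multiset.sum_cons, Multiset.sum_singleton]
  omega

open Classical in
lemma card_isRich_mul_add_le_sum_weight_edgesBetween (h : IsMaxZeroMatching w M) (hU : U.Nodup)
    (hUM : Disjoint U (endpoints M)) :
    (M.filter (IsRich w U)).card * U.card +
        (M.filter fun e ↦ ¬IsRich w U e).card * (2 * U.card - 2) ≤
      (M.map fun e ↦ weight w (edgesBetween U e.toMultiset)).sum := by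
  conv_rhs => rw [← Multiset.filter_add_not (IsRich w U) M, Multiset.map_add, Multiset.sum_add]
  refine add_le_add (card_mul_le_sum_map fun e he ↦ ?_) (card_mul_le_sum_map fun e he ↦ ?_)
  · rw [Multiset.mem_filter] at he
    exact h.card_le_weight_edgesBetween_of_isRich hU hUM he.1 he.2
  · exact Nat.sub_le_of_le_add (two_mul_card_le_of_not_isRich (Multiset.mem_filter.1 he).2)

open Classical in
lemma choose_two_le_weight_sym2_endpoints (h : IsMaxZeroMatching w M) (hU : U.Nodup)
    (hUM : Disjoint U (endpoints M)) :
    (M.filter (IsRich w U)).card.choose 2 ≤ weight w (endpoints M).sym2 := by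
  have rich : (M.filter (IsRich w U)).card.choose 2 ≤
      weight w (endpoints (M.filter (IsRich w U))).sym2 :=
    choose_two_le_weight_sym2_bind _ _ fun e e' hee' ↦
      h.weight_edgesBetween_pos_of_isRich hU hUM (hee'.trans (Multiset.filter_le _ _))
        (Multiset.of_mem_filter (Multiset.mem_of_le hee' (by simp)))
        (Multiset.of_mem_filter (Multiset.mem_of_le hee' (by simp)))
  conv_rhs => rw [← Multiset.filter_add_not (IsRich w U) M, endpoints, Multiset.add_bind]
  rw [sym2_add, weight_add, weight_add]
  exact rich.trans (by rw [add_assoc]; exact Nat.le_add_right _ _)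

lemma choose_two_le_weight_sym2 (h : IsMaxZeroMatching w M) (hU : U.Nodup)
    (hUM : Disjoint U (endpoints M)) : U.card.choose 2 ≤ weight w U.sym2 := by
  have := choose_two_le_weight_sym2_bind (w := w) U (fun a ↦ {a}) fun a b hab ↦ by
    simpa [edgesBetween, weight] using h.weight_pos_of_pair_le hU hUM hab
  rwa [Multiset.bind_singleton, Multiset.map_id'] at this

lemma six_mul_le_sum [Fintype C] (h : IsMaxZeroMatching w M) (hU : U.Nodup) (hUcard : U.card = 5)
    (hUM : Disjoint U (endpoints M)) (hM : 4 ≤ M.card) : 6 * (M.card + 2) ≤ ∑ z, w z := by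
  classical
  have inner := h.choose_two_le_weight_sym2 hU hUM
  have cross := h.card_isRich_mul_add_le_sum_weight_edgesBetween hU hUM
  have outer := h.choose_two_le_weight_sym2_endpoints hU hUM
  have total := weight_le_sum (w := w) (Multiset.nodup_add.2 ⟨hU, h.isMatching, hUM⟩).sym2
  have card_split := congrArg Multiset.card (Multiset.filter_add_not (IsRich w U) M)
  rw [weight_sym2_add_endpoints] at total
  rw [Multiset.card_add] at card_split
  rw [hUcard] at inner cross
  have hchoose : Nat.choose 5 2 = 10 := rfl
  have := three_mul_le_choose_two_add_six (M.filter (IsRich w U)).card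
  omega

end IsMaxZeroMatching

lemma isMatching_map_mk {ι : Type*} {s : Finset ι} {f g : ι → C} (hf : Set.InjOn f s)
    (hg : Set.InjOn g s) (hfg : ∀ i ∈ s, ∀ j ∈ s, f i ≠ g j) :
    IsMatching (s.val.map fun i ↦ s(f i, g i)) := by
  have endpoints_eq : endpoints (s.val.map fun i ↦ s(f i, g i)) = s.val.map f + s.val.map g := by
    simp only [endpoints, Multiset.bind_map, toMultiset_mk, Multiset.insert_eq_cons,
      ← Multiset.singleton_add, Multiset.bind_add, Multiset.bind_singleton]
  rw [IsMatching, endpoints_eq, Multiset.nodup_add, Multiset.disjoint_map_map]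
  exact ⟨s.nodup.map_on fun i hi j hj h ↦ hf hi hj h,
    s.nodup.map_on fun i hi j hj h ↦ hg hi hj h, hfg⟩

lemma endpoints_map {D : Type*} (f : C → D) (M : Multiset (Sym2 C)) :
    endpoints (M.map (Sym2.map f)) = (endpoints M).map f := by
  rw [endpoints, endpoints, Multiset.bind_map, Multiset.map_bind]
  exact Multiset.bind_congr fun e _ ↦ e.ind fun _ _ ↦ rfl

lemma IsMatching.map {D : Type*} {f : C → D} (hf : Function.Injective f) (h : IsMatching M) :
    IsMatching (M.map (Sym2.map f)) := by
  rw [IsMatching, endpoints_map]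
  exact Multiset.Nodup.map hf h

/-- The matching of `ZMod (2 * m + 1)` that pairs the points symmetric about `c`. As `c` varies,
these matchings partition the edges of the complete graph. -/
def reflectionMatching (m : ℕ) (c : ZMod (2 * m + 1)) : Multiset (Sym2 (ZMod (2 * m + 1))) :=
  (Icc 1 m).val.map fun i : ℕ ↦ s(c + i, c - i)

lemma card_reflectionMatching (c : ZMod (2 * m + 1)) : (reflectionMatching m c).card = m := by
  simp [reflectionMatching]

lemma natCast_injOn_Icc : Set.InjOn ((↑) : ℕ → ZMod (2 * m + 1)) (Icc 1 m) := by
  intro i hi j hj hij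
  rw [Finset.coe_Icc, Set.mem_Icc] at hi hj
  rw [ZMod.natCast_eq_natCast_iff] at hij
  exact hij.eq_of_lt_of_lt (by omega) (by omega)

lemma natCast_add_natCast_ne_zero {i j : ℕ} (hi : i ∈ Icc 1 m) (hj : j ∈ Icc 1 m) :
    (i : ZMod (2 * m + 1)) + j ≠ 0 := by
  rw [Finset.mem_Icc] at hi hj
  rw [← Nat.cast_add, Ne, ZMod.natCast_eq_zero_iff]
  exact Nat.not_dvd_of_pos_of_lt (by omega) (by omega)

lemma isMatching_reflectionMatching (c : ZMod (2 * m + 1)) :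
    IsMatching (reflectionMatching m c) :=
  isMatching_map_mk (fun _ hi _ hj h ↦ natCast_injOn_Icc hi hj (add_left_cancel h))
    (fun _ hi _ hj h ↦ natCast_injOn_Icc hi hj (sub_right_injective h))
    fun i hi j hj h ↦ natCast_add_natCast_ne_zero hi hj (by linear_combination h)

lemma reflection_injOn : Set.InjOn
    (fun x : ZMod (2 * m + 1) × ℕ ↦ s(x.1 + x.2, x.1 - x.2))
    ((univ ×ˢ Icc 1 m : Finset (ZMod (2 * m + 1) × ℕ)) : Set (ZMod (2 * m + 1) × ℕ)) := by
  have two_cancel : ∀ {a b : ZMod (2 * m + 1)}, 2 * a = 2 * b → a = b := by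
    intro a b hab
    have : IsUnit ((2 : ℕ) : ZMod (2 * m + 1)) := (ZMod.isUnit_iff_coprime _ _).2 (by simp)
    exact this.mul_left_cancel (by exact_mod_cast hab)
  rintro ⟨a, i⟩ hi ⟨b, j⟩ hj h
  simp only [Finset.coe_product, Set.mem_prod, Finset.mem_coe] at hi hj
  rcases Sym2.eq_iff.1 h with ⟨hadd, hsub⟩ | ⟨hadd, hsub⟩
  · obtain rfl : a = b := two_cancel (by linear_combination hadd + hsub)
    rw [natCast_injOn_Icc hi.2 hj.2 (add_left_cancel hadd)]
  · obtain rfl : a = b := two_cancel (by linear_combination hadd + hsub)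
    exact absurd (by linear_combination hadd) (natCast_add_natCast_ne_zero hi.2 hj.2)

lemma sum_weight_reflectionMatching_le (w : Sym2 (ZMod (2 * m + 1)) → ℕ) :
    ∑ c, weight w (reflectionMatching m c) ≤ ∑ z, w z := by
  calc ∑ c, weight w (reflectionMatching m c)
      = ∑ c, ∑ i ∈ Icc 1 m, w s(c + (i : ℕ), c - (i : ℕ)) := by
        simp only [weight, reflectionMatching, Multiset.map_map, Function.comp_def, Finset.sum]
    _ = ∑ x ∈ univ ×ˢ Icc 1 m, w s(x.1 + (x.2 : ℕ), x.1 - (x.2 : ℕ)) :=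
        (Finset.sum_product _ _ fun x : ZMod (2 * m + 1) × ℕ ↦
          w s(x.1 + x.2, x.1 - x.2)).symm
    _ = ∑ z ∈ (univ ×ˢ Icc 1 m).image fun x : ZMod (2 * m + 1) × ℕ ↦ s(x.1 + x.2, x.1 - x.2),
          w z := (Finset.sum_image reflection_injOn).symm
    _ ≤ ∑ z, w z := Finset.sum_le_sum_of_subset (Finset.subset_univ _)

lemma sum_sym2_map {D : Type*} (f : C ↪ D) (S : Finset C) (w : Sym2 D → ℕ) :
    ∑ z ∈ (S.map f).sym2, w z = ∑ z ∈ S.sym2, w (z.map f) := by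
  rw [Finset.sym2_map, Finset.sum_map]
  rfl

lemma exists_isMatching_card_mul_weight_le [Fintype C] (hC : Fintype.card C = 2 * m + 1)
    (w : Sym2 C → ℕ) :
    ∃ M, IsMatching M ∧ M.card = m ∧ (2 * m + 1) * weight w M ≤ ∑ z, w z := by
  let f : ZMod (2 * m + 1) ≃ C := Fintype.equivOfCardEq (by rw [ZMod.card, hC])
  obtain ⟨c, -, hc⟩ : ∃ c ∈ univ,
      (2 * m + 1) * weight (w ∘ Sym2.map f) (reflectionMatching m c) ≤ ∑ z, w z := by
    refine Finset.exists_le_of_sum_le Finset.univ_nonempty ?_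
    have total := sum_sym2_map f.toEmbedding univ w
    rw [Finset.univ_map_equiv_to_embedding, Finset.sym2_univ, Finset.sym2_univ] at total
    rw [← Finset.mul_sum, Finset.sum_const, Finset.card_univ, ZMod.card, smul_eq_mul, total]
    exact Nat.mul_le_mul_left _ (sum_weight_reflectionMatching_le _)
  refine ⟨(reflectionMatching m c).map (Sym2.map f),
    (isMatching_reflectionMatching c).map f.injective, ?_, ?_⟩
  · rw [Multiset.card_map, card_reflectionMatching]
  · rwa [weight, Multiset.map_map]

theorem exists_isMatching_weight_le_one [Fintype C] (hm : 6 ≤ m)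
    (hC : Fintype.card C = 2 * m + 1) (hw : ∑ z, w z < 6 * m) :
    ∃ M, IsMatching M ∧ M.card = m ∧ weight w M ≤ 1 := by
  by_contra! two_le
  have weight_pos : ∀ M, IsMatching M → M.card + 1 = m → 0 < weight w M := by
    refine fun M hM hcard ↦ Nat.pos_of_ne_zero fun hM₀ ↦ hw.not_ge ?_
    obtain ⟨U, hUcard, hU, hUM⟩ := hM.exists_complement (k := 3) (by omega)
    simpa [hcard] using three_mul_le_sum_of_weight_eq_zero (k := 2) hU hUcard hM hUM hM₀
      fun N hN hNcard ↦ two_le N hN (hNcard.trans hcard)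
  obtain ⟨M, hM, hcard, average⟩ := exists_isMatching_card_mul_weight_le hC w
  have hM_two : weight w M ≤ 2 := by
    by_contra! h
    have := Nat.mul_le_mul_left (2 * m + 1) h
    omega
  obtain ⟨e₁, M, rfl, he₁⟩ := exists_cons_of_weight_pos (zero_lt_one.trans (two_le M hM hcard))
  obtain ⟨e₂, M, rfl, he₂⟩ :=
    exists_cons_of_weight_pos (weight_pos M hM.of_cons (by simpa using hcard))
  simp only [weight_cons, Multiset.card_cons] at hM_two hcard
  have hM_max : IsMaxZeroMatching w M :=
    ⟨hM.of_cons.of_cons, by omega, fun N hN hNcard ↦ weight_pos N hN (by omega)⟩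
  obtain ⟨U, hUcard, hU, hUM⟩ := hM_max.isMatching.exists_complement (k := 5) (by omega)
  have := hM_max.six_mul_le_sum hU hUcard hUM (by omega)
  omega

theorem exists_isMatching_finset_weight_le_one (S : Finset C) (hm : 6 ≤ m)
    (hS : S.card = 2 * m + 1) (hw : ∑ z ∈ S.sym2, w z < 6 * m) :
    ∃ M, IsMatching M ∧ M.card = m ∧ (∀ e ∈ M, ∀ a ∈ e, a ∈ S) ∧ weight w M ≤ 1 := by
  have total := sum_sym2_map (.subtype (· ∈ S)) univ w
  rw [Finset.univ_eq_attach, Finset.attach_map_val, ← Finset.univ_eq_attach,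
    Finset.sym2_univ] at total
  obtain ⟨M, hM, hcard, hM_one⟩ := exists_isMatching_weight_le_one
    (w := w ∘ Sym2.map (Subtype.val : S → C)) hm (by rw [Fintype.card_coe, hS]) (total ▸ hw)
  refine ⟨M.map (Sym2.map Subtype.val), hM.map Subtype.val_injective,
    by rw [Multiset.card_map, hcard], fun e he a ha ↦ ?_, by rwa [weight, Multiset.map_map]⟩
  obtain ⟨e, -, rfl⟩ := Multiset.mem_map.1 he
  obtain ⟨a, -, rfl⟩ := Sym2.mem_map.1 ha
  exact a.2

end Matchings

section Extension

variable {V α ι : Type*} {G : SimpleGraph V} {P : Set V} {m : ℕ}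

lemma exists_coloring_apply_eq (c : G.Coloring ι) (x : V) (i : ι) :
    ∃ c' : G.Coloring ι, c' x = i := by
  classical exact ⟨G.recolorOfEquiv (Equiv.swap (c x) i) c, Equiv.swap_apply_left (c x) i⟩

lemma exists_coloring_of_subsingleton (c : G.Coloring ι) {S : Set (Sym2 V)} (hS : S.Subsingleton)
    (κ : S → ι) : ∃ c' : G.Coloring ι, ∀ e : S, ∃ x ∈ (e : Sym2 V), c' x = κ e := by
  obtain rfl | ⟨e, rfl⟩ := hS.eq_empty_or_singleton
  · exact ⟨c, fun e ↦ e.2.elim⟩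
  · obtain ⟨c', hc'⟩ := exists_coloring_apply_eq c e.out.1 (κ default)
    exact ⟨c', Unique.forall_iff.2 ⟨e.out.1, e.out_fst_mem, hc'⟩⟩

lemma exists_coloring_extending (c : G.Coloring ι) {d : V → α}
    (hd : ∀ x ∈ P, ∀ y ∈ P, G.Adj x y → d x ≠ d y) {L : ι → Set α} (hL : Pairwise (Disjoint on L))
    (hfree : ∀ v ∉ P, ∃ a ∈ L (c v), ∀ x ∈ P, G.Adj v x → d x ≠ a) :
    ∃ f : G.Coloring α, (∀ x ∈ P, f x = d x) ∧ ∀ v ∉ P, f v ∈ L (c v) := by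
  classical
  choose g hgL hg using hfree
  let f : V → α := fun v ↦ if hv : v ∈ P then d v else g v hv
  have f_of_mem : ∀ {v}, v ∈ P → f v = d v := fun hv ↦ dif_pos hv
  have f_of_notMem : ∀ {v} (hv : v ∉ P), f v = g v hv := fun hv ↦ dif_neg hv
  refine ⟨.mk f fun {u v} huv ↦ ?_, fun x ↦ f_of_mem, fun v hv ↦ f_of_notMem hv ▸ hgL v hv⟩
  by_cases hu : u ∈ P <;> by_cases hv : v ∈ P
  · rw [f_of_mem hu, f_of_mem hv]
    exact hd u hu v hv huv
  · rw [f_of_mem hu, f_of_notMem hv]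
    exact hg v hv u hu huv.symm
  · rw [f_of_notMem hu, f_of_mem hv]
    exact (hg u hu v hv huv).symm
  · rw [f_of_notMem hu, f_of_notMem hv]
    exact (hL (c.valid huv)).ne_of_mem (hgL u hu) (hgL v hv)

lemma mk_mem_pairsAtMost_two {v x y : V} (hx : x ∈ P) (hy : y ∈ P) (hxy : x ≠ y)
    (hvx : G.Adj v x) (hvy : G.Adj v y) : s(x, y) ∈ pairsAtMost G P 2 :=
  ⟨x, y, rfl, hx, hy, hxy, .cons hvx.symm (.cons hvy .nil), le_rfl⟩

lemma exists_mem_forall_adj_ne {d : V → α} {z : Sym2 α} (hz : ¬z.IsDiag) {v : V}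
    (h : ∀ e ∈ pairsAtMost G P 2, e.map d = z → ∃ x ∈ e, ¬G.Adj v x) :
    ∃ a ∈ z, ∀ x ∈ P, G.Adj v x → d x ≠ a := by
  induction z with | _ a b =>
  by_contra! blocked
  obtain ⟨x, hx, hvx, rfl⟩ := blocked a (Sym2.mem_mk_left a b)
  obtain ⟨y, hy, hvy, rfl⟩ := blocked b (Sym2.mem_mk_right _ b)
  have hxy : x ≠ y := fun hxy ↦ hz (congrArg d hxy)
  obtain ⟨u, hu, hvu⟩ := h _ (mk_mem_pairsAtMost_two hx hy hxy hvx hvy) (Sym2.map_mk ..)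
  obtain rfl | rfl := Sym2.mem_iff.1 hu
  exacts [hvu hvx, hvu hvy]

lemma exists_isMatching_subsingleton_preimage {E : Set (Sym2 V)} (hE : E.Finite) (d : V → α)
    {S : Finset α} (hm : 6 ≤ m) (hS : S.card = 2 * m + 1) (hEm : E.ncard < 6 * m) :
    ∃ M : Finset (Sym2 α), IsMatching M.val ∧ M.card = m ∧ (∀ z ∈ M, ∀ a ∈ z, a ∈ S) ∧
      {e ∈ E | e.map d ∈ M}.Subsingleton := by
  classical
  have sum_fiber : ∀ N : Finset (Sym2 α),
      ∑ z ∈ N, #{e ∈ hE.toFinset | e.map d = z} = #{e ∈ hE.toFinset | e.map d ∈ N} :=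
    fun N ↦ Finset.sum_card_fiberwise_eq_card_filter ..
  obtain ⟨M, hM, hcard, hMS, hweight⟩ := exists_isMatching_finset_weight_le_one
    (w := fun z ↦ #{e ∈ hE.toFinset | Sym2.map d e = z}) S hm hS <| by
      rw [sum_fiber]
      exact (Finset.card_filter_le _ _).trans_lt (Set.ncard_eq_toFinset_card E hE ▸ hEm)
  refine ⟨⟨M, hM.nodup⟩, hM, hcard, hMS, fun e he e' he' ↦ ?_⟩
  have card_le_one := (sum_fiber ⟨M, hM.nodup⟩).symm.trans_le hweight
  exact Finset.card_le_one.1 card_le_one e (by simpa using he) e' (by simpa using he')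

/-- The colours offered to each class of a colouring whose classes are the edges of `M` together
with `t` spare classes. A matched class gets the two ends of its edge and a spare class gets one
colour above `s`. -/
def palette (M : Finset (Sym2 ℕ)) (s t : ℕ) : M ⊕ Fin t → Set ℕ :=
  Sum.elim (fun z ↦ {a | a ∈ (z : Sym2 ℕ)}) fun j ↦ {s + 1 + (j : ℕ)}

variable {M : Finset (Sym2 ℕ)} {s t : ℕ}

lemma palette_subset_Icc (hMs : ∀ e ∈ M, ∀ a ∈ e, a ∈ Icc 1 s) (i : M ⊕ Fin t) :
    palette M s t i ⊆ Icc 1 (s + t) := by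
  rcases i with z | j
  · exact fun a ha ↦ Finset.Icc_subset_Icc_right (Nat.le_add_right s t) (hMs z z.2 a ha)
  · rintro a rfl
    have := j.2
    simp only [Finset.coe_Icc, Set.mem_Icc]
    omega

lemma pairwise_disjoint_palette (hM : IsMatching M.val) (hMs : ∀ e ∈ M, ∀ a ∈ e, a ∈ Icc 1 s) :
    Pairwise (Disjoint on palette M s t) := by
  have old_ne_new : ∀ z : M, ∀ a ∈ (z : Sym2 ℕ), ∀ j : Fin t, a ≠ s + 1 + j := by
    intro z a ha j
    have := Finset.mem_Icc.1 (hMs z z.2 a ha)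
    omega
  rintro (z | j) (z' | j') hne
  · exact Set.disjoint_left.2 fun a ha ha' ↦
      hne (congrArg Sum.inl (Subtype.ext (hM.eq_of_mem z.2 z'.2 ha ha')))
  · exact Set.disjoint_singleton_right.2 fun ha ↦ old_ne_new z _ ha j' rfl
  · exact Set.disjoint_singleton_left.2 fun ha ↦ old_ne_new z' _ ha j rfl
  · exact Set.disjoint_singleton.2 fun h ↦
      hne (congrArg Sum.inr (Fin.ext (Nat.add_left_cancel h)))

theorem exists_coloring_extending_of_isMatching {d : V → ℕ} (hM : IsMatching M.val)
    (hMs : ∀ e ∈ M, ∀ a ∈ e, a ∈ Icc 1 s) (hG : G.Colorable (M.card + t))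
    (hd : ∀ x ∈ P, ∀ y ∈ P, G.Adj x y → d x ≠ d y) (hds : ∀ x ∈ P, d x ∈ Icc 1 s)
    (hconflict : {e ∈ pairsAtMost G P 2 | e.map d ∈ M}.Subsingleton) :
    ∃ f : G.Coloring ℕ, (∀ x ∈ P, f x = d x) ∧ ∀ v, f v ∈ Icc 1 (s + t) := by
  obtain ⟨c, hc⟩ := exists_coloring_of_subsingleton
    (hG.toColoring (α := M ⊕ Fin t) (by simp)) hconflict fun e ↦ Sum.inl ⟨_, e.2.2⟩
  obtain ⟨f, hfd, hf⟩ : ∃ f : G.Coloring ℕ, (∀ x ∈ P, f x = d x) ∧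
      ∀ v ∉ P, f v ∈ palette M s t (c v) := by
    refine exists_coloring_extending c hd (pairwise_disjoint_palette hM hMs) fun v _ ↦ ?_
    rcases hcv : c v with z | j
    · refine exists_mem_forall_adj_ne (hM.not_isDiag z.2) fun e he hez ↦ ?_
      obtain ⟨x, hxe, hcx⟩ := hc ⟨e, he, hez ▸ z.2⟩
      refine ⟨x, hxe, fun hvx ↦ c.valid hvx ?_⟩
      rw [hcv, hcx]
      exact congrArg Sum.inl (Subtype.ext hez.symm)
    · refine ⟨_, rfl, fun x hx _ hdx ↦ ?_⟩
      have := Finset.mem_Icc.1 (hds x hx)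
      omega
  refine ⟨f, hfd, fun v ↦ ?_⟩
  by_cases hv : v ∈ P
  · rw [hfd v hv]
    exact Finset.Icc_subset_Icc_right (Nat.le_add_right s t) (hds v hv)
  · exact palette_subset_Icc hMs (c v) (hf v hv)

end Extension

end PrecoloringExtension

open PrecoloringExtension in
theorem stmt_17_general {V : Type*} (k r : ℕ) (hkr : k ≤ r) (hodd : Odd (r + k))
    (h13 : 13 ≤ r + k) (G : SimpleGraph V) (hχ : G.chromaticNumber ≤ r) (P : Set V)
    (d : V → ℕ) (hd : ∀ x ∈ P, ∀ y ∈ P, G.Adj x y → d x ≠ d y)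
    (hdr : ∀ x ∈ P, d x ∈ Finset.Icc 1 (r + k)) (hfin : (pairsAtMost G P 2).Finite)
    (hD : (pairsAtMost G P 2).ncard < 3 * (r + k - 1)) :
    ∃ f : V → ℕ, (∀ u v, G.Adj u v → f u ≠ f v) ∧
      (∀ v, 1 ≤ f v ∧ 2 * f v ≤ 3 * r + k + 1) ∧ ∀ x ∈ P, f x = d x := by
  obtain ⟨m, hm⟩ := hodd
  obtain ⟨M, hM, hMcard, hMs, hconflict⟩ := exists_isMatching_subsingleton_preimage hfin d
    (S := Finset.Icc 1 (r + k)) (m := m) (by omega) (by simpa using hm) (by omega)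
  have hG : G.Colorable (M.card + (r - m)) := by
    rw [hMcard, Nat.add_sub_cancel' (by omega)]
    exact SimpleGraph.chromaticNumber_le_iff_colorable.1 hχ
  obtain ⟨f, hfd, hf⟩ := exists_coloring_extending_of_isMatching hM hMs hG hd hdr hconflict
  refine ⟨f, fun u v huv ↦ f.valid huv, fun v ↦ ?_, hfd⟩
  have := Finset.mem_Icc.1 (hf v)
  omega

/-- r+k odd, r+k ≥ 13, k ≤ r, |D_G(P,2)| < 3(r+k-1): any (r+k)-precoloring
of P extends to a coloring of G with at most (3r+k+1)/2 colors
(colors c with 2c ≤ 3r+k+1). -/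
theorem stmt_17 {V : Type*} [Fintype V] (k r : ℕ) (hk : 1 ≤ k) (hr : 2 ≤ r)
    (hkr : k ≤ r) (hodd : Odd (r + k)) (h13 : 13 ≤ r + k)
    (G : SimpleGraph V) (hχ : G.chromaticNumber ≤ r) (P : Set V)
    (d : V → ℕ) (hd : ∀ x ∈ P, ∀ y ∈ P, G.Adj x y → d x ≠ d y)
    (hdr : ∀ x ∈ P, d x ∈ Finset.Icc 1 (r + k))
    (hD : (pairsAtMost G P 2).ncard < 3 * (r + k - 1)) :
    ∃ f : V → ℕ, (∀ u v, G.Adj u v → f u ≠ f v) ∧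
      (∀ v, 1 ≤ f v ∧ 2 * f v ≤ 3 * r + k + 1) ∧ ∀ x ∈ P, f x = d x :=
  stmt_17_general k r hkr hodd h13 G hχ P d hd hdr (Set.toFinite _) hD
end
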